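/- arXiv:1609.03340 — 2 statements merged into one kernel-verified Lean document; each statement's English description precedes it below -/
import Mathlib

section
/- Let μ ≤_c ν be probability measures on ℝ with finite first moments, λ Lebesgue measure on [0,1], and μ̂ ∈ Π(λ, μ) a lift of μ. Then there exists a unique π̂ ∈ Π(μ̂, ν) that is a lifted martingale coupling (∫ y dπ̂_{u,x}(y) = x for μ̂-a.e. (u,x)) such that for every u ∈ [0,1], the second ℝ-marginal of π̂ restricted to [0,u] × ℝ × ℝ equals the shadow S^ν(μ_{[0,u]}), where μ_{[0,u]}(A) = μ̂([0,u] × A). -/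
open MeasureTheory

/-- Convex order on finite measures: `∫ φ dμ ≤ ∫ φ dν` for every convex `φ` for which
both integrals exist. -/
def ConvexOrder (μ ν : Measure ℝ) : Prop :=
  ∀ φ : ℝ → ℝ, ConvexOn ℝ Set.univ φ → Integrable φ μ → Integrable φ ν →
    ∫ x, φ x ∂μ ≤ ∫ x, φ x ∂ν

/-- `μ ≤_{c,+} ν`: there exists `η` with `μ ≤_c η` and `η ≤ ν` setwise. -/
def ConvexPlusOrder (μ ν : Measure ℝ) : Prop :=
  ∃ η : Measure ℝ, ConvexOrder μ η ∧ η ≤ ν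

/-- `η` is the shadow of `μ` in `ν`: the `≤_c`-smallest measure `η` with `μ ≤_c η`
and `η ≤ ν`. -/
def IsShadow (μ ν η : Measure ℝ) : Prop :=
  ConvexOrder μ η ∧ η ≤ ν ∧
    ∀ η' : Measure ℝ, ConvexOrder μ η' → η' ≤ ν → ConvexOrder η η'

/-- `π̂` is a lifted martingale coupling of the lift `μ̂ ∈ Π(λ, μ)` and `ν`:
its `(u,x)`-marginal is `μ̂`, its `y`-marginal is `ν`, and `∫ y dπ̂_{u,x}(y) = x` for
`μ̂`-a.e. `(u,x)`, expressed via `∫ (y - x) f(u,x) dπ̂ = 0` for all bounded measurable `f`. -/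
def IsLiftedMartingaleCoupling (πh : Measure (ℝ × ℝ × ℝ)) (μh : Measure (ℝ × ℝ))
    (ν : Measure ℝ) : Prop :=
  πh.map (fun p => (p.1, p.2.1)) = μh ∧ πh.map (fun p => p.2.2) = ν ∧
    ∀ f : ℝ × ℝ → ℝ, Measurable f → (∀ q, |f q| ≤ 1) →
      ∫ p, (p.2.2 - p.2.1) * f (p.1, p.2.1) ∂πh = 0

/-- The primitive curve `μ_{[0,u]}(A) = μ̂([0,u] × A)` of a lift `μ̂`. -/
noncomputable def liftCurve (μh : Measure (ℝ × ℝ)) (u : ℝ) : Measure ℝ :=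
  (μh.restrict {a : ℝ × ℝ | a.1 ≤ u}).map Prod.snd

/-- The `y`-marginal of `π̂` restricted to `[0,u] × ℝ × ℝ`. -/
noncomputable def liftedCouplingCurve (πh : Measure (ℝ × ℝ × ℝ)) (u : ℝ) : Measure ℝ :=
  (πh.restrict {p : ℝ × ℝ × ℝ | p.1 ≤ u}).map (fun p => p.2.2)

section Part1
open MeasureTheory Set Filter Topology

/-- The put potential of a measure. -/
noncomputable def pot (m : Measure ℝ) (k : ℝ) : ℝ := ∫ x, max (k - x) 0 ∂m

lemma hinge_integrable {m : Measure ℝ} [IsFiniteMeasure m] (hm : Integrable (fun x : ℝ => x) m)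
    (k : ℝ) : Integrable (fun x : ℝ => max (k - x) 0) m :=
  ((integrable_const k).sub hm).pos_part

lemma pot_convex {m : Measure ℝ} [IsFiniteMeasure m] (hm : Integrable (fun x : ℝ => x) m) :
    ConvexOn ℝ univ (pot m) := by
  refine ⟨convex_univ, fun a _ b _ s t hs ht hst => ?_⟩
  simp only [pot, smul_eq_mul]
  rw [← integral_const_mul, ← integral_const_mul, ← integral_add]
  · refine integral_mono (hinge_integrable hm _) ?_ ?_
    · exact ((hinge_integrable hm _).const_mul _).add ((hinge_integrable hm _).const_mul _)
    · intro x
      have h1 := mul_le_mul_of_nonneg_left (le_max_left (a - x) 0) hs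
      have h2 := mul_le_mul_of_nonneg_left (le_max_left (b - x) 0) ht
      have h3 := mul_le_mul_of_nonneg_left (le_max_right (a - x) 0) hs
      have h4 := mul_le_mul_of_nonneg_left (le_max_right (b - x) 0) ht
      simp only []
      refine max_le ?_ (by linarith)
      have : x = s * x + t * x := by rw [← add_mul, hst, one_mul]
      linarith
  · exact (hinge_integrable hm _).const_mul _
  · exact (hinge_integrable hm _).const_mul _

lemma pot_nonneg (m : Measure ℝ) (k : ℝ) : 0 ≤ pot m k :=
  integral_nonneg fun _ => le_max_right _ _

lemma pot_add {m m' : Measure ℝ} [IsFiniteMeasure m] [IsFiniteMeasure m']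
    (hm : Integrable (fun x : ℝ => x) m) (hm' : Integrable (fun x : ℝ => x) m') (k : ℝ) :
    pot (m + m') k = pot m k + pot m' k :=
  integral_add_measure (hinge_integrable hm k) (hinge_integrable hm' k)

lemma pot_slope {m : Measure ℝ} [IsFiniteMeasure m] (hm : Integrable (fun x : ℝ => x) m)
    {a b : ℝ} (hab : a ≤ b) :
    m.real (Iic a) * (b - a) ≤ pot m b - pot m a ∧ pot m b - pot m a ≤ m.real (Iic b) * (b - a) := by
  have key : ∀ c : ℝ, ∫ x, (Iic c).indicator (fun _ => b - a) x ∂m = m.real (Iic c) * (b - a) := by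
    intro c
    rw [integral_indicator measurableSet_Iic, setIntegral_const, smul_eq_mul]
  have ki : ∀ c : ℝ, Integrable ((Iic c).indicator (fun _ => b - a)) m := fun c =>
    (integrable_const _).indicator measurableSet_Iic
  rw [← key, ← key]
  simp only [pot]
  rw [← integral_sub (hinge_integrable hm _) (hinge_integrable hm _)]
  constructor
  · refine integral_mono (ki a) ((hinge_integrable hm _).sub (hinge_integrable hm _)) fun x => ?_
    simp only [indicator, mem_Iic]
    split_ifs with h
    · rw [max_eq_left (by linarith), max_eq_left (by linarith)]; linarith
    · rw [max_eq_right (by linarith : a - x ≤ 0)]; simp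
  · refine integral_mono ((hinge_integrable hm _).sub (hinge_integrable hm _)) (ki b) fun x => ?_
    simp only [indicator, mem_Iic]
    split_ifs with h
    · rw [max_eq_left (by linarith : 0 ≤ b - x)]
      have := le_max_left (a - x) 0
      linarith
    · rw [max_eq_right (by linarith : a - x ≤ 0), max_eq_right (by linarith : b - x ≤ 0)]; simp

lemma Iic_tendsto_right (m : Measure ℝ) [IsFiniteMeasure m] (k : ℝ) :
    Tendsto (fun y => m.real (Iic y)) (𝓝[>] k) (𝓝 (m.real (Iic k))) := by
  have h : Iic k = ⋂ r > k, Iic r := by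
    ext x
    simp only [mem_Iic, mem_iInter]
    exact ⟨fun h r hr => h.trans hr.le, fun h => le_of_forall_gt_imp_ge_of_dense h⟩
  have := tendsto_measure_biInter_gt (μ := m) (s := fun r : ℝ => Iic r) (a := k)
    (fun r _ => measurableSet_Iic.nullMeasurableSet)
    (fun i j _ hij => Iic_subset_Iic.2 hij) ⟨k + 1, by linarith, measure_ne_top _ _⟩
  rw [← h] at this
  exact (ENNReal.tendsto_toReal (measure_ne_top _ _)).comp this

lemma pot_hasDeriv {m : Measure ℝ} [IsFiniteMeasure m] (hm : Integrable (fun x : ℝ => x) m)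
    (k : ℝ) : HasDerivWithinAt (pot m) (m.real (Iic k)) (Ici k) k := by
  rw [← hasDerivWithinAt_Ioi_iff_Ici, hasDerivWithinAt_iff_tendsto_slope' (by simp)]
  refine tendsto_of_tendsto_of_tendsto_of_le_of_le' tendsto_const_nhds (Iic_tendsto_right m k) ?_ ?_
  · filter_upwards [self_mem_nhdsWithin] with y hy
    have hy' : 0 < y - k := sub_pos.2 hy
    rw [slope_def_field, le_div_iff₀ hy']
    exact (pot_slope hm (le_of_lt hy)).1
  · filter_upwards [self_mem_nhdsWithin] with y hy
    have hy' : 0 < y - k := sub_pos.2 hy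
    rw [slope_def_field, div_le_iff₀ hy']
    exact (pot_slope hm (le_of_lt hy)).2

lemma pot_ext {m m' : Measure ℝ} [IsFiniteMeasure m] [IsFiniteMeasure m']
    (hm : Integrable (fun x : ℝ => x) m) (hm' : Integrable (fun x : ℝ => x) m')
    (h : ∀ k, pot m k = pot m' k) : m = m' := by
  refine Measure.ext_of_Iic m m' fun k => ?_
  have h0 : pot m = pot m' := funext h
  have h1 := pot_hasDeriv hm k
  rw [h0] at h1
  have := (uniqueDiffWithinAt_Ici k).eq_deriv _ h1 (pot_hasDeriv hm' k)
  exact (measureReal_eq_measureReal_iff).1 this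

lemma pot_atBot {m : Measure ℝ} [IsFiniteMeasure m] (hm : Integrable (fun x : ℝ => x) m) :
    Tendsto (pot m) atBot (𝓝 0) := by
  have h0 : (0:ℝ) = ∫ x : ℝ, (0:ℝ) ∂m := by simp
  rw [h0]
  refine tendsto_integral_filter_of_dominated_convergence (fun x => |x|) ?_ ?_ hm.abs ?_
  · exact Eventually.of_forall fun k => (hinge_integrable hm k).aestronglyMeasurable
  · filter_upwards [eventually_le_atBot (0:ℝ)] with k hk
    refine Eventually.of_forall fun x => ?_
    rw [Real.norm_eq_abs, abs_of_nonneg (le_max_right _ _)]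
    exact max_le (by linarith [neg_abs_le x]) (abs_nonneg x)
  · refine Eventually.of_forall fun x => ?_
    refine tendsto_const_nhds.congr' ?_
    filter_upwards [eventually_le_atBot x] with k hk
    rw [max_eq_right (by linarith)]

lemma call_eq {m : Measure ℝ} [IsFiniteMeasure m] (hm : Integrable (fun x : ℝ => x) m) (k : ℝ) :
    ∫ x, max (x - k) 0 ∂m = pot m k - m.real univ * k + ∫ x, x ∂m := by
  have : (fun x : ℝ => max (x - k) 0) = fun x => max (k - x) 0 - k + x := by
    funext x
    rcases le_total x k with h | h
    · rw [max_eq_right (by linarith), max_eq_left (by linarith)]; ring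
    · rw [max_eq_left (by linarith), max_eq_right (by linarith)]; ring
  have hi : Integrable (fun x : ℝ => max (k - x) 0 - k) m :=
    (hinge_integrable hm k).sub (integrable_const k)
  rw [this, integral_add hi hm,
    integral_sub (hinge_integrable hm k) (integrable_const k), integral_const, pot, smul_eq_mul]

lemma pot_atTop {m : Measure ℝ} [IsFiniteMeasure m] (hm : Integrable (fun x : ℝ => x) m) :
    Tendsto (fun k => pot m k - m.real univ * k + ∫ x, x ∂m) atTop (𝓝 0) := by
  have h0 : (0:ℝ) = ∫ x : ℝ, (0:ℝ) ∂m := by simp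
  rw [h0]
  simp_rw [← call_eq hm]
  refine tendsto_integral_filter_of_dominated_convergence (fun x => |x|) ?_ ?_ hm.abs ?_
  · exact Eventually.of_forall fun k => (hm.sub (integrable_const k)).pos_part.aestronglyMeasurable
  · filter_upwards [eventually_ge_atTop (0:ℝ)] with k hk
    refine Eventually.of_forall fun x => ?_
    rw [Real.norm_eq_abs, abs_of_nonneg (le_max_right _ _)]
    exact max_le (by linarith [le_abs_self x]) (abs_nonneg x)
  · refine Eventually.of_forall fun x => ?_
    refine tendsto_const_nhds.congr' ?_
    filter_upwards [eventually_ge_atTop x] with k hk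
    rw [max_eq_right (by linarith)]

lemma ConvexOrder.pot_le {m m' : Measure ℝ} [IsFiniteMeasure m] [IsFiniteMeasure m']
    (hm : Integrable (fun x : ℝ => x) m) (hm' : Integrable (fun x : ℝ => x) m')
    (h : ConvexOrder m m') (k : ℝ) : pot m k ≤ pot m' k := by
  refine h _ ?_ (hinge_integrable hm k) (hinge_integrable hm' k)
  have h1 : ConvexOn ℝ univ (fun x : ℝ => k - x) := by
    refine ⟨convex_univ, fun a _ b _ s t hs ht hst => le_of_eq ?_⟩
    simp only [smul_eq_mul]
    have : k = s * k + t * k := by rw [← add_mul, hst, one_mul]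
    linarith
  exact h1.sup (convexOn_const 0 convex_univ)

lemma ConvexOrder.mass_eq {m m' : Measure ℝ} [IsFiniteMeasure m] [IsFiniteMeasure m']
    (h : ConvexOrder m m') : m.real univ = m'.real univ := by
  have h1 := h (fun _ => 1) (convexOn_const 1 convex_univ) (integrable_const _) (integrable_const _)
  have h2 := h (fun _ => -1) (convexOn_const (-1) convex_univ) (integrable_const _)
    (integrable_const _)
  simp only [integral_const, smul_eq_mul] at h1 h2
  linarith

lemma ConvexOrder.mean_eq {m m' : Measure ℝ}
    (hm : Integrable (fun x : ℝ => x) m) (hm' : Integrable (fun x : ℝ => x) m')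
    (h : ConvexOrder m m') : ∫ x, x ∂m = ∫ x, x ∂m' := by
  have h1 := h (fun x => x) (convexOn_id convex_univ) hm hm'
  have h2 := h (fun x => -x) ((concaveOn_id convex_univ).neg) hm.neg hm'.neg
  rw [integral_neg, integral_neg] at h2
  linarith

/-- The right derivative of a convex function, as a Stieltjes function. -/
lemma exists_stieltjes {w : ℝ → ℝ} (hw : ConvexOn ℝ univ w) :
    ∃ g : StieltjesFunction ℝ, (∀ x, HasDerivWithinAt w (g x) (Ici x) x) ∧
      ∀ x y, w x + g x * (y - x) ≤ w y := by
  have hmem : ∀ x : ℝ, x ∈ interior (univ : Set ℝ) := by simp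
  have hd : ∀ x, HasDerivWithinAt w (derivWithin w (Ioi x) x) (Ioi x) x := fun x =>
    hw.hasDerivWithinAt_rightDeriv_of_mem_interior (hmem x)
  have hmono : Monotone fun x => derivWithin w (Ioi x) x := fun x y hxy => by
    exact hw.monotoneOn_rightDeriv (hmem x) (hmem y) hxy
  have hcont : Continuous w := by
    have := hw.continuousOn_interior
    rwa [interior_univ, continuousOn_univ] at this
  have hsup : ∀ x y, x < y → derivWithin w (Ioi x) x * (y - x) ≤ w y - w x := by
    intro x y hxy
    have := hw.rightDeriv_le_slope_of_mem_interior (hmem x) (mem_univ y) hxy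
    rwa [slope_def_field, le_div_iff₀ (sub_pos.2 hxy)] at this
  refine ⟨⟨fun x => derivWithin w (Ioi x) x, hmono, fun x => ?_⟩, ?_, ?_⟩
  · rw [← continuousWithinAt_Ioi_iff_Ici]
    have hr := hmono.tendsto_nhdsGT x
    set l := sInf ((fun x => derivWithin w (Ioi x) x) '' Ioi x) with hl
    have h1 : ∀ y > x, l * (y - x) ≤ w y - w x := by
      intro y hy
      have t1 : Tendsto (fun z => derivWithin w (Ioi z) z * (y - z)) (𝓝[>] x) (𝓝 (l * (y - x))) :=
        hr.mul ((continuous_const.sub continuous_id).tendsto x |>.mono_left nhdsWithin_le_nhds)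
      have t2 : Tendsto (fun z => w y - w z) (𝓝[>] x) (𝓝 (w y - w x)) :=
        (continuous_const.sub hcont).tendsto x |>.mono_left nhdsWithin_le_nhds
      refine le_of_tendsto_of_tendsto t1 t2 ?_
      filter_upwards [Ioo_mem_nhdsGT hy] with z hz
      exact hsup z y hz.2
    have h2 : l ≤ derivWithin w (Ioi x) x := by
      have := hd x
      rw [hasDerivWithinAt_iff_tendsto_slope' (by simp)] at this
      refine ge_of_tendsto this ?_
      filter_upwards [self_mem_nhdsWithin] with y hy
      rw [slope_def_field, le_div_iff₀ (sub_pos.2 hy)]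
      exact h1 y hy
    have h3 : derivWithin w (Ioi x) x ≤ l := by
      refine ge_of_tendsto hr ?_
      filter_upwards [self_mem_nhdsWithin] with y hy
      exact hmono (le_of_lt hy)
    have : l = derivWithin w (Ioi x) x := le_antisymm h2 h3
    rw [this] at hr
    exact hr
  · intro x
    exact (hd x).Ici_of_Ioi
  · intro x y
    change w x + derivWithin w (Ioi x) x * (y - x) ≤ w y
    rcases lt_trichotomy x y with h | h | h
    · linarith [hsup x y h]
    · subst h; simp
    · have h1 := hsup y x h
      have t1 : Tendsto (fun z => derivWithin w (Ioi y) y) (𝓝[>] x) (𝓝 (derivWithin w (Ioi y) y)) :=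
        tendsto_const_nhds
      -- slope monotonicity
      have := hd x
      rw [hasDerivWithinAt_iff_tendsto_slope' (by simp)] at this
      have h4 : slope w y x ≤ derivWithin w (Ioi x) x := by
        refine ge_of_tendsto this ?_
        filter_upwards [self_mem_nhdsWithin] with z hz
        have := hw.slope_mono_adjacent (mem_univ y) (mem_univ z) h hz
        simpa [slope_def_field] using this
      rw [slope_def_field, div_le_iff₀ (sub_pos.2 h)] at h4
      linarith

end Part1

section Part2
open MeasureTheory Set Filter Topology

lemma ConvexOn.cont {w : ℝ → ℝ} (hw : ConvexOn ℝ univ w) : Continuous w := by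
  have := hw.continuousOn_interior
  rwa [interior_univ, continuousOn_univ] at this

lemma sub_const_of_deriv {v w : ℝ → ℝ} (hv : Continuous v) (hw : Continuous w) {g : ℝ → ℝ}
    {a b : ℝ} (hab : a ≤ b)
    (h1 : ∀ x ∈ Ico a b, HasDerivWithinAt v (g x) (Ici x) x)
    (h2 : ∀ x ∈ Ico a b, HasDerivWithinAt w (g x) (Ici x) x) : v b - w b = v a - w a := by
  refine constant_of_has_deriv_right_zero (f := fun x => v x - w x) (hv.sub hw).continuousOn
    (fun x hx => ?_) b (right_mem_Icc.2 hab)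
  have := (h1 x hx).sub (h2 x hx)
  rwa [sub_self] at this

lemma split_potential {ν : Measure ℝ} [IsFiniteMeasure ν] (hν : Integrable (fun x : ℝ => x) ν)
    {w f : ℝ → ℝ} (hw : ConvexOn ℝ univ w) (hf : ConvexOn ℝ univ f)
    (hw0 : ∀ k, 0 ≤ w k) (hf0 : ∀ k, 0 ≤ f k) (hsum : ∀ k, w k + f k = pot ν k) :
    ∃ S ρ : Measure ℝ, S + ρ = ν ∧ (∀ k, pot S k = w k) ∧ (∀ k, pot ρ k = f k) := by
  have nonneg : ∀ v : ℝ → ℝ, (∀ k, 0 ≤ v k) → (∀ k, v k ≤ pot ν k) →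
      ∀ g : StieltjesFunction ℝ, (∀ x y, v x + g x * (y - x) ≤ v y) → ∀ x, 0 ≤ g x := by
    intro v hv hvν g hg x
    by_contra hneg
    push Not at hneg
    have h1 : Tendsto (fun y => v x + g x * (y - x)) atBot atTop := by
      refine tendsto_atTop_add_const_left _ _ ?_
      refine Tendsto.const_mul_atBot_of_neg hneg ?_
      exact tendsto_atBot_add_const_right _ _ tendsto_id
    have h2 : Tendsto (pot ν) atBot atTop :=
      tendsto_atTop_mono (fun y => (hg x y).trans (hvν y)) h1
    exact not_tendsto_nhds_of_tendsto_atTop h2 0 (pot_atBot hν)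
  obtain ⟨gw, hgw, hgw'⟩ := exists_stieltjes hw
  obtain ⟨gf, hgf, hgf'⟩ := exists_stieltjes hf
  have hwν : ∀ k, w k ≤ pot ν k := fun k => by linarith [hsum k, hf0 k]
  have hfν : ∀ k, f k ≤ pot ν k := fun k => by linarith [hsum k, hw0 k]
  have gw0 := nonneg w hw0 hwν gw hgw'
  have gf0 := nonneg f hf0 hfν gf hgf'
  have gsum : ∀ x, gw x + gf x = ν.real (Iic x) := by
    intro x
    have h1 := (hgw x).add (hgf x)
    have h2 : (w + f) = pot ν := funext hsum
    rw [h2] at h1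
    exact (uniqueDiffWithinAt_Ici x).eq_deriv _ h1 (pot_hasDeriv hν x)
  have hbot : Tendsto (fun x => ν.real (Iic x)) atBot (𝓝 0) := by
    have := tendsto_measure_iInter_atBot (μ := ν) (s := fun r : ℝ => Iic r)
      (fun r => measurableSet_Iic.nullMeasurableSet)
      (fun i j hij => Iic_subset_Iic.2 hij) ⟨0, measure_ne_top _ _⟩
    rw [iInter_Iic_eq_empty_iff.2 (by simp), measure_empty] at this
    exact (ENNReal.tendsto_toReal (by simp)).comp this
  have tw : Tendsto gw atBot (𝓝 0) :=
    tendsto_of_tendsto_of_tendsto_of_le_of_le tendsto_const_nhds hbot gw0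
      fun x => by simp only []; linarith [gsum x, gf0 x]
  have tf : Tendsto gf atBot (𝓝 0) :=
    tendsto_of_tendsto_of_tendsto_of_le_of_le tendsto_const_nhds hbot gf0
      fun x => by simp only []; linarith [gsum x, gw0 x]
  have hle : gw.measure + gf.measure = ν := by
    rw [eq_comm]
    refine Measure.ext_of_Iic _ _ fun x => ?_
    rw [Measure.add_apply, gw.measure_Iic tw, gf.measure_Iic tf, sub_zero, sub_zero,
      ← ENNReal.ofReal_add (gw0 x) (gf0 x), gsum, ofReal_measureReal]
  have main : ∀ v : ℝ → ℝ, ConvexOn ℝ univ v → (∀ k, 0 ≤ v k) → (∀ k, v k ≤ pot ν k) →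
      ∀ g : StieltjesFunction ℝ, (∀ x, HasDerivWithinAt v (g x) (Ici x) x) → (∀ x, 0 ≤ g x) →
      Tendsto g atBot (𝓝 0) → g.measure ≤ ν → ∀ k, pot g.measure k = v k := by
    intro v hv hv0 hvν g hg g0 tg hgν k
    have : IsFiniteMeasure g.measure := isFiniteMeasure_of_le ν hgν
    have hi : Integrable (fun x : ℝ => x) g.measure := hν.mono_measure hgν
    have hd : ∀ x, HasDerivWithinAt (pot g.measure) (g x) (Ici x) x := by
      intro x
      have := pot_hasDeriv hi x
      rwa [measureReal_def, g.measure_Iic tg, sub_zero, ENNReal.toReal_ofReal (g0 x)] at this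
    have hc : ∀ a ≤ k, pot g.measure k - v k = pot g.measure a - v a := fun a ha =>
      sub_const_of_deriv (pot_convex hi).cont hv.cont ha (fun x _ => hd x) (fun x _ => hg x)
    have hv1 : Tendsto v atBot (𝓝 0) :=
      tendsto_of_tendsto_of_tendsto_of_le_of_le tendsto_const_nhds (pot_atBot hν) hv0 hvν
    have h3 : Tendsto (fun a => pot g.measure a - v a) atBot (𝓝 (0 - 0)) :=
      (pot_atBot hi).sub hv1
    have h4 : Tendsto (fun a => pot g.measure a - v a) atBot (𝓝 (pot g.measure k - v k)) := by
      refine tendsto_const_nhds.congr' ?_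
      filter_upwards [eventually_le_atBot k] with a ha
      exact hc a ha
    have := tendsto_nhds_unique h3 h4
    linarith
  refine ⟨gw.measure, gf.measure, hle, ?_, ?_⟩
  · exact main w hw hw0 hwν gw hgw gw0 tw (hle ▸ Measure.le_add_right le_rfl)
  · exact main f hf hf0 hfν gf hgf gf0 tf (hle ▸ Measure.le_add_left le_rfl)

lemma pot_swap {m σ : Measure ℝ} [IsFiniteMeasure m] [IsFiniteMeasure σ]
    (hm : Integrable (fun x : ℝ => x) m) (hσ : Integrable (fun x : ℝ => x) σ) :
    Integrable (pot σ) m ∧ ∫ x, pot σ x ∂m = ∫ t, (∫ x, max (x - t) 0 ∂m) ∂σ ∧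
      Integrable (fun t => ∫ x, max (x - t) 0 ∂m) σ := by
  have hi : Integrable (fun p : ℝ × ℝ => max (p.1 - p.2) 0) (m.prod σ) :=
    ((hm.comp_fst σ).sub (hσ.comp_snd m)).pos_part
  refine ⟨hi.integral_prod_left, ?_, hi.integral_prod_right⟩
  exact integral_integral_swap hi

lemma pot_affine_right {σ : Measure ℝ} [IsFiniteMeasure σ] (hσ : Integrable (fun x : ℝ => x) σ)
    {N x : ℝ} (hx : N ≤ x) (hs : σ (Ioi N) = 0) :
    pot σ x = pot σ N + σ.real univ * (x - N) := by
  have h1 : σ.real (Iic N) = σ.real univ := by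
    rw [measureReal_def, measureReal_def, ← measure_add_measure_compl (measurableSet_Iic (a := N)),
      compl_Iic, hs, add_zero]
  have h2 := pot_slope hσ hx
  have h3 : σ.real (Iic x) ≤ σ.real univ := measureReal_mono (subset_univ _)
  rw [h1] at h2
  have := mul_le_mul_of_nonneg_right h3 (sub_nonneg.2 hx)
  linarith [h2.1, h2.2]

lemma pot_zero_left {σ : Measure ℝ} {N x : ℝ} (hx : x ≤ N) (hs : σ (Iio N) = 0) :
    pot σ x = 0 := by
  have : (fun t : ℝ => max (x - t) 0) =ᵐ[σ] 0 := by
    have h : ∀ᵐ t ∂σ, t ∉ Iio N := measure_eq_zero_iff_ae_notMem.1 hs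
    filter_upwards [h] with t ht
    simp only [mem_Iio, not_lt] at ht
    simp only [Pi.zero_apply]
    exact max_eq_right (by linarith)
  rw [pot, integral_congr_ae this]; simp

lemma convexOrder_of_pot {m m' : Measure ℝ} [IsFiniteMeasure m] [IsFiniteMeasure m']
    (hm : Integrable (fun x : ℝ => x) m) (hm' : Integrable (fun x : ℝ => x) m')
    (hmass : m.real univ = m'.real univ) (hmean : ∫ x, x ∂m = ∫ x, x ∂m')
    (hp : ∀ k, pot m k ≤ pot m' k) : ConvexOrder m m' := by
  intro φ hφ hi hi'
  obtain ⟨g, hg, hsup⟩ := exists_stieltjes hφ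
  -- truncated measures
  let σ : ℕ → Measure ℝ := fun n => g.measure.restrict (Ioc (-(n:ℝ)) n)
  have hfin : ∀ n, IsFiniteMeasure (σ n) := fun n => ⟨by
    simp only [σ, Measure.restrict_apply_univ, g.measure_Ioc]; exact ENNReal.ofReal_lt_top⟩
  have hσi : ∀ n, Integrable (fun x : ℝ => x) (σ n) := fun n => by
    refine Integrable.of_bound (C := (n:ℝ)) measurable_id.aestronglyMeasurable ?_
    refine (ae_restrict_iff' measurableSet_Ioc).2 (Eventually.of_forall fun x hx => ?_)
    rw [Real.norm_eq_abs, abs_le]; exact ⟨hx.1.le, hx.2⟩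
  let W : ℕ → ℝ → ℝ := fun n x => φ (-n) + g (-n) * (x + n) + pot (σ n) x
  have hIic : ∀ (n : ℕ) (x : ℝ), -(n:ℝ) ≤ x → x ≤ n → (σ n).real (Iic x) = g x - g (-n) := by
    intro n x h1 h2
    have : Iic x ∩ Ioc (-(n:ℝ)) n = Ioc (-(n:ℝ)) x := by
      ext t; simp only [mem_inter_iff, mem_Iic, mem_Ioc]
      constructor
      · rintro ⟨h, h', _⟩; exact ⟨h', h⟩
      · rintro ⟨h, h'⟩; exact ⟨h', h, h'.trans h2⟩
    rw [measureReal_def, Measure.restrict_apply measurableSet_Iic, this, g.measure_Ioc,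
      ENNReal.toReal_ofReal (sub_nonneg.2 (g.mono h1))]
  have hright : ∀ n : ℕ, σ n (Ioi (n:ℝ)) = 0 := by
    intro n
    rw [Measure.restrict_apply measurableSet_Ioi]
    convert measure_empty (μ := g.measure)
    ext t; simp only [mem_inter_iff, mem_Ioi, mem_Ioc, mem_empty_iff_false, iff_false]
    rintro ⟨h, _, h'⟩; linarith
  have hleft : ∀ n : ℕ, σ n (Iio (-(n:ℝ))) = 0 := by
    intro n
    rw [Measure.restrict_apply measurableSet_Iio]
    convert measure_empty (μ := g.measure)
    ext t; simp only [mem_inter_iff, mem_Iio, mem_Ioc, mem_empty_iff_false, iff_false]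
    rintro ⟨h, h', _⟩; linarith
  have hWd : ∀ (n : ℕ) (x : ℝ), -(n:ℝ) ≤ x → x ≤ n → HasDerivWithinAt (W n) (g x) (Ici x) x := by
    intro n x h1 h2
    have a := pot_hasDeriv (hσi n) x
    rw [hIic n x h1 h2] at a
    have b : HasDerivWithinAt (fun x : ℝ => φ (-n) + g (-n) * (x + n)) (g (-n)) (Ici x) x := by
      have := (((hasDerivAt_id x).add_const (n:ℝ)).const_mul (g (-n))).const_add (φ (-n))
      simpa using this.hasDerivWithinAt
    have := b.add a
    have e : g (-n) + (g x - g (-n)) = g x := by ring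
    rw [e] at this
    exact this
  have hWc : ∀ n, Continuous (W n) := by
    intro n
    have := (pot_convex (hσi n)).cont
    simp only [W]; fun_prop
  have hWconv : ∀ n, ConvexOn ℝ univ (W n) := by
    intro n
    refine ConvexOn.add ?_ (pot_convex (hσi n))
    refine ⟨convex_univ, fun a _ b _ s t hs ht hst => le_of_eq ?_⟩
    have : t = 1 - s := by linarith
    subst this
    simp only [smul_eq_mul]; ring
  have hWleft : ∀ n : ℕ, W n (-n) = φ (-n) := by
    intro n
    simp only [W]
    rw [pot_zero_left le_rfl (hleft n)]; ring
  have hWeq : ∀ (n : ℕ) (x : ℝ), -(n:ℝ) ≤ x → x ≤ n → W n x = φ x := by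
    intro n x h1 h2
    have := sub_const_of_deriv (hWc n) hφ.cont h1
      (fun y hy => hWd n y hy.1 (hy.2.le.trans h2)) (fun y _ => hg y)
    rw [hWleft] at this
    linarith
  have hWle : ∀ (n : ℕ) (x : ℝ), W n x ≤ φ x := by
    intro n x
    have hn : -(n:ℝ) ≤ n := by linarith [Nat.cast_nonneg (α := ℝ) n]
    rcases le_total x (-n) with h | h
    · have := hsup (-n) x
      simp only [W]; rw [pot_zero_left h (hleft n)]; linarith
    rcases le_total x n with h' | h'
    · exact (hWeq n x h h').le
    · have h1 := hWeq n n hn le_rfl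
      have h2 := pot_affine_right (hσi n) h' (hright n)
      have h3 : (σ n).real univ = g n - g (-n) := by
        rw [← hIic n n hn le_rfl, measureReal_def, measureReal_def,
          ← measure_add_measure_compl (measurableSet_Iic (a := (n:ℝ))), compl_Iic, hright, add_zero]
      have h4 := hsup n x
      simp only [W] at h1 ⊢
      rw [h2, h3]; nlinarith
  have hWge : ∀ (n : ℕ) (x : ℝ), φ 0 + g 0 * x ≤ W n x := by
    intro n x
    obtain ⟨gn, hgn, hsn⟩ := exists_stieltjes (hWconv n)
    have hn : -(n:ℝ) ≤ 0 := by linarith [Nat.cast_nonneg (α := ℝ) n]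
    have hn' := Nat.cast_nonneg (α := ℝ) n
    have h1 : gn 0 = g 0 := (uniqueDiffWithinAt_Ici 0).eq_deriv _ (hgn 0) (hWd n 0 hn hn')
    have := hsn 0 x
    rw [h1, hWeq n 0 hn hn', sub_zero] at this
    exact this
  have hconv : ∀ M : Measure ℝ, IsFiniteMeasure M → Integrable (fun x : ℝ => x) M → Integrable φ M →
      Tendsto (fun n => ∫ x, W n x ∂M) atTop (𝓝 (∫ x, φ x ∂M)) := by
    intro M _ hM hφM
    refine tendsto_integral_of_dominated_convergence (fun x => |φ x| + |φ 0 + g 0 * x|) ?_ ?_ ?_ ?_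
    · exact fun n => (hWc n).aestronglyMeasurable
    · exact hφM.abs.add ((integrable_const _).add (hM.const_mul _)).abs
    · intro n
      refine Eventually.of_forall fun x => ?_
      rw [Real.norm_eq_abs, abs_le]
      constructor
      · linarith [hWge n x, neg_abs_le (φ 0 + g 0 * x), abs_nonneg (φ x)]
      · linarith [hWle n x, le_abs_self (φ x), abs_nonneg (φ 0 + g 0 * x)]
    · refine Eventually.of_forall fun x => ?_
      refine tendsto_const_nhds.congr' ?_
      obtain ⟨n0, hn0⟩ := exists_nat_ge |x|
      filter_upwards [eventually_ge_atTop n0] with n hn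
      have : |x| ≤ n := hn0.trans (by exact_mod_cast hn)
      rw [abs_le] at this
      exact (hWeq n x this.1 this.2).symm
  refine le_of_tendsto_of_tendsto' (hconv m inferInstance hm hi) (hconv m' inferInstance hm' hi') ?_
  intro n
  have expand : ∀ M : Measure ℝ, IsFiniteMeasure M → Integrable (fun x : ℝ => x) M →
      ∫ x, W n x ∂M = (φ (-n) + g (-n) * n) * M.real univ + g (-n) * ∫ x, x ∂M +
        ∫ t, (∫ x, max (x - t) 0 ∂M) ∂(σ n) := by
    intro M _ hM
    obtain ⟨p1, p2, p3⟩ := pot_swap hM (hσi n)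
    have hW : W n = fun x => ((φ (-n) + g (-n) * n) + g (-n) * x) + pot (σ n) x := by
      funext x; simp only [W]; ring
    rw [hW]
    have i1 : Integrable (fun x : ℝ => (φ (-n) + g (-n) * n) + g (-n) * x) M :=
      (integrable_const _).add (hM.const_mul _)
    rw [integral_add i1 p1, integral_add (integrable_const _) (hM.const_mul _), integral_const,
      integral_const_mul, p2, smul_eq_mul]
    ring
  rw [expand m inferInstance hm, expand m' inferInstance hm', hmass, hmean]
  refine add_le_add le_rfl ?_
  refine integral_mono (pot_swap hm (hσi n)).2.2 (pot_swap hm' (hσi n)).2.2 fun t => ?_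
  simp only []
  rw [call_eq hm, call_eq hm', hmass, hmean]
  linarith [hp t]

end Part2

section Part3
open MeasureTheory Set Filter Topology

lemma exists_hull {H q : ℝ → ℝ} (hq : ConvexOn ℝ univ q) (hqH : ∀ x, q x ≤ H x) :
    ∃ f : ℝ → ℝ, ConvexOn ℝ univ f ∧ (∀ x, f x ≤ H x) ∧
      ∀ g : ℝ → ℝ, ConvexOn ℝ univ g → (∀ x, g x ≤ H x) → ∀ x, g x ≤ f x := by
  let A : Set (ℝ → ℝ) := {g | ConvexOn ℝ univ g ∧ ∀ x, g x ≤ H x}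
  have hbd : ∀ x, BddAbove ((fun g : ℝ → ℝ => g x) '' A) := fun x =>
    ⟨H x, by rintro _ ⟨g, hg, rfl⟩; exact hg.2 x⟩
  have hne : ∀ x, ((fun g : ℝ → ℝ => g x) '' A).Nonempty := fun x => ⟨q x, q, ⟨hq, hqH⟩, rfl⟩
  have hle : ∀ g ∈ A, ∀ x, g x ≤ sSup ((fun g : ℝ → ℝ => g x) '' A) := fun g hg x =>
    le_csSup (hbd x) ⟨g, hg, rfl⟩
  refine ⟨fun x => sSup ((fun g : ℝ → ℝ => g x) '' A), ?_, ?_, ?_⟩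
  · refine ⟨convex_univ, fun a _ b _ s t hs ht hst => ?_⟩
    refine csSup_le (hne _) ?_
    rintro _ ⟨g, hg, rfl⟩
    have h1 := hg.1.2 (mem_univ a) (mem_univ b) hs ht hst
    refine h1.trans ?_
    simp only [smul_eq_mul]
    exact add_le_add (mul_le_mul_of_nonneg_left (hle g hg a) hs)
      (mul_le_mul_of_nonneg_left (hle g hg b) ht)
  · intro x
    refine csSup_le (hne _) ?_
    rintro _ ⟨g, hg, rfl⟩
    exact hg.2 x
  · intro g hg hgH x
    exact hle g ⟨hg, hgH⟩ x

lemma affine_convex (c s : ℝ) : ConvexOn ℝ univ (fun x : ℝ => c + s * x) := by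
  refine ⟨convex_univ, fun a _ b _ u t hs ht hst => le_of_eq ?_⟩
  have : t = 1 - u := by linarith
  subst this
  simp only [smul_eq_mul]; ring

lemma affine_convex_neg {w : ℝ → ℝ} (hw : ConvexOn ℝ univ w) (c s : ℝ) :
    ConvexOn ℝ univ (fun x : ℝ => w x - (c + s * x)) := by
  have := hw.add (affine_convex (-c) (-s))
  refine this.congr fun x _ => ?_
  simp only [Pi.add_apply]; ring

lemma hull_affine {f H : ℝ → ℝ} (hf : ConvexOn ℝ univ f) (hH : Continuous H)
    (hfH : ∀ x, f x ≤ H x)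
    (hmax : ∀ g : ℝ → ℝ, ConvexOn ℝ univ g → (∀ x, g x ≤ H x) → ∀ x, g x ≤ f x)
    {t : ℝ} (ht : f t < H t) :
    ∃ δ > 0, ∃ c s : ℝ, ∀ x ∈ Icc (t - δ) (t + δ), f x = c + s * x := by
  set mid := (f t + H t) / 2 with hmid
  have e1 : ∀ᶠ x in 𝓝 t, f x < mid := hf.cont.continuousAt.eventually_lt_const (by linarith)
  have e2 : ∀ᶠ x in 𝓝 t, mid < H x := hH.continuousAt.eventually_const_lt (by linarith)
  obtain ⟨ε, hε, hb⟩ := Metric.eventually_nhds_iff.1 (e1.and e2)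
  set δ := ε / 2 with hδ
  have hδ0 : 0 < δ := by positivity
  have hin : ∀ x ∈ Icc (t - δ) (t + δ), f x < mid ∧ mid < H x := by
    intro x hx
    refine hb ?_
    rw [Real.dist_eq, abs_lt]
    constructor <;> linarith [hx.1, hx.2]
  set a := t - δ with ha
  set b := t + δ with hb'
  have hab : a < b := by linarith
  have ha' := hin a (left_mem_Icc.2 hab.le)
  have hbb := hin b (right_mem_Icc.2 hab.le)
  set s := (f b - f a) / (b - a) with hs
  have hsm : s * (b - a) = f b - f a := div_mul_cancel₀ _ (by linarith)
  set c := f a - s * a with hc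
  have hLa : c + s * a = f a := by rw [hc]; ring
  have hLb : c + s * b = f b := by
    have : c + s * b = f a + s * (b - a) := by rw [hc]; ring
    rw [this, hsm]; ring
  have hLin : ∀ x ∈ Icc a b, f x ≤ c + s * x ∧ c + s * x ≤ H x := by
    intro x hx
    set r := (b - x) / (b - a) with hr
    have hba : 0 < b - a := by linarith
    have hr0 : 0 ≤ r := div_nonneg (by linarith [hx.2]) hba.le
    have hr1 : r ≤ 1 := by rw [hr, div_le_one hba]; linarith [hx.1]
    have hrx : x = r * a + (1 - r) * b := by
      have : r * (b - a) = b - x := div_mul_cancel₀ _ hba.ne'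
      linarith
    have hLx : c + s * x = r * f a + (1 - r) * f b := by
      rw [← hLa, ← hLb]; rw [hrx]; ring
    constructor
    · have := hf.2 (mem_univ a) (mem_univ b) hr0 (sub_nonneg.2 hr1) (by ring)
      simp only [smul_eq_mul] at this
      rw [← hrx] at this
      rw [hLx]; exact this
    · rw [hLx]
      have h1 : r * f a ≤ r * mid := mul_le_mul_of_nonneg_left ha'.1.le hr0
      have h2 : (1 - r) * f b ≤ (1 - r) * mid :=
        mul_le_mul_of_nonneg_left hbb.1.le (sub_nonneg.2 hr1)
      have h3 := (hin x hx).2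
      linarith
  have hLout : ∀ x, x ∉ Icc a b → c + s * x ≤ f x := by
    intro x hx
    rw [mem_Icc, not_and_or, not_le, not_le] at hx
    rcases hx with h | h
    · have := hf.slope_mono_adjacent (mem_univ x) (mem_univ b) h hab
      rw [div_le_iff₀ (sub_pos.2 h)] at this
      change f a - f x ≤ s * (a - x) at this
      linarith
    · have := hf.slope_mono_adjacent (mem_univ a) (mem_univ x) hab h
      rw [le_div_iff₀ (sub_pos.2 h)] at this
      change s * (x - b) ≤ f x - f b at this
      linarith
  have hfin := hmax _ (hf.sup (affine_convex c s)) (by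
    intro x
    simp only [Pi.sup_apply]
    refine sup_le (hfH x) ?_
    by_cases hx : x ∈ Icc a b
    · exact (hLin x hx).2
    · exact (hLout x hx).trans (hfH x))
  refine ⟨δ, hδ0, c, s, fun x hx => le_antisymm (hLin x hx).1 ?_⟩
  exact le_sup_right.trans (hfin x)

lemma key_convex {c p f : ℝ → ℝ} (hc : ConvexOn ℝ univ c) (hp : ConvexOn ℝ univ p)
    (hf : ConvexOn ℝ univ f) (hfH : ∀ x, f x ≤ c x - p x)
    (hmax : ∀ g : ℝ → ℝ, ConvexOn ℝ univ g → (∀ x, g x ≤ c x - p x) → ∀ x, g x ≤ f x) :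
    ConvexOn ℝ univ (fun x => c x - f x) := by
  refine LinearOrder.convexOn_of_lt convex_univ fun a _ b _ hab r r' hr hr' hrr => ?_
  have hba : b - a ≠ 0 := by linarith
  set s := ((c b - f b) - (c a - f a)) / (b - a) with hs
  have hsm : s * (b - a) = (c b - f b) - (c a - f a) := div_mul_cancel₀ _ hba
  set d := (c a - f a) - s * a with hd
  let v : ℝ → ℝ := fun x => (c x - f x) - (d + s * x)
  have va : v a = 0 := by simp only [v, hd]; ring
  have vb : v b = 0 := by simp only [v, hd]; linarith
  have vcont : Continuous v := by
    have h1 := hc.cont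
    have h2 := hf.cont
    simp only [v]; fun_prop
  suffices hv : ∀ x ∈ Icc a b, v x ≤ 0 by
    have hx : r • a + r' • b ∈ Icc a b := by
      simp only [smul_eq_mul]
      have : r' = 1 - r := by linarith
      subst this
      constructor <;> nlinarith
    have h1 := hv _ hx
    simp only [v, smul_eq_mul] at h1 ⊢
    have h2 : d + s * (r * a + r' * b) = r * (c a - f a) + r' * (c b - f b) := by
      have e1 : d + s * a = c a - f a := by rw [hd]; ring
      have e2 : d + s * b = c b - f b := by rw [hd]; linarith
      rw [← e1, ← e2]
      have : r' = 1 - r := by linarith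
      subst this; ring
    linarith
  by_contra hcon
  push Not at hcon
  obtain ⟨x0, hx0, hx0v⟩ := hcon
  obtain ⟨y, hy, hymax⟩ := isCompact_Icc.exists_isMaxOn ⟨x0, hx0⟩ vcont.continuousOn
  have hM : 0 < v y := hx0v.trans_le (hymax hx0)
  have hKc : IsCompact (Icc a b ∩ v ⁻¹' {v y}) :=
    isCompact_Icc.inter_right (isClosed_singleton.preimage vcont)
  have htK := hKc.sInf_mem ⟨y, hy, rfl⟩
  set t := sInf (Icc a b ∩ v ⁻¹' {v y}) with ht
  have htlow : ∀ z ∈ Icc a b, z < t → v z < v y := by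
    intro z hz hzt
    refine lt_of_le_of_ne (hymax hz) fun he => ?_
    exact absurd (csInf_le hKc.bddBelow ⟨hz, he⟩) (not_le.2 hzt)
  have htv : v t = v y := htK.2
  have hta : a < t := lt_of_le_of_ne htK.1.1 fun h => by rw [← h, va] at htv; linarith
  have htb : t < b := lt_of_le_of_ne htK.1.2 fun h => by rw [h, vb] at htv; linarith
  rcases (hfH t).eq_or_lt with hcase | hcase
  · -- contact point
    have h1 : ConvexOn ℝ univ (fun x => p x - (d + s * x)) := affine_convex_neg hp d s
    have h2 := h1.le_max_of_mem_Icc (mem_univ a) (mem_univ b) htK.1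
    have h3 : p a - (d + s * a) ≤ 0 := by
      have := hfH a; simp only [v] at va; linarith
    have h4 : p b - (d + s * b) ≤ 0 := by
      have := hfH b; simp only [v] at vb; linarith
    have h5 := h2.trans (max_le h3 h4)
    simp only [v] at htv hM
    linarith
  · have hH : Continuous (fun x => c x - p x) := hc.cont.sub hp.cont
    obtain ⟨δ, hδ, e, q, heq⟩ := hull_affine hf hH hfH hmax hcase
    set η := min δ (min (t - a) (b - t)) with hη
    have hη0 : 0 < η := lt_min hδ (lt_min (by linarith) (by linarith))
    have hη1 : η ≤ δ := min_le_left _ _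
    have hη2 : η ≤ t - a := (min_le_right _ _).trans (min_le_left _ _)
    have hη3 : η ≤ b - t := (min_le_right _ _).trans (min_le_right _ _)
    have h1 : v (t - η) < v y := htlow _ ⟨by linarith, by linarith⟩ (by linarith)
    have h2 : v (t + η) ≤ v y := hymax ⟨by linarith, by linarith⟩
    have f1 := heq (t - η) ⟨by linarith, by linarith⟩
    have f2 := heq (t + η) ⟨by linarith, by linarith⟩
    have f3 := heq t ⟨by linarith, by linarith⟩
    have h3 := hc.2 (mem_univ (t - η)) (mem_univ (t + η)) (by norm_num : (0:ℝ) ≤ 1 / 2)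
      (by norm_num : (0:ℝ) ≤ 1 / 2) (by norm_num)
    simp only [smul_eq_mul] at h3
    have h4 : 1 / 2 * (t - η) + 1 / 2 * (t + η) = t := by ring
    rw [h4] at h3
    simp only [v] at h1 h2 htv
    nlinarith

lemma null_of_affine {ρ : Measure ℝ} [IsFiniteMeasure ρ] (hρ : Integrable (fun x : ℝ => x) ρ)
    {a b c s : ℝ} (h : ∀ x ∈ Icc a b, pot ρ x = c + s * x) {a' b' : ℝ} (h1 : a < a')
    (h2 : a' ≤ b') (h3 : b' < b) : ρ (Ioc a' b') = 0 := by
  have e1 := (pot_slope hρ h1.le).2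
  have e2 := (pot_slope hρ h3.le).1
  rw [h a ⟨le_rfl, by linarith⟩, h a' ⟨h1.le, by linarith⟩] at e1
  rw [h b ⟨by linarith, le_rfl⟩, h b' ⟨by linarith, h3.le⟩] at e2
  have e3 : s ≤ ρ.real (Iic a') := by
    have : s * (a' - a) ≤ ρ.real (Iic a') * (a' - a) := by linarith
    exact le_of_mul_le_mul_right this (by linarith)
  have e4 : ρ.real (Iic b') ≤ s := by
    have : ρ.real (Iic b') * (b - b') ≤ s * (b - b') := by linarith
    exact le_of_mul_le_mul_right this (by linarith)
  have e5 : ρ.real (Iic a') + ρ.real (Ioc a' b') = ρ.real (Iic b') := by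
    rw [← measureReal_union ?_ measurableSet_Ioc, Iic_union_Ioc_eq_Iic h2]
    rw [Set.disjoint_left]
    intro x hx hx'
    exact absurd hx'.1 (not_lt.2 hx)
  have e6 : ρ.real (Ioc a' b') = 0 := le_antisymm (by linarith) measureReal_nonneg
  exact (measureReal_eq_zero_iff).1 e6

section
variable {μ ν : Measure ℝ}

lemma exists_shadow_data [IsProbabilityMeasure μ] [IsProbabilityMeasure ν]
    (hμ : Integrable (fun x : ℝ => x) μ) (hν : Integrable (fun x : ℝ => x) ν)
    (hμν : ConvexOrder μ ν) (m : Measure ℝ) (hm : m ≤ μ) :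
    ∃ S ρ : Measure ℝ, S + ρ = ν ∧ ConvexOrder m S ∧ (∀ k, pot ρ k ≤ pot ν k - pot m k) ∧
      ∀ g : ℝ → ℝ, ConvexOn ℝ univ g → (∀ x, g x ≤ pot ν x - pot m x) → ∀ x, g x ≤ pot ρ x := by
  have : IsFiniteMeasure m := isFiniteMeasure_of_le μ hm
  have hmi : Integrable (fun x : ℝ => x) m := hμ.mono_measure hm
  have hsub : (μ - m) + m = μ := Measure.sub_add_cancel_of_le hm
  have hdle : μ - m ≤ μ := Measure.sub_le
  have : IsFiniteMeasure (μ - m) := isFiniteMeasure_of_le μ hdle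
  have hdi : Integrable (fun x : ℝ => x) (μ - m) := hμ.mono_measure hdle
  have hqm : ∀ k, pot (μ - m) k + pot m k = pot μ k := fun k => by
    rw [← pot_add hdi hmi, hsub]
  have hμνp := hμν.pot_le hμ hν
  have hq : ∀ k, pot (μ - m) k ≤ pot ν k - pot m k := fun k => by linarith [hqm k, hμνp k]
  obtain ⟨f, hf, hfH, hmax⟩ := exists_hull (pot_convex hdi) hq
  have hfq := hmax _ (pot_convex hdi) hq
  have hw : ConvexOn ℝ univ (fun x => pot ν x - f x) :=
    key_convex (pot_convex hν) (pot_convex hmi) hf hfH hmax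
  obtain ⟨S, ρ, hS, hSp, hρp⟩ := split_potential hν hw hf
    (fun k => by linarith [hfH k, pot_nonneg m k])
    (fun k => (pot_nonneg _ _).trans (hfq k)) (fun k => by ring)
  have hSle : S ≤ ν := hS ▸ Measure.le_add_right le_rfl
  have : IsFiniteMeasure S := isFiniteMeasure_of_le ν hSle
  have hSi : Integrable (fun x : ℝ => x) S := hν.mono_measure hSle
  refine ⟨S, ρ, hS, ?_, fun k => by rw [hρp]; exact hfH k, fun g hg hgH x => by
    rw [hρp]; exact hmax g hg hgH x⟩
  -- asymptotics
  have hge : ∀ k, pot m k ≤ pot S k := fun k => by rw [hSp]; linarith [hfH k]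
  have hdiff : Tendsto (fun k => pot S k - pot m k) atTop (𝓝 0) := by
    have h1 : Tendsto (fun k => pot ν k - pot μ k) atTop (𝓝 0) := by
      have := (pot_atTop hν).sub (pot_atTop hμ)
      rw [sub_zero] at this
      refine this.congr fun k => ?_
      rw [hμν.mass_eq, hμν.mean_eq hμ hν]; ring
    refine tendsto_of_tendsto_of_tendsto_of_le_of_le tendsto_const_nhds h1
      (fun k => sub_nonneg.2 (hge k)) (fun k => ?_)
    simp only []
    rw [hSp]
    linarith [hfq k, hqm k]
  have hlin : Tendsto (fun k => (S.real univ - m.real univ) * k - (∫ x, x ∂S - ∫ x, x ∂m)) atTop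
      (𝓝 0) := by
    have := hdiff.sub ((pot_atTop hSi).sub (pot_atTop hmi))
    simp only [sub_zero] at this
    refine this.congr fun k => ?_
    ring
  have hmass : S.real univ - m.real univ = 0 := by
    by_contra hne
    have h2 : Tendsto (fun k => ((S.real univ - m.real univ) * k - (∫ x, x ∂S - ∫ x, x ∂m)) / k)
        atTop (𝓝 0) := hlin.div_atTop tendsto_id
    have h3 : Tendsto (fun k : ℝ => (S.real univ - m.real univ) - (∫ x, x ∂S - ∫ x, x ∂m) / k)
        atTop (𝓝 ((S.real univ - m.real univ) - 0)) :=
      tendsto_const_nhds.sub (tendsto_const_nhds.div_atTop tendsto_id)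
    have h4 : Tendsto (fun k => ((S.real univ - m.real univ) * k - (∫ x, x ∂S - ∫ x, x ∂m)) / k)
        atTop (𝓝 ((S.real univ - m.real univ) - 0)) := by
      refine h3.congr' ?_
      filter_upwards [eventually_gt_atTop 0] with k hk
      field_simp
    have := tendsto_nhds_unique h2 h4
    rw [sub_zero] at this
    exact hne this.symm
  have hmean : ∫ x, x ∂S - ∫ x, x ∂m = 0 := by
    rw [hmass] at hlin
    simp only [zero_mul, zero_sub] at hlin
    have := tendsto_nhds_unique hlin tendsto_const_nhds
    linarith
  exact convexOrder_of_pot hmi hSi (by linarith) (by linarith) hge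

theorem exists_shadow_map [IsProbabilityMeasure μ] [IsProbabilityMeasure ν]
    (hμ : Integrable (fun x : ℝ => x) μ) (hν : Integrable (fun x : ℝ => x) ν)
    (hμν : ConvexOrder μ ν) :
    ∃ Sh : Measure ℝ → Measure ℝ, (∀ m ≤ μ, IsShadow m ν (Sh m)) ∧
      (∀ m m', m ≤ m' → m' ≤ μ → Sh m ≤ Sh m') ∧
      (∀ m ≤ μ, ∀ a b, Sh m (Ioo a b) ≠ ν (Ioo a b) →
        ∃ k ∈ Ioo a b, pot (Sh m) k = pot m k) := by
  classical
  choose! Sh ρ h1 h2 h3 h4 using fun m hm => exists_shadow_data hμ hν hμν m hm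
  have hSle : ∀ m ≤ μ, Sh m ≤ ν := fun m hm => by
    conv_rhs => rw [← h1 m hm]
    exact Measure.le_add_right le_rfl
  have hρle : ∀ m ≤ μ, ρ m ≤ ν := fun m hm => by
    conv_rhs => rw [← h1 m hm]
    exact Measure.le_add_left le_rfl
  have fin : ∀ m ≤ ν, IsFiniteMeasure m := fun m hm => isFiniteMeasure_of_le ν hm
  have fin' : ∀ m ≤ μ, IsFiniteMeasure m := fun m hm => isFiniteMeasure_of_le μ hm
  have int : ∀ m ≤ ν, Integrable (fun x : ℝ => x) m := fun m hm => hν.mono_measure hm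
  have int' : ∀ m ≤ μ, Integrable (fun x : ℝ => x) m := fun m hm => hμ.mono_measure hm
  have psum : ∀ m ≤ μ, ∀ k, pot (Sh m) k + pot (ρ m) k = pot ν k := fun m hm k => by
    have := fin _ (hSle m hm)
    have := fin _ (hρle m hm)
    rw [← pot_add (int _ (hSle m hm)) (int _ (hρle m hm)), h1 m hm]
  refine ⟨Sh, ?_, ?_, ?_⟩
  · intro m hm
    refine ⟨h2 m hm, hSle m hm, fun η hη hην => ?_⟩
    have := fin _ (hSle m hm)
    have := fin _ (hρle m hm)
    have := fin _ hην
    have := fin' _ hm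
    have hηd : ν - η ≤ ν := Measure.sub_le
    have := fin _ hηd
    have hsub : (ν - η) + η = ν := Measure.sub_add_cancel_of_le hην
    have hp : ∀ k, pot (ν - η) k + pot η k = pot ν k := fun k => by
      rw [← pot_add (int _ hηd) (int _ hην), hsub]
    have hle := h4 m hm _ (pot_convex (int _ hηd)) (fun k => by
      linarith [hη.pot_le (int' _ hm) (int _ hην) k, hp k])
    refine convexOrder_of_pot (int _ (hSle m hm)) (int _ hην) ?_ ?_ ?_
    · rw [← (h2 m hm).mass_eq, hη.mass_eq]
    · rw [← (h2 m hm).mean_eq (int' _ hm) (int _ (hSle m hm)), hη.mean_eq (int' _ hm) (int _ hην)]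
    · intro k
      linarith [hle k, hp k, psum m hm k]
  · intro m m' hmm' hm'
    have hm : m ≤ μ := hmm'.trans hm'
    have := fin _ (hSle m hm)
    have := fin _ (hρle m hm)
    have := fin _ (hSle m' hm')
    have := fin _ (hρle m' hm')
    have := fin' _ hm
    have := fin' _ hm'
    have hdle : m' - m ≤ μ := Measure.sub_le.trans hm'
    have := fin' _ hdle
    have hsub : (m' - m) + m = m' := Measure.sub_add_cancel_of_le hmm'
    have hp : ∀ k, pot (m' - m) k + pot m k = pot m' k := fun k => by
      rw [← pot_add (int' _ hdle) (int' _ hm), hsub]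
    have hle : ∀ k, pot (ρ m') k ≤ pot (ρ m) k - pot (m' - m) k := by
      intro k
      have := h4 m hm _ ((pot_convex (int _ (hρle m' hm'))).add (pot_convex (int' _ hdle)))
        (fun k => by
          simp only [Pi.add_apply]
          linarith [hp k, h3 m' hm' k]) k
      simp only [Pi.add_apply] at this
      linarith
    have hconv : ConvexOn ℝ univ (fun k => pot (ρ m) k - pot (ρ m') k) := by
      refine key_convex (pot_convex (int _ (hρle m hm))) (pot_convex (int' _ hdle))
        (pot_convex (int _ (hρle m' hm'))) hle ?_
      intro g hg hgH
      exact h4 m' hm' g hg fun k => by linarith [hgH k, h3 m hm k, hp k]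
    obtain ⟨S0, ρ0, hS0, hS0p, -⟩ := split_potential (int _ (hSle m' hm'))
      (pot_convex (int _ (hSle m hm))) hconv (fun k => pot_nonneg _ _)
      (fun k => by linarith [hle k, pot_nonneg (m' - m) k])
      (fun k => by linarith [psum m hm k, psum m' hm' k])
    have hS0le : S0 ≤ Sh m' := hS0 ▸ Measure.le_add_right le_rfl
    have := fin _ (hS0le.trans (hSle m' hm'))
    have heq : S0 = Sh m := pot_ext (int _ (hS0le.trans (hSle m' hm'))) (int _ (hSle m hm)) hS0p
    exact heq ▸ hS0le
  · intro m hm a b hne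
    by_contra hcon
    push Not at hcon
    have := fin _ (hSle m hm)
    have := fin _ (hρle m hm)
    have := fin' _ hm
    apply hne
    have hnull : ρ m (Ioo a b) = 0 := by
      refine measure_null_of_locally_null _ fun k hk => ?_
      have hlt : pot (ρ m) k < pot ν k - pot m k := by
        refine lt_of_le_of_ne (h3 m hm k) fun h => hcon k hk ?_
        linarith [psum m hm k]
      obtain ⟨δ, hδ, c, s, haff⟩ := hull_affine (pot_convex (int _ (hρle m hm)))
        ((pot_convex hν).cont.sub (pot_convex (int' _ hm)).cont) (h3 m hm) (h4 m hm) hlt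
      refine ⟨Ioc (k - δ / 2) (k + δ / 2), mem_nhdsWithin_of_mem_nhds
        (Ioc_mem_nhds (by linarith) (by linarith)), ?_⟩
      exact null_of_affine (int _ (hρle m hm)) haff (by linarith) (by linarith) (by linarith)
    conv_rhs => rw [← h1 m hm]
    rw [Measure.add_apply, hnull, add_zero]

end

lemma shadow_unique {m ν η η' : Measure ℝ} [IsFiniteMeasure ν]
    (hν : Integrable (fun x : ℝ => x) ν) (h : IsShadow m ν η) (h' : IsShadow m ν η') : η = η' := by
  have := isFiniteMeasure_of_le ν h.2.1
  have := isFiniteMeasure_of_le ν h'.2.1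
  have i1 := hν.mono_measure h.2.1
  have i2 := hν.mono_measure h'.2.1
  refine pot_ext i1 i2 fun k => le_antisymm ?_ ?_
  · exact (h.2.2 _ h'.1 h'.2.1).pot_le i1 i2 k
  · exact (h'.2.2 _ h.1 h.2.1).pot_le i2 i1 k

end Part3

section Part4
open MeasureTheory Set Filter Topology ProbabilityTheory

section basic
variable {πh : Measure (ℝ × ℝ × ℝ)} {μh : Measure (ℝ × ℝ)} {μ ν : Measure ℝ}

lemma coupling_intY (hν : Integrable (fun x : ℝ => x) ν)
    (h : πh.map (fun p => p.2.2) = ν) : Integrable (fun p : ℝ × ℝ × ℝ => p.2.2) πh := by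
  rw [← h] at hν
  exact hν.comp_measurable (by fun_prop)

lemma coupling_intX (hμ : Integrable (fun x : ℝ => x) μ) (hl : μh.map Prod.snd = μ)
    (h : πh.map (fun p => (p.1, p.2.1)) = μh) :
    Integrable (fun p : ℝ × ℝ × ℝ => p.2.1) πh := by
  rw [← hl] at hμ
  have h1 : Integrable (fun q : ℝ × ℝ => q.2) μh := hμ.comp_measurable measurable_snd
  rw [← h] at h1
  exact h1.comp_measurable (f := fun p : ℝ × ℝ × ℝ => (p.1, p.2.1)) (by fun_prop)

lemma measSet_fst (u : ℝ) : MeasurableSet {p : ℝ × ℝ × ℝ | p.1 ≤ u} :=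
  measurableSet_le measurable_fst measurable_const

lemma pot_lcc (u k : ℝ) : pot (liftedCouplingCurve πh u) k =
    ∫ p in {p : ℝ × ℝ × ℝ | p.1 ≤ u}, max (k - p.2.2) 0 ∂πh := by
  rw [pot, liftedCouplingCurve, integral_map (by fun_prop) (by fun_prop)]

lemma pot_lc (h : πh.map (fun p => (p.1, p.2.1)) = μh) (u k : ℝ) : pot (liftCurve μh u) k =
    ∫ p in {p : ℝ × ℝ × ℝ | p.1 ≤ u}, max (k - p.2.1) 0 ∂πh := by
  rw [pot, liftCurve, integral_map (by fun_prop) (by fun_prop), ← h,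
    setIntegral_map (measurableSet_le measurable_fst measurable_const) (by fun_prop) (by fun_prop)]
  rfl

lemma noncross_aux [IsProbabilityMeasure πh]
    (iX : Integrable (fun p : ℝ × ℝ × ℝ => p.2.1) πh)
    (iY : Integrable (fun p : ℝ × ℝ × ℝ => p.2.2) πh)
    (hπ : IsLiftedMartingaleCoupling πh μh ν) {u k : ℝ}
    (heq : pot (liftedCouplingCurve πh u) k = pot (liftCurve μh u) k)
    {B : Set (ℝ × ℝ)} (hB : MeasurableSet B) (hBu : ∀ q ∈ B, q.1 ≤ u ∧ q.2 ≤ k)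
    (hBc : ∀ q, q ∉ B → q.1 ≤ u → k ≤ q.2) :
    ∀ᵐ p ∂πh, p.1 ≤ u → ((p.1, p.2.1) ∈ B → p.2.2 ≤ k) ∧ ((p.1, p.2.1) ∉ B → k ≤ p.2.2) := by
  have hm := hπ.2.2 (B.indicator fun _ => 1) (measurable_const.indicator hB) (by
    intro q; by_cases hq : q ∈ B <;> simp [hq])
  have hB' : MeasurableSet {p : ℝ × ℝ × ℝ | (p.1, p.2.1) ∈ B} :=
    (by fun_prop : Measurable fun p : ℝ × ℝ × ℝ => (p.1, p.2.1)) hB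
  set B' := {p : ℝ × ℝ × ℝ | (p.1, p.2.1) ∈ B} with hB'd
  set A := {p : ℝ × ℝ × ℝ | p.1 ≤ u} with hA
  have hAm : MeasurableSet A := measSet_fst u
  have e1 : (fun p : ℝ × ℝ × ℝ => (p.2.2 - p.2.1) * B.indicator (fun _ => (1:ℝ)) (p.1, p.2.1)) =
      fun p => B'.indicator (fun p => k - p.2.1) p - B'.indicator (fun p => k - p.2.2) p := by
    funext p
    by_cases hp : (p.1, p.2.1) ∈ B
    · have hp' : p ∈ B' := hp
      simp [hp, hp']
    · have hp' : p ∉ B' := hp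
      simp [hp, hp']
  have i1 : Integrable (B'.indicator (fun p : ℝ × ℝ × ℝ => k - p.2.1)) πh :=
    ((integrable_const k).sub iX).indicator hB'
  have i2 : Integrable (B'.indicator (fun p : ℝ × ℝ × ℝ => k - p.2.2)) πh :=
    ((integrable_const k).sub iY).indicator hB'
  rw [e1, integral_sub i1 i2] at hm
  rw [pot_lcc, pot_lc hπ.1, ← integral_indicator hAm, ← integral_indicator hAm] at heq
  have e2 : A.indicator (fun p : ℝ × ℝ × ℝ => max (k - p.2.1) 0) =
      B'.indicator (fun p => k - p.2.1) := by
    funext p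
    by_cases hp : p ∈ B'
    · have h1 := hBu _ hp
      have hpA : p ∈ A := h1.1
      rw [indicator_of_mem hp, indicator_of_mem hpA, max_eq_left (by linarith [h1.2])]
    · rw [indicator_of_notMem hp]
      by_cases hpA : p ∈ A
      · have := hBc _ hp hpA
        rw [indicator_of_mem hpA, max_eq_right (by linarith)]
      · rw [indicator_of_notMem hpA]
  rw [e2] at heq
  have i3 : Integrable (A.indicator (fun p : ℝ × ℝ × ℝ => max (k - p.2.2) 0)) πh :=
    ((integrable_const k).sub iY).pos_part.indicator hAm
  have hz : ∫ p, (A.indicator (fun p : ℝ × ℝ × ℝ => max (k - p.2.2) 0) p -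
      B'.indicator (fun p => k - p.2.2) p) ∂πh = 0 := by
    rw [integral_sub i3 i2]; linarith
  have i32 : Integrable (fun p => A.indicator (fun p : ℝ × ℝ × ℝ => max (k - p.2.2) 0) p -
      B'.indicator (fun p => k - p.2.2) p) πh := i3.sub i2
  rw [integral_eq_zero_iff_of_nonneg ?_ i32] at hz
  · filter_upwards [hz] with p hp hpu
    have hpA : p ∈ A := hpu
    simp only [Pi.zero_apply] at hp
    rw [indicator_of_mem hpA] at hp
    constructor
    · intro hpB
      have hpB' : p ∈ B' := hpB
      rw [indicator_of_mem hpB'] at hp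
      have := le_max_right (k - p.2.2) 0
      linarith
    · intro hpB
      have hpB' : p ∉ B' := hpB
      rw [indicator_of_notMem hpB'] at hp
      have := le_max_left (k - p.2.2) 0
      linarith
  · intro p
    simp only [Pi.zero_apply]
    by_cases hpB : p ∈ B'
    · have hpA : p ∈ A := (hBu _ hpB).1
      rw [indicator_of_mem hpB, indicator_of_mem hpA]
      linarith [le_max_left (k - p.2.2) 0]
    · rw [indicator_of_notMem hpB, sub_zero]
      exact indicator_nonneg (fun _ _ => le_max_right _ _) p

lemma noncross [IsProbabilityMeasure πh]
    (iX : Integrable (fun p : ℝ × ℝ × ℝ => p.2.1) πh)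
    (iY : Integrable (fun p : ℝ × ℝ × ℝ => p.2.2) πh)
    (hπ : IsLiftedMartingaleCoupling πh μh ν) {u k : ℝ}
    (heq : pot (liftedCouplingCurve πh u) k = pot (liftCurve μh u) k) :
    ∀ᵐ p ∂πh, p.1 ≤ u → (p.2.1 ≤ k → p.2.2 ≤ k) ∧ (k ≤ p.2.1 → k ≤ p.2.2) := by
  have h1 := noncross_aux iX iY hπ heq (B := {q | q.1 ≤ u} ∩ {q | q.2 ≤ k})
    ((measurableSet_le measurable_fst measurable_const).inter
      (measurableSet_le measurable_snd measurable_const)) (fun q hq => hq)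
    (fun q hq hu => le_of_lt (not_le.1 fun h => hq ⟨hu, h⟩))
  have h2 := noncross_aux iX iY hπ heq (B := {q | q.1 ≤ u} ∩ {q | q.2 < k})
    ((measurableSet_le measurable_fst measurable_const).inter
      (measurableSet_lt measurable_snd measurable_const)) (fun q hq => ⟨hq.1, le_of_lt hq.2⟩)
    (fun q hq hu => not_lt.1 fun h => hq ⟨hu, h⟩)
  filter_upwards [h1, h2] with p hp1 hp2 hu
  exact ⟨fun h => (hp1 hu).1 ⟨hu, h⟩, fun h => (hp2 hu).2 fun hh => absurd hh.2 (not_lt.2 h)⟩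

end basic

lemma eq_dirac_of_ae {κ : Measure ℝ} [IsProbabilityMeasure κ] {x : ℝ} (h : ∀ᵐ y ∂κ, y = x) :
    κ = Measure.dirac x := by
  have h1 : κ.map id = κ.map (fun _ => x) := Measure.map_congr h
  rw [Measure.map_id, Measure.map_const, measure_univ, one_smul] at h1
  exact h1

lemma fiber_unique {E : Set ℝ} {x : ℝ} {κ κ' : Measure ℝ} [IsProbabilityMeasure κ]
    [IsProbabilityMeasure κ'] (i : Integrable (fun y : ℝ => y) κ)
    (i' : Integrable (fun y : ℝ => y) κ') (m : ∫ y, y ∂κ = x) (m' : ∫ y, y ∂κ' = x)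
    (h : ∀ᵐ y ∂κ, y ∈ closure E ∧ ∀ k ∈ E, (x ≤ k → y ≤ k) ∧ (k ≤ x → k ≤ y))
    (h' : ∀ᵐ y ∂κ', y ∈ closure E ∧ ∀ k ∈ E, (x ≤ k → y ≤ k) ∧ (k ≤ x → k ≤ y)) :
    κ = κ' := by
  set G : Set ℝ := {y | y ∈ closure E ∧ ∀ k ∈ E, (x ≤ k → y ≤ k) ∧ (k ≤ x → k ≤ y)} with hG
  by_cases hup : ∀ y ∈ G, y ≤ x
  · have aux : ∀ τ : Measure ℝ, IsProbabilityMeasure τ → Integrable (fun y : ℝ => y) τ →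
        ∫ y, y ∂τ = x → (∀ᵐ y ∂τ, y ∈ G) → τ = Measure.dirac x := by
      intro τ _ iτ mτ hτ
      apply eq_dirac_of_ae
      have hz : ∫ y, (x - y) ∂τ = 0 := by
        rw [integral_sub (integrable_const _) iτ, mτ]; simp
      have iτ' : Integrable (fun y : ℝ => x - y) τ := (integrable_const _).sub iτ
      rw [integral_eq_zero_iff_of_nonneg_ae ?_ iτ'] at hz
      · filter_upwards [hz] with y hy
        simp only [Pi.zero_apply] at hy
        linarith
      · filter_upwards [hτ] with y hy
        simp only [Pi.zero_apply]
        linarith [hup y hy]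
    rw [aux κ inferInstance i m h, aux κ' inferInstance i' m' h']
  by_cases hdn : ∀ y ∈ G, x ≤ y
  · have aux : ∀ τ : Measure ℝ, IsProbabilityMeasure τ → Integrable (fun y : ℝ => y) τ →
        ∫ y, y ∂τ = x → (∀ᵐ y ∂τ, y ∈ G) → τ = Measure.dirac x := by
      intro τ _ iτ mτ hτ
      apply eq_dirac_of_ae
      have hz : ∫ y, (y - x) ∂τ = 0 := by
        rw [integral_sub iτ (integrable_const _), mτ]; simp
      have iτ' : Integrable (fun y : ℝ => y - x) τ := iτ.sub (integrable_const _)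
      rw [integral_eq_zero_iff_of_nonneg_ae ?_ iτ'] at hz
      · filter_upwards [hz] with y hy
        simp only [Pi.zero_apply] at hy
        linarith
      · filter_upwards [hτ] with y hy
        simp only [Pi.zero_apply]
        linarith [hdn y hy]
    rw [aux κ inferInstance i m h, aux κ' inferInstance i' m' h']
  push Not at hup hdn
  obtain ⟨T2, hT2, hxT2⟩ := hup
  obtain ⟨T1, hT1, hxT1⟩ := hdn
  -- no two points of `G` on the same side
  have near : ∀ y ∈ closure E, ∀ a b, a < y → y < b → ∃ k ∈ E, a < k ∧ k < b := by
    intro y hy a b ha hb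
    obtain ⟨k, hk1, hk2⟩ := mem_closure_iff_nhds.1 hy (Ioo a b) (Ioo_mem_nhds ha hb)
    exact ⟨k, hk2, hk1.1, hk1.2⟩
  have up : ∀ y ∈ G, ∀ z ∈ G, x < y → y < z → False := by
    intro y hy z hz hxy hyz
    obtain ⟨k, hk, h1, h2⟩ := near y hy.1 x z hxy hyz
    linarith [(hz.2 k hk).1 h1.le]
  have dn : ∀ y ∈ G, ∀ z ∈ G, y < x → z < y → False := by
    intro y hy z hz hxy hyz
    obtain ⟨k, hk, h1, h2⟩ := near y hy.1 z x hyz hxy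
    linarith [(hz.2 k hk).2 h2.le]
  have mid : x ∉ G := by
    intro hx
    obtain ⟨k, hk, h1, h2⟩ := near x hx.1 T1 T2 hxT1 hxT2
    rcases le_total x k with h3 | h3
    · linarith [(hT2.2 k hk).1 h3]
    · linarith [(hT1.2 k hk).2 h3]
  have two : ∀ y ∈ G, y = T1 ∨ y = T2 := by
    intro y hy
    rcases lt_trichotomy y x with h1 | h1 | h1
    · left
      rcases lt_trichotomy y T1 with h2 | h2 | h2
      · exact (dn T1 hT1 y hy hxT1 h2).elim
      · exact h2
      · exact (dn y hy T1 hT1 h1 h2).elim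
    · exact (mid (h1 ▸ hy)).elim
    · right
      rcases lt_trichotomy y T2 with h2 | h2 | h2
      · exact (up y hy T2 hT2 h1 h2).elim
      · exact h2
      · exact (up T2 hT2 y hy hxT2 h2).elim
  have hT : T2 - T1 ≠ 0 := by linarith
  refine Measure.ext fun s hs => ?_
  set φ : ℝ → ℝ := s.indicator fun _ => 1 with hφ
  set β := (φ T2 - φ T1) / (T2 - T1) with hβ
  have hβm : β * (T2 - T1) = φ T2 - φ T1 := div_mul_cancel₀ _ hT
  have aux : ∀ τ : Measure ℝ, IsProbabilityMeasure τ → Integrable (fun y : ℝ => y) τ →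
      ∫ y, y ∂τ = x → (∀ᵐ y ∂τ, y ∈ G) → τ.real s = (φ T1 - β * T1) + β * x := by
    intro τ _ iτ mτ hτ
    have h1 : τ.real s = ∫ y, φ y ∂τ := by
      rw [hφ, integral_indicator hs]; simp
    have h2 : ∫ y, φ y ∂τ = ∫ y, ((φ T1 - β * T1) + β * y) ∂τ := by
      refine integral_congr_ae ?_
      filter_upwards [hτ] with y hy
      rcases two y hy with rfl | rfl
      · ring
      · linarith
    rw [h1, h2, integral_add (integrable_const _) (iτ.const_mul _), integral_const_mul, mτ]
    simp
  have := (aux κ inferInstance i m h).trans (aux κ' inferInstance i' m' h').symm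
  exact (measureReal_eq_measureReal_iff).1 this

/-- Uniqueness from a common family of barrier sets. -/
lemma coupling_unique {π₁ π₂ : Measure (ℝ × ℝ × ℝ)} {μh : Measure (ℝ × ℝ)} {ν : Measure ℝ}
    [IsProbabilityMeasure μh]
    (E : ℝ → Set ℝ)
    (h : ∀ π ∈ ({π₁, π₂} : Set (Measure (ℝ × ℝ × ℝ))), IsProbabilityMeasure π ∧
      Integrable (fun p : ℝ × ℝ × ℝ => p.2.1) π ∧ Integrable (fun p : ℝ × ℝ × ℝ => p.2.2) π ∧
      IsLiftedMartingaleCoupling π μh ν ∧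
      ∀ᵐ p ∂π, p.2.2 ∈ closure (E p.1) ∧
        ∀ k ∈ E p.1, (p.2.1 ≤ k → p.2.2 ≤ k) ∧ (k ≤ p.2.1 → k ≤ p.2.2)) : π₁ = π₂ := by
  let e := (MeasurableEquiv.prodAssoc : (ℝ × ℝ) × ℝ ≃ᵐ ℝ × ℝ × ℝ)
  have aux : ∀ π ∈ ({π₁, π₂} : Set (Measure (ℝ × ℝ × ℝ))), ∃ κ : Kernel (ℝ × ℝ) ℝ,
      IsMarkovKernel κ ∧ π.map e.symm = μh ⊗ₘ κ ∧
      ∀ᵐ q ∂μh, Integrable (fun y : ℝ => y) (κ q) ∧ ∫ y, y ∂(κ q) = q.2 ∧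
        ∀ᵐ y ∂(κ q), y ∈ closure (E q.1) ∧
          ∀ k ∈ E q.1, (q.2 ≤ k → y ≤ k) ∧ (k ≤ q.2 → k ≤ y) := by
    intro π hπ
    obtain ⟨_, iX, iY, hc, hae⟩ := h π hπ
    have : IsProbabilityMeasure (π.map e.symm) :=
      Measure.isProbabilityMeasure_map e.symm.measurable.aemeasurable
    have hfst : (π.map e.symm).fst = μh := by
      rw [Measure.fst, Measure.map_map measurable_fst e.symm.measurable, ← hc.1]
      rfl
    have hd : π.map e.symm = μh ⊗ₘ (π.map e.symm).condKernel := by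
      conv_lhs => rw [← (π.map e.symm).disintegrate (π.map e.symm).condKernel, hfst]
    set κ := (π.map e.symm).condKernel with hκ
    refine ⟨κ, inferInstance, hd, ?_⟩
    have iY' : Integrable (fun z : (ℝ × ℝ) × ℝ => z.2) (μh ⊗ₘ κ) := by
      rw [← hd, e.symm.measurableEmbedding.integrable_map_iff]
      exact iY
    have iYX' : Integrable (fun z : (ℝ × ℝ) × ℝ => z.2 - z.1.2) (μh ⊗ₘ κ) := by
      rw [← hd, e.symm.measurableEmbedding.integrable_map_iff]
      exact iY.sub iX
    have hae' : ∀ᵐ z ∂(μh ⊗ₘ κ), z.2 ∈ closure (E z.1.1) ∧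
        ∀ k ∈ E z.1.1, (z.1.2 ≤ k → z.2 ≤ k) ∧ (k ≤ z.1.2 → k ≤ z.2) := by
      rw [← hd, e.symm.measurableEmbedding.ae_map_iff]
      exact hae
    have a1 := ((Measure.integrable_compProd_iff iY'.aestronglyMeasurable).1 iY').1
    have a2 := Measure.ae_ae_of_ae_compProd hae'
    have a3 : (fun q : ℝ × ℝ => ∫ y, (y - q.2) ∂(κ q)) =ᵐ[μh] 0 := by
      refine Integrable.ae_eq_zero_of_forall_setIntegral_eq_zero iYX'.integral_compProd ?_
      intro B hB _
      have hset := Measure.setIntegral_compProd hB MeasurableSet.univ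
        (f := fun z : (ℝ × ℝ) × ℝ => z.2 - z.1.2) iYX'.integrableOn
      simp only [Measure.restrict_univ] at hset
      rw [← hset, ← hd, ← integral_indicator (hB.prod MeasurableSet.univ),
        e.symm.measurableEmbedding.integral_map]
      have hm := hc.2.2 (B.indicator fun _ => 1) (measurable_const.indicator hB) (by
        intro q; by_cases hq : q ∈ B <;> simp [hq])
      rw [← hm]
      refine integral_congr_ae (Eventually.of_forall fun p => ?_)
      change (B ×ˢ univ).indicator (fun z : (ℝ × ℝ) × ℝ => z.2 - z.1.2) ((p.1, p.2.1), p.2.2) = _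
      by_cases hq : (p.1, p.2.1) ∈ B <;> simp [hq]
    filter_upwards [a1, a2, a3] with q h1 h2 h3
    refine ⟨h1, ?_, h2⟩
    simp only [Pi.zero_apply] at h3
    rw [integral_sub h1 (integrable_const _)] at h3
    simp only [integral_const, probReal_univ, smul_eq_mul, one_mul] at h3
    linarith
  obtain ⟨κ₁, _, hd1, ha1⟩ := aux π₁ (by simp)
  obtain ⟨κ₂, _, hd2, ha2⟩ := aux π₂ (by simp)
  have hκ : κ₁ =ᵐ[μh] κ₂ := by
    filter_upwards [ha1, ha2] with q h1 h2
    exact fiber_unique h1.1 h2.1 h1.2.1 h2.2.1 h1.2.2 h2.2.2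
  have heq : π₁.map e.symm = π₂.map e.symm := by
    rw [hd1, hd2, Measure.compProd_congr hκ]
  have := congrArg (fun M => Measure.map e M) heq
  simp only [Measure.map_map e.measurable e.symm.measurable] at this
  simpa using this

end Part4

section Part5
open MeasureTheory Set Filter Topology ProbabilityTheory

lemma liftCurve_le {μh : Measure (ℝ × ℝ)} {μ : Measure ℝ} (hl : μh.map Prod.snd = μ) (u : ℝ) :
    liftCurve μh u ≤ μ := by
  rw [← hl]
  exact Measure.map_mono Measure.restrict_le_self measurable_snd

section
variable {μ ν : Measure ℝ} {μh : Measure (ℝ × ℝ)}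

/-- The `y`-coordinate lies in the closure of the barrier set. -/
lemma barrier_aux {π : Measure (ℝ × ℝ × ℝ)} [IsProbabilityMeasure π] [IsProbabilityMeasure ν]
    (hπ2 : π.map (fun p => p.2.2) = ν)
    (hU : π.map (fun p => p.1) = volume.restrict (Icc (0:ℝ) 1))
    (S : ℝ → Measure ℝ) (hS : ∀ u ∈ Icc (0:ℝ) 1, liftedCouplingCurve π u = S u)
    (J : Set ℝ) (hJ : MeasurableSet J) :
    ∀ᵐ p ∂π, p.2.2 ∈ J → ∃ q : ℚ, (q:ℝ) ∈ Icc (0:ℝ) 1 ∧ p.1 ≤ (q:ℝ) ∧ S q J ≠ ν J := by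
  set Q : Set ℝ := {r | ∃ q : ℚ, (q:ℝ) = r ∧ r ∈ Icc (0:ℝ) 1 ∧ S r J = ν J} with hQ
  have hJm : MeasurableSet {p : ℝ × ℝ × ℝ | p.2.2 ∈ J} :=
    (by fun_prop : Measurable fun p : ℝ × ℝ × ℝ => p.2.2) hJ
  have hνJ : ν J = π {p : ℝ × ℝ × ℝ | p.2.2 ∈ J} := by
    rw [← hπ2, Measure.map_apply (by fun_prop) hJ]; rfl
  have hUIcc : ∀ᵐ p ∂π, p.1 ∈ Icc (0:ℝ) 1 := by
    have : ∀ᵐ u ∂(π.map (fun p => p.1)), u ∈ Icc (0:ℝ) 1 := by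
      rw [hU]; exact ae_restrict_mem measurableSet_Icc
    exact ae_of_ae_map (f := fun p : ℝ × ℝ × ℝ => p.1) (by fun_prop) this
  have hUne : ∀ᵐ p ∂π, p.1 ≠ sInf Q := by
    have : ∀ᵐ u ∂(π.map (fun p => p.1)), u ≠ sInf Q := by
      rw [hU, ae_iff]
      simp
    exact ae_of_ae_map (f := fun p : ℝ × ℝ × ℝ => p.1) (by fun_prop) this
  have hQz : ∀ q : ℚ, (q:ℝ) ∈ Q → ∀ᵐ p ∂π, p.2.2 ∈ J → p.1 ≤ (q:ℝ) := by
    rintro q ⟨_, _, hq1, hq2⟩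
    rw [← hS _ hq1, liftedCouplingCurve, Measure.map_apply (by fun_prop) hJ,
      Measure.restrict_apply (by exact hJm), hνJ] at hq2
    rw [ae_iff]
    have hm : MeasurableSet ((fun p : ℝ × ℝ × ℝ => p.2.2) ⁻¹' J ∩ {p | p.1 ≤ (q:ℝ)}) :=
      MeasurableSet.inter hJm (measSet_fst _)
    change π ({p : ℝ × ℝ × ℝ | p.2.2 ∈ J} ∩ {p | p.1 ≤ (q:ℝ)}) = _ at hq2
    have := measure_sdiff (μ := π) (s₁ := {p : ℝ × ℝ × ℝ | p.2.2 ∈ J}) inter_subset_left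
      hm.nullMeasurableSet (measure_ne_top _ _)
    rw [hq2, tsub_self] at this
    refine measure_mono_null ?_ this
    intro p hp
    simp only [mem_ofPred_eq, Classical.not_imp] at hp
    exact ⟨hp.1, fun h => hp.2 h.2⟩
  have hQz' : ∀ᵐ p ∂π, ∀ q : ℚ, (q:ℝ) ∈ Q → p.2.2 ∈ J → p.1 ≤ (q:ℝ) := by
    rw [ae_all_iff]; intro q
    by_cases hq : (q:ℝ) ∈ Q
    · filter_upwards [hQz q hq] with p hp _ using hp
    · exact Eventually.of_forall fun p h => (hq h).elim
  filter_upwards [hUIcc, hUne, hQz'] with p h1 h2 h3 hpJ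
  by_contra! hcon
  have hall : ∀ q : ℚ, (q:ℝ) ∈ Icc (0:ℝ) 1 → p.1 ≤ (q:ℝ) → (q:ℝ) ∈ Q := fun q hq hpq =>
    ⟨q, rfl, hq, hcon q hq hpq⟩
  have hne : Q.Nonempty := ⟨((1:ℚ):ℝ), hall 1 (by simp) (by simpa using h1.2)⟩
  have hbd : BddBelow Q := ⟨0, by rintro _ ⟨_, _, h, _⟩; exact h.1⟩
  apply h2
  apply le_antisymm
  · refine le_csInf hne ?_
    rintro r ⟨q, rfl, hq⟩
    exact h3 q ⟨q, rfl, hq⟩ hpJ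
  · by_contra! hlt
    have hp1 : p.1 < 1 := by
      refine lt_of_lt_of_le hlt ?_
      have : ((1:ℚ):ℝ) ∈ Q := hall 1 (by simp) (by simpa using h1.2)
      simpa using csInf_le hbd this
    obtain ⟨q, hq1, hq2⟩ := exists_rat_btwn (lt_min hlt hp1)
    have := csInf_le hbd (hall q ⟨by linarith [h1.1], (hq2.trans_le (min_le_right _ _)).le⟩ hq1.le)
    exact absurd (hq2.trans_le (min_le_left _ _)) (not_lt.2 this)

theorem lifted_unique [IsProbabilityMeasure μ] [IsProbabilityMeasure ν]
    (hμ : Integrable (fun x : ℝ => x) μ) (hν : Integrable (fun x : ℝ => x) ν)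
    (hμν : ConvexOrder μ ν)
    (hlift₁ : μh.map Prod.fst = volume.restrict (Set.Icc (0:ℝ) 1))
    (hlift₂ : μh.map Prod.snd = μ) {π₁ π₂ : Measure (ℝ × ℝ × ℝ)}
    (h : ∀ π ∈ ({π₁, π₂} : Set (Measure (ℝ × ℝ × ℝ))),
      IsLiftedMartingaleCoupling π μh ν ∧
        ∀ u ∈ Set.Icc (0:ℝ) 1, IsShadow (liftCurve μh u) ν (liftedCouplingCurve π u)) :
    π₁ = π₂ := by
  obtain ⟨Sh, hSh1, hSh2, hSh3⟩ := exists_shadow_map hμ hν hμν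
  have hμhp : IsProbabilityMeasure μh := by
    have : IsProbabilityMeasure (μh.map Prod.snd) := by rw [hlift₂]; infer_instance
    exact Measure.isProbabilityMeasure_of_map (f := Prod.snd) 
  choose! kf hk1 hk2 using hSh3
  set S : ℝ → Measure ℝ := fun u => Sh (liftCurve μh u) with hS
  have hle := fun u => liftCurve_le hlift₂ u
  refine coupling_unique (ν := ν) (μh := μh)
    (fun u => {k | ∃ q a b : ℚ, (q:ℝ) ∈ Icc (0:ℝ) 1 ∧ u ≤ (q:ℝ) ∧ S q (Ioo a b) ≠ ν (Ioo a b) ∧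
      k = kf (liftCurve μh q) a b}) ?_
  intro π hπ
  obtain ⟨hc, hcu⟩ := h π hπ
  have hprob : IsProbabilityMeasure π := by
    have : IsProbabilityMeasure (π.map fun p => p.2.2) := by rw [hc.2.1]; infer_instance
    exact Measure.isProbabilityMeasure_of_map (f := fun p : ℝ × ℝ × ℝ => p.2.2) 
  have iX := coupling_intX hμ hlift₂ hc.1
  have iY := coupling_intY hν hc.2.1
  have hSe : ∀ u ∈ Icc (0:ℝ) 1, liftedCouplingCurve π u = S u := fun u hu =>
    shadow_unique hν (hcu u hu) (hSh1 _ (hle u))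
  have hU : π.map (fun p => p.1) = volume.restrict (Icc (0:ℝ) 1) := by
    rw [← hlift₁, ← hc.1, Measure.map_map (by fun_prop) (by fun_prop)]; rfl
  refine ⟨hprob, iX, iY, hc, ?_⟩
  have hA : ∀ᵐ p ∂π, ∀ a b : ℚ, p.2.2 ∈ Ioo (a:ℝ) b →
      ∃ q : ℚ, (q:ℝ) ∈ Icc (0:ℝ) 1 ∧ p.1 ≤ (q:ℝ) ∧ S q (Ioo a b) ≠ ν (Ioo a b) := by
    rw [ae_all_iff]; intro a
    rw [ae_all_iff]; intro b
    exact barrier_aux hc.2.1 hU S hSe _ measurableSet_Ioo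
  have hB : ∀ᵐ p ∂π, ∀ q a b : ℚ, (q:ℝ) ∈ Icc (0:ℝ) 1 → S q (Ioo a b) ≠ ν (Ioo a b) → p.1 ≤ (q:ℝ) →
      (p.2.1 ≤ kf (liftCurve μh q) a b → p.2.2 ≤ kf (liftCurve μh q) a b) ∧
      (kf (liftCurve μh q) a b ≤ p.2.1 → kf (liftCurve μh q) a b ≤ p.2.2) := by
    rw [ae_all_iff]; intro q
    rw [ae_all_iff]; intro a
    rw [ae_all_iff]; intro b
    by_cases hq : (q:ℝ) ∈ Icc (0:ℝ) 1
    · by_cases hne : S q (Ioo a b) ≠ ν (Ioo a b)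
      · have := noncross iX iY hc (u := q) (k := kf (liftCurve μh q) a b) (by
          rw [hSe q hq]; exact hk2 _ (hle q) _ _ hne)
        filter_upwards [this] with p hp _ _ using hp
      · exact Eventually.of_forall fun p _ h => (hne h).elim
    · exact Eventually.of_forall fun p h => (hq h).elim
  filter_upwards [hA, hB] with p hpA hpB
  refine ⟨?_, ?_⟩
  · rw [mem_closure_iff_nhds]
    intro t ht
    obtain ⟨l, r, hlr, hsub⟩ := mem_nhds_iff_exists_Ioo_subset.1 ht
    obtain ⟨a, ha1, ha2⟩ := exists_rat_btwn hlr.1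
    obtain ⟨b, hb1, hb2⟩ := exists_rat_btwn hlr.2
    obtain ⟨q, hq1, hq2, hq3⟩ := hpA a b ⟨ha2, hb1⟩
    have hk := hk1 _ (hle q) _ _ hq3
    exact ⟨_, hsub ⟨ha1.trans hk.1, hk.2.trans hb2⟩, q, a, b, hq1, hq2, hq3, rfl⟩
  · rintro k ⟨q, a, b, hq1, hq2, hq3, rfl⟩
    exact hpB q a b hq1 hq3 hq2
end

end Part5

section Part6
open MeasureTheory Set Filter Topology ProbabilityTheory

section
variable {μ ν : Measure ℝ} {μh : Measure (ℝ × ℝ)}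

lemma mass_eq_univ {m m' : Measure ℝ} [IsFiniteMeasure m] [IsFiniteMeasure m']
    (h : ConvexOrder m m') : m univ = m' univ :=
  (measureReal_eq_measureReal_iff).1 h.mass_eq

/-- Normalised increments of an increasing sequence of measures. -/
lemma exists_normalised (s : ℕ → Measure ℝ) [∀ j, IsFiniteMeasure (s j)] :
    ∃ t : ℕ → Measure ℝ, (∀ j, IsProbabilityMeasure (t j)) ∧ ∀ j B, s j univ * t j B = s j B := by
  classical
  refine ⟨fun j => if s j univ = 0 then Measure.dirac 0 else (s j univ)⁻¹ • s j, ?_, ?_⟩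
  · intro j
    by_cases h : s j univ = 0
    · simp only [h, if_true]; infer_instance
    · simp only [h, if_false]
      refine ⟨?_⟩
      rw [Measure.smul_apply, smul_eq_mul, ENNReal.inv_mul_cancel h (measure_ne_top _ _)]
  · intro j B
    by_cases h : s j univ = 0
    · simp only [h, zero_mul]
      exact (measure_mono_null (subset_univ _) h).symm
    · simp only [h, if_false, Measure.smul_apply, smul_eq_mul]
      rw [← mul_assoc, ENNReal.mul_inv_cancel h (measure_ne_top _ _), one_mul]

lemma discrete_coupling [IsProbabilityMeasure μ] [IsProbabilityMeasure ν]
    [IsProbabilityMeasure μh]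
    (hlift₂ : μh.map Prod.snd = μ) {Sh : Measure ℝ → Measure ℝ}
    (hSh1 : ∀ m ≤ μ, IsShadow m ν (Sh m))
    (hSh2 : ∀ m m', m ≤ m' → m' ≤ μ → Sh m ≤ Sh m')
    {τ : ℝ × ℝ → ℕ} (hτ : Measurable τ) {N : ℕ} (hN : ∀ q, τ q < N) :
    ∃ π : Measure (ℝ × ℝ × ℝ), π.map (fun p => (p.1, p.2.1)) = μh ∧
      π.map (fun p => p.2.2) = ν ∧
      ∀ j, (π.restrict {p | τ (p.1, p.2.1) < j}).map (fun p => p.2.2) =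
        Sh ((μh.restrict {q | τ q < j}).map Prod.snd) := by
  classical
  have hτm : ∀ j, MeasurableSet {q | τ q < j} := fun j => measurableSet_lt hτ measurable_const
  have hτe : ∀ j, MeasurableSet {q | τ q = j} := fun j => measurableSet_eq_fun hτ measurable_const
  set m : ℕ → Measure ℝ := fun j => (μh.restrict {q | τ q < j}).map Prod.snd with hm
  have hmle : ∀ j, m j ≤ μ := fun j => by
    rw [← hlift₂]; exact Measure.map_mono Measure.restrict_le_self measurable_snd
  have hmmono : ∀ j, m j ≤ m (j+1) := fun j =>
    Measure.map_mono (Measure.restrict_mono (fun q (hq : τ q < j) =>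
      show τ q < j + 1 from lt_trans hq (Nat.lt_succ_self j)) le_rfl)
      measurable_snd
  have hmu : ∀ j, m j univ = μh {q | τ q < j} := fun j => by
    simp only [hm]; rw [Measure.map_apply measurable_snd MeasurableSet.univ]; simp
  have hfin : ∀ j, IsFiniteMeasure (m j) := fun j => isFiniteMeasure_of_le μ (hmle j)
  have hSfin : ∀ j, IsFiniteMeasure (Sh (m j)) := fun j =>
    isFiniteMeasure_of_le ν (hSh1 _ (hmle j)).2.1
  have hSmono : ∀ j, Sh (m j) ≤ Sh (m (j+1)) := fun j => hSh2 _ _ (hmmono j) (hmle _)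
  have hSu : ∀ j, Sh (m j) univ = μh {q | τ q < j} := fun j => by
    rw [← hmu, mass_eq_univ (hSh1 _ (hmle j)).1]
  set s : ℕ → Measure ℝ := fun j => Sh (m (j+1)) - Sh (m j) with hs
  have hsfin : ∀ j, IsFiniteMeasure (s j) := fun j => isFiniteMeasure_of_le (Sh (m (j+1))) Measure.sub_le
  have hsadd : ∀ j, Sh (m j) + s j = Sh (m (j+1)) := fun j => by
    rw [add_comm]; exact Measure.sub_add_cancel_of_le (hSmono j)
  have hsplit : ∀ j, {q | τ q < j + 1} = {q | τ q < j} ∪ {q | τ q = j} := fun j => by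
    ext q; simp only [mem_ofPred_eq, mem_union]; omega
  have hdisj : ∀ j, Disjoint {q | τ q < j} {q | τ q = j} := fun j => by
    rw [Set.disjoint_left]; intro q hq hq'; simp only [mem_ofPred_eq] at hq hq'; omega
  have hsu : ∀ j, s j univ = μh {q | τ q = j} := fun j => by
    have h1 := congrArg (fun M : Measure ℝ => M univ) (hsadd j)
    simp only [Measure.add_apply, hSu] at h1
    rw [hsplit j, measure_union (hdisj j) (hτe j)] at h1
    exact (ENNReal.add_right_inj (measure_ne_top _ _)).1 h1
  obtain ⟨t, ht1, ht2⟩ := exists_normalised s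
  set κ : Kernel (ℝ × ℝ) ℝ := (Kernel.ofFunOfCountable t).comap τ hτ with hκ
  have hκa : ∀ q, κ q = t (τ q) := fun q => rfl
  have hκm : IsMarkovKernel κ := ⟨fun q => by rw [hκa]; infer_instance⟩
  set P := μh ⊗ₘ κ with hP
  have hcell : ∀ j B, MeasurableSet B → P ({q | τ q = j} ×ˢ B) = s j B := fun j B hB => by
    rw [hP, Measure.compProd_apply_prod (hτe j) hB, ← ht2, hsu]
    rw [setLIntegral_congr_fun (g := fun _ => t j B) (hτe j) (fun q hq => by
      simp only [mem_ofPred_eq] at hq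
      simp only [hκa, hq]), setLIntegral_const, mul_comm]
  have hchain : ∀ j B, MeasurableSet B → P ({q | τ q < j} ×ˢ B) = Sh (m j) B := by
    intro j B hB
    induction j with
    | zero =>
      have : Sh (m 0) univ = 0 := by rw [hSu]; simp
      rw [measure_mono_null (subset_univ _) this]
      simp
    | succ j ih =>
      rw [hsplit, union_prod, measure_union, ih, hcell _ _ hB, ← Measure.add_apply, hsadd]
      · exact Set.Disjoint.set_prod_left (hdisj j) _ _
      · exact (hτe j).prod hB
  have hchain' : ∀ j, ((P.map MeasurableEquiv.prodAssoc).restrict {p | τ (p.1, p.2.1) < j}).map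
      (fun p => p.2.2) = Sh (m j) := by
    intro j
    have hmj : MeasurableSet {p : ℝ × ℝ × ℝ | τ (p.1, p.2.1) < j} :=
      (by fun_prop : Measurable fun p : ℝ × ℝ × ℝ => (p.1, p.2.1)) (hτm j)
    refine Measure.ext fun B hB => ?_
    have hBm : MeasurableSet ((fun p : ℝ × ℝ × ℝ => p.2.2) ⁻¹' B) :=
      (by fun_prop : Measurable fun p : ℝ × ℝ × ℝ => p.2.2) hB
    rw [Measure.map_apply (by fun_prop) hB, Measure.restrict_apply hBm,
      Measure.map_apply (MeasurableEquiv.measurable _) (hBm.inter hmj), ← hchain j B hB]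
    congr 1
    ext p
    simp only [mem_preimage, mem_inter_iff, mem_ofPred_eq, mem_prod]
    exact and_comm
  refine ⟨P.map MeasurableEquiv.prodAssoc, ?_, ?_, hchain'⟩
  · rw [Measure.map_map (by fun_prop) (MeasurableEquiv.measurable _)]
    exact Measure.fst_compProd μh κ
  · have h1 := hchain' N
    have h2 : {p : ℝ × ℝ × ℝ | τ (p.1, p.2.1) < N} = univ := by ext p; simp [hN]
    rw [h2, Measure.restrict_univ] at h1
    rw [h1]
    refine Measure.eq_of_le_of_measure_univ_eq (hSh1 _ (hmle N)).2.1 ?_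
    rw [hSu]
    have h3 : {q | τ q < N} = univ := by ext p; simp [hN]
    rw [h3, measure_univ, measure_univ]

end

end Part6

section Part7
open MeasureTheory Set Filter Topology ProbabilityTheory

section
variable {μ ν : Measure ℝ} {μh : Measure (ℝ × ℝ)}

lemma discrete_mart [IsProbabilityMeasure μ] [IsProbabilityMeasure ν]
    (hμ : Integrable (fun x : ℝ => x) μ) (hν : Integrable (fun x : ℝ => x) ν)
    (hlift₂ : μh.map Prod.snd = μ) {Sh : Measure ℝ → Measure ℝ}
    (hSh1 : ∀ m ≤ μ, IsShadow m ν (Sh m))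
    {τ : ℝ × ℝ → ℕ} (hτ : Measurable τ) {N : ℕ} (hN : ∀ q, τ q < N)
    {π : Measure (ℝ × ℝ × ℝ)} (h1 : π.map (fun p => (p.1, p.2.1)) = μh)
    (h2 : π.map (fun p => p.2.2) = ν)
    (h3 : ∀ j, (π.restrict {p | τ (p.1, p.2.1) < j}).map (fun p => p.2.2) =
        Sh ((μh.restrict {q | τ q < j}).map Prod.snd))
    {G : ℝ × ℝ → ℝ} (hG : Measurable G) {ε : ℝ} (hGε : ∀ q q', τ q = τ q' → |G q - G q'| ≤ ε)
    {C : ℝ} (hC : ∀ q, |G q| ≤ C) :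
    |∫ p, (p.2.2 - p.2.1) * G (p.1, p.2.1) ∂π| ≤ ε * (∫ x, |x| ∂μ + ∫ y, |y| ∂ν) := by
  classical
  have iX := coupling_intX hμ hlift₂ h1
  have iY := coupling_intY hν h2
  have iD : Integrable (fun p : ℝ × ℝ × ℝ => p.2.2 - p.2.1) π := iY.sub iX
  have hmc : Measurable fun p : ℝ × ℝ × ℝ => (p.1, p.2.1) := by fun_prop
  have hτm : ∀ j, MeasurableSet {q | τ q < j} := fun j => measurableSet_lt hτ measurable_const
  have hτm' : ∀ j, MeasurableSet {p : ℝ × ℝ × ℝ | τ (p.1, p.2.1) < j} := fun j => hmc (hτm j)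
  have hτe : ∀ j, MeasurableSet {q | τ q = j} := fun j => measurableSet_eq_fun hτ measurable_const
  have hτe' : ∀ j, MeasurableSet {p : ℝ × ℝ × ℝ | τ (p.1, p.2.1) = j} := fun j => hmc (hτe j)
  have hlt : ∀ j, ∫ p in {p : ℝ × ℝ × ℝ | τ (p.1, p.2.1) < j}, (p.2.2 - p.2.1) ∂π = 0 := by
    intro j
    have hle : (μh.restrict {q | τ q < j}).map Prod.snd ≤ μ := by
      rw [← hlift₂]; exact Measure.map_mono Measure.restrict_le_self measurable_snd
    have hs := hSh1 _ hle
    have hme := ConvexOrder.mean_eq (hμ.mono_measure hle) (hν.mono_measure hs.2.1) hs.1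
    rw [← h3 j, integral_map (by fun_prop) (by fun_prop),
      integral_map (by fun_prop) (by fun_prop), ← h1,
      setIntegral_map (hτm j) (by fun_prop) (by fun_prop)] at hme
    rw [integral_sub iY.integrableOn iX.integrableOn, sub_eq_zero]
    exact hme.symm
  have heq : ∀ j, ∫ p in {p : ℝ × ℝ × ℝ | τ (p.1, p.2.1) = j}, (p.2.2 - p.2.1) ∂π = 0 := by
    intro j
    have hsplit : {p : ℝ × ℝ × ℝ | τ (p.1, p.2.1) < j + 1} =
        {p | τ (p.1, p.2.1) < j} ∪ {p | τ (p.1, p.2.1) = j} := by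
      ext q; simp only [mem_ofPred_eq, mem_union]; omega
    have hdisj : Disjoint {p : ℝ × ℝ × ℝ | τ (p.1, p.2.1) < j} {p | τ (p.1, p.2.1) = j} := by
      rw [Set.disjoint_left]; intro q hq hq'; simp only [mem_ofPred_eq] at hq hq'; omega
    have := hlt (j+1)
    rw [hsplit, setIntegral_union hdisj (hτe' j) iD.integrableOn iD.integrableOn, hlt j, zero_add]
      at this
    exact this
  -- representatives
  have hrep : ∃ c : ℕ → ℝ, ∀ q, |G q - c (τ q)| ≤ ε ∧ |c (τ q)| ≤ C := by
    refine ⟨fun j => if h : ∃ q, τ q = j then G h.choose else 0, fun q => ?_⟩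
    have h : ∃ q', τ q' = τ q := ⟨q, rfl⟩
    simp only [h, dif_pos]
    exact ⟨hGε _ _ h.choose_spec.symm, hC _⟩
  obtain ⟨c, hc⟩ := hrep
  have hgm : Measurable fun q => c (τ q) := (measurable_of_countable c).comp hτ
  have i1 : Integrable (fun p : ℝ × ℝ × ℝ => (p.2.2 - p.2.1) * G (p.1, p.2.1)) π :=
    iD.mul_bdd (c := C) (hG.comp hmc).aestronglyMeasurable
      (Eventually.of_forall fun p => hC _)
  have i2 : Integrable (fun p : ℝ × ℝ × ℝ => (p.2.2 - p.2.1) * c (τ (p.1, p.2.1))) π :=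
    iD.mul_bdd (c := C) (hgm.comp hmc).aestronglyMeasurable
      (Eventually.of_forall fun p => (hc _).2)
  have hz : ∫ p : ℝ × ℝ × ℝ, (p.2.2 - p.2.1) * c (τ (p.1, p.2.1)) ∂π = 0 := by
    have e : (fun p : ℝ × ℝ × ℝ => (p.2.2 - p.2.1) * c (τ (p.1, p.2.1))) = fun p =>
        ∑ j ∈ Finset.range N, c j * ({p : ℝ × ℝ × ℝ | τ (p.1, p.2.1) = j}.indicator
          (fun p => p.2.2 - p.2.1) p) := by
      funext p
      rw [Finset.sum_eq_single (τ (p.1, p.2.1))]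
      · rw [indicator_of_mem (by simp), mul_comm]
      · intro j _ hj
        rw [indicator_of_notMem (by simpa using hj.symm), mul_zero]
      · intro h; exact (h (Finset.mem_range.2 (hN _))).elim
    rw [e, integral_finsetSum _ fun j _ => (iD.indicator (hτe' j)).const_mul _]
    refine Finset.sum_eq_zero fun j _ => ?_
    rw [integral_const_mul, integral_indicator (hτe' j), heq, mul_zero]
  have habs : ∫ p : ℝ × ℝ × ℝ, ε * (|p.2.1| + |p.2.2|) ∂π =
      ε * (∫ x, |x| ∂μ + ∫ y, |y| ∂ν) := by
    rw [integral_const_mul, integral_add iX.abs iY.abs, ← hlift₂, ← h1, ← h2,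
      Measure.map_map (by fun_prop) (by fun_prop), integral_map (by fun_prop) (by fun_prop),
      integral_map (by fun_prop) (by fun_prop)]
    rfl
  have hd : ∫ p, (p.2.2 - p.2.1) * G (p.1, p.2.1) ∂π =
      ∫ p : ℝ × ℝ × ℝ, (p.2.2 - p.2.1) * (G (p.1, p.2.1) - c (τ (p.1, p.2.1))) ∂π := by
    simp only [mul_sub]
    rw [integral_sub i1 i2, hz, sub_zero]
  rw [hd, ← habs]
  refine (abs_integral_le_integral_abs).trans (integral_mono ?_ ((iX.abs.add iY.abs).const_mul ε) ?_)
  · simp only [mul_sub]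
    exact (i1.sub i2).abs
  · intro p
    have hb := (hc (p.1, p.2.1)).1
    have hε : 0 ≤ ε := (abs_nonneg _).trans hb
    simp only [abs_mul]
    calc |p.2.2 - p.2.1| * |G (p.1, p.2.1) - c (τ (p.1, p.2.1))|
        ≤ (|p.2.2| + |p.2.1|) * ε := mul_le_mul (abs_sub _ _) hb (abs_nonneg _) (by positivity)
      _ = _ := by ring

/-- The compactifying map. -/
noncomputable def cpt (q : ℝ × ℝ) : ℝ × ℝ := (max 0 (min q.1 1), Real.arctan q.2)

lemma cpt_cont : Continuous cpt := by unfold cpt; fun_prop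

lemma lc_univ (hlift₁ : μh.map Prod.fst = volume.restrict (Set.Icc (0:ℝ) 1)) {u : ℝ}
    (hu : u ∈ Icc (0:ℝ) 1) : liftCurve μh u univ = ENNReal.ofReal u := by
  have h : μh {a : ℝ × ℝ | a.1 ≤ u} = (μh.map Prod.fst) (Iic u) := by
    rw [Measure.map_apply measurable_fst measurableSet_Iic]; rfl
  rw [liftCurve, Measure.map_apply measurable_snd MeasurableSet.univ, preimage_univ,
    Measure.restrict_apply_univ, h, hlift₁, Measure.restrict_apply measurableSet_Iic]
  have : Iic u ∩ Icc 0 1 = Icc 0 u := by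
    ext x; simp only [mem_inter_iff, mem_Iic, mem_Icc]
    exact ⟨fun h => ⟨h.2.1, h.1⟩, fun h => ⟨h.2, h.1, h.2.trans hu.2⟩⟩
  rw [this, Real.volume_Icc, sub_zero]

lemma approx [IsProbabilityMeasure μ] [IsProbabilityMeasure ν] [IsProbabilityMeasure μh]
    (hμ : Integrable (fun x : ℝ => x) μ) (hν : Integrable (fun x : ℝ => x) ν)
    (hlift₁ : μh.map Prod.fst = volume.restrict (Set.Icc (0:ℝ) 1))
    (hlift₂ : μh.map Prod.snd = μ) {Sh : Measure ℝ → Measure ℝ}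
    (hSh1 : ∀ m ≤ μ, IsShadow m ν (Sh m))
    (hSh2 : ∀ m m', m ≤ m' → m' ≤ μ → Sh m ≤ Sh m') (n : ℕ) (hn : 0 < n) :
    ∃ π : Measure (ℝ × ℝ × ℝ), π.map (fun p => (p.1, p.2.1)) = μh ∧
      π.map (fun p => p.2.2) = ν ∧
      (∀ F : ℝ × ℝ → ℝ, Continuous F → ∀ C ε : ℝ, (∀ q, |F q| ≤ C) →
        (∀ q q' : ℝ × ℝ, dist (cpt q) (cpt q') ≤ 1 / n → |F (cpt q) - F (cpt q')| ≤ ε) →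
        |∫ p, (p.2.2 - p.2.1) * F (cpt (p.1, p.2.1)) ∂π| ≤ ε * (∫ x, |x| ∂μ + ∫ y, |y| ∂ν)) ∧
      (∀ u ∈ Icc (0:ℝ) 1, ∀ V : Set ℝ, MeasurableSet V →
        π.real {p | p.1 < u ∧ p.2.2 ∈ V} ≤ (Sh (liftCurve μh u)).real V + 1 / n) := by
  have hn' : (0:ℝ) < n := by exact_mod_cast hn
  set a : ℝ × ℝ → ℕ := fun q => ⌈(n:ℝ) * max 0 (min q.1 1)⌉₊ with ha
  set b : ℝ × ℝ → ℕ := fun q => ⌊(n:ℝ) * (Real.arctan q.2 + 2)⌋₊ with hb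
  set M : ℕ := 4 * n + 1 with hM
  have ham : Measurable a := by
    refine Nat.measurable_ceil.comp ?_
    fun_prop
  have hbm : Measurable b := by
    refine Nat.measurable_floor.comp ?_
    have := Real.measurable_arctan
    fun_prop
  have hcl0 : ∀ q : ℝ × ℝ, 0 ≤ max 0 (min q.1 1) := fun q => le_max_left _ _
  have hcl1 : ∀ q : ℝ × ℝ, max 0 (min q.1 1) ≤ 1 := fun q =>
    max_le zero_le_one (min_le_right _ _)
  have haN : ∀ q, a q ≤ n := fun q => by
    rw [ha, Nat.ceil_le]
    have := mul_le_mul_of_nonneg_left (hcl1 q) hn'.le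
    linarith
  have hpi : Real.pi / 2 < 2 := by linarith [Real.pi_lt_d2]
  have hat : ∀ x : ℝ, 0 ≤ Real.arctan x + 2 ∧ Real.arctan x + 2 ≤ 4 := fun x => by
    have h1 := Real.arctan_lt_pi_div_two x
    have h2 := Real.neg_pi_div_two_lt_arctan x
    constructor <;> linarith
  have hbM : ∀ q, b q < M := fun q => by
    rw [hM, Nat.lt_succ_iff]
    refine Nat.floor_le_of_le ?_
    push_cast
    have := mul_le_mul_of_nonneg_left (hat q.2).2 hn'.le
    linarith
  set τ : ℝ × ℝ → ℕ := fun q => b q + a q * M with hτd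
  have hτ : Measurable τ := hbm.add (ham.mul_const M)
  have hdiv : ∀ q, τ q / M = a q := fun q => by
    simp only [hτd]
    rw [Nat.add_mul_div_right _ _ (by omega), Nat.div_eq_of_lt (hbM q), zero_add]
  have hmod : ∀ q, τ q % M = b q := fun q => by
    simp only [hτd]
    rw [Nat.add_mul_mod_self_right, Nat.mod_eq_of_lt (hbM q)]
  have hlev : ∀ q i, τ q < (i + 1) * M ↔ a q ≤ i := fun q i => by
    rw [← Nat.div_lt_iff_lt_mul (by omega), hdiv]; omega
  have hN : ∀ q, τ q < (n + 1) * M := fun q => (hlev q n).2 (haN q)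
  obtain ⟨π, h1, h2, h3⟩ := discrete_coupling hlift₂ hSh1 hSh2 hτ hN
  have hprob : IsProbabilityMeasure π := by
    have : IsProbabilityMeasure (π.map fun p => p.2.2) := by rw [h2]; infer_instance
    exact Measure.isProbabilityMeasure_of_map (f := fun p : ℝ × ℝ × ℝ => p.2.2)
  refine ⟨π, h1, h2, ?_, ?_⟩
  · intro F hF C ε hC hFε
    refine discrete_mart hμ hν hlift₂ hSh1 hτ hN h1 h2 h3 (G := fun q => F (cpt q))
      (hF.comp cpt_cont).measurable ?_ (C := C) (fun q => hC _)
    intro q q' hqq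
    apply hFε
    have hab : a q = a q' := by rw [← hdiv, ← hdiv, hqq]
    have hbb : b q = b q' := by rw [← hmod, ← hmod, hqq]
    rw [Prod.dist_eq, max_le_iff]
    constructor
    · rw [Real.dist_eq, abs_le]
      have e1 : ∀ q, (n:ℝ) * (cpt q).1 ≤ a q ∧ (a q:ℝ) < n * (cpt q).1 + 1 := fun q =>
        ⟨Nat.le_ceil _, Nat.ceil_lt_add_one (mul_nonneg hn'.le (hcl0 q))⟩
      have x1 := e1 q
      have x2 := e1 q'
      rw [hab] at x1
      have y1 : (n:ℝ) * ((cpt q).1 - (cpt q').1) ≤ 1 := by linarith [x1.1, x2.2]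
      have y2 : (n:ℝ) * ((cpt q').1 - (cpt q).1) ≤ 1 := by linarith [x1.2, x2.1]
      rw [← le_div_iff₀' hn'] at y1 y2
      constructor <;> linarith
    · rw [Real.dist_eq, abs_le]
      have e1 : ∀ q, (b q:ℝ) ≤ n * ((cpt q).2 + 2) ∧ n * ((cpt q).2 + 2) < (b q:ℝ) + 1 := fun q =>
        ⟨Nat.floor_le (mul_nonneg hn'.le (hat q.2).1), Nat.lt_floor_add_one _⟩
      have x1 := e1 q
      have x2 := e1 q'
      rw [hbb] at x1
      have y1 : (n:ℝ) * ((cpt q).2 - (cpt q').2) ≤ 1 := by linarith [x1.2, x2.1]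
      have y2 : (n:ℝ) * ((cpt q').2 - (cpt q).2) ≤ 1 := by linarith [x1.1, x2.2]
      rw [← le_div_iff₀' hn'] at y1 y2
      constructor <;> linarith
  · intro u hu V hV
    set i := ⌈(n:ℝ) * u⌉₊ with hi
    have hin : i ≤ n := by
      rw [hi, Nat.ceil_le]
      have := mul_le_mul_of_nonneg_left hu.2 hn'.le
      linarith
    have hw : (i:ℝ) / n ∈ Icc (0:ℝ) 1 :=
      ⟨by positivity, (div_le_one hn').2 (by exact_mod_cast hin)⟩
    have huw : u ≤ (i:ℝ) / n := by
      rw [le_div_iff₀' hn']; exact Nat.le_ceil _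
    have hwu : (i:ℝ) / n ≤ u + 1 / n := by
      rw [div_le_iff₀ hn']
      have := (Nat.ceil_lt_add_one (mul_nonneg hn'.le hu.1)).le
      have e : (u + 1 / n) * n = n * u + 1 := by field_simp
      rw [e]; exact this
    have hUIcc : ∀ᵐ q ∂μh, q.1 ∈ Icc (0:ℝ) 1 := by
      have : ∀ᵐ u ∂(μh.map Prod.fst), u ∈ Icc (0:ℝ) 1 := by
        rw [hlift₁]; exact ae_restrict_mem measurableSet_Icc
      exact ae_of_ae_map (f := Prod.fst) (by fun_prop) this
    have hset : (μh.restrict {q | τ q < (i + 1) * M}).map Prod.snd = liftCurve μh (i / n) := by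
      rw [liftCurve]
      congr 1
      refine Measure.restrict_congr_set ?_
      filter_upwards [hUIcc] with q hq
      refine propext ?_
      change τ q < (i + 1) * M ↔ q.1 ≤ (i:ℝ) / n
      rw [hlev, ha, Nat.ceil_le, min_eq_left hq.2, max_eq_right hq.1, le_div_iff₀' hn']
    have hA := hSh1 _ (liftCurve_le hlift₂ u)
    have hB := hSh1 _ (liftCurve_le hlift₂ (i / n : ℝ))
    have f1 : IsFiniteMeasure (liftCurve μh u) := isFiniteMeasure_of_le μ (liftCurve_le hlift₂ u)
    have f2 : IsFiniteMeasure (liftCurve μh (i / n : ℝ)) :=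
      isFiniteMeasure_of_le μ (liftCurve_le hlift₂ _)
    have f3 := isFiniteMeasure_of_le ν hA.2.1
    have f4 := isFiniteMeasure_of_le ν hB.2.1
    have hle : Sh (liftCurve μh u) ≤ Sh (liftCurve μh (i / n : ℝ)) := by
      refine hSh2 _ _ ?_ (liftCurve_le hlift₂ _)
      have hss : {q : ℝ × ℝ | q.1 ≤ u} ⊆ {q | q.1 ≤ (i / n : ℝ)} := fun q (hq : q.1 ≤ u) =>
        show q.1 ≤ (i / n : ℝ) from hq.trans huw
      exact Measure.map_mono (Measure.restrict_mono hss le_rfl) measurable_snd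
    have m1 : (Sh (liftCurve μh u)).real univ = u := by
      rw [measureReal_def, ← mass_eq_univ hA.1, lc_univ hlift₁ hu, ENNReal.toReal_ofReal hu.1]
    have m2 : (Sh (liftCurve μh (i / n : ℝ))).real univ = i / n := by
      rw [measureReal_def, ← mass_eq_univ hB.1, lc_univ hlift₁ hw, ENNReal.toReal_ofReal hw.1]
    have c1 := measureReal_add_measureReal_compl (μ := Sh (liftCurve μh u)) hV
    have c2 := measureReal_add_measureReal_compl (μ := Sh (liftCurve μh (i / n : ℝ))) hV
    have c3 : (Sh (liftCurve μh u)).real Vᶜ ≤ (Sh (liftCurve μh (i / n : ℝ))).real Vᶜ :=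
      ENNReal.toReal_mono (measure_ne_top _ _) (hle _)
    have c4 : π.real {p | p.1 < u ∧ p.2.2 ∈ V} ≤ (Sh (liftCurve μh (i / n : ℝ))).real V := by
      refine ENNReal.toReal_mono (measure_ne_top _ _) ?_
      have hVm : MeasurableSet ((fun p : ℝ × ℝ × ℝ => p.2.2) ⁻¹' V) :=
        (by fun_prop : Measurable fun p : ℝ × ℝ × ℝ => p.2.2) hV
      rw [← hset, ← h3, Measure.map_apply (by fun_prop) hV, Measure.restrict_apply hVm]
      refine measure_mono ?_
      rintro p ⟨hp1, hp2⟩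
      refine ⟨hp2, ?_⟩
      change τ (p.1, p.2.1) < (i + 1) * M
      rw [hlev]
      refine Nat.ceil_mono (mul_le_mul_of_nonneg_left ?_ hn'.le)
      exact max_le hu.1 ((min_le_left _ _).trans hp1.le)
    linarith
end

end Part7

section Part8
open MeasureTheory Set Filter Topology ProbabilityTheory

section
variable {μ ν : Measure ℝ} {μh : Measure (ℝ × ℝ)}

lemma tight_limit [IsProbabilityMeasure ν] [IsProbabilityMeasure μh]
    (P : ℕ → ProbabilityMeasure (ℝ × ℝ × ℝ))
    (h1 : ∀ n, (P n : Measure (ℝ × ℝ × ℝ)).map (fun p => (p.1, p.2.1)) = μh)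
    (h2 : ∀ n, (P n : Measure (ℝ × ℝ × ℝ)).map (fun p => p.2.2) = ν) :
    ∃ Q : ProbabilityMeasure (ℝ × ℝ × ℝ), Tendsto P (hyperfilter ℕ : Filter ℕ) (𝓝 Q) := by
  have htight : IsTightMeasureSet {x | ∃ m ∈ range P, ((m : ProbabilityMeasure (ℝ × ℝ × ℝ)) :
      Measure (ℝ × ℝ × ℝ)) = x} := by
    rw [isTightMeasureSet_iff_exists_isCompact_measure_compl_le]
    intro ε hε
    have hε2 : 0 < ε / 2 := ENNReal.half_pos hε.ne'
    obtain ⟨K1, hK1, hK1'⟩ := isTightMeasureSet_iff_exists_isCompact_measure_compl_le.1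
      (isTightMeasureSet_singleton (μ := ν)) (ε / 2) hε2
    obtain ⟨K2, hK2, hK2'⟩ := isTightMeasureSet_iff_exists_isCompact_measure_compl_le.1
      (isTightMeasureSet_singleton (μ := μh)) (ε / 2) hε2
    refine ⟨(Homeomorph.prodAssoc ℝ ℝ ℝ) '' (K2 ×ˢ K1), (hK2.prod hK1).image
      (Homeomorph.continuous _), ?_⟩
    rintro _ ⟨_, ⟨n, rfl⟩, rfl⟩
    have e1 := hK1' ν rfl
    have e2 := hK2' μh rfl
    rw [← h2 n, Measure.map_apply (by fun_prop) hK1.measurableSet.compl] at e1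
    rw [← h1 n, Measure.map_apply (by fun_prop) hK2.measurableSet.compl] at e2
    calc _ ≤ (P n : Measure (ℝ × ℝ × ℝ)) ((fun p => (p.1, p.2.1)) ⁻¹' K2ᶜ ∪
          (fun p => p.2.2) ⁻¹' K1ᶜ) := by
          refine measure_mono fun p hp => ?_
          by_contra hcon
          simp only [mem_union, mem_preimage, mem_compl_iff, not_or, not_not] at hcon
          exact hp ⟨((p.1, p.2.1), p.2.2), ⟨hcon.1, hcon.2⟩, rfl⟩
      _ ≤ ε / 2 + ε / 2 := (measure_union_le _ _).trans (add_le_add e2 e1)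
      _ = ε := ENNReal.add_halves ε
  have hcpt := isCompact_closure_of_isTightMeasureSet htight
  obtain ⟨Q, -, hQ⟩ := hcpt.ultrafilter_le_nhds ((hyperfilter ℕ).map P) (by
    rw [le_principal_iff]
    exact Eventually.of_forall (f := (hyperfilter ℕ : Filter ℕ)) fun n => subset_closure (mem_range_self n))
  exact ⟨Q, hQ⟩

lemma limit_map {L : Filter ℕ} [L.NeBot] {Ω : Type*} [MeasurableSpace Ω] [TopologicalSpace Ω]
    [BorelSpace Ω] [T2Space (ProbabilityMeasure Ω)]
    {P : ℕ → ProbabilityMeasure (ℝ × ℝ × ℝ)} {Q : ProbabilityMeasure (ℝ × ℝ × ℝ)}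
    (hPQ : Tendsto P L (𝓝 Q)) {f : ℝ × ℝ × ℝ → Ω} (hf : Continuous f)
    {m : Measure Ω} [hm : IsProbabilityMeasure m]
    (h : ∀ n, (P n : Measure (ℝ × ℝ × ℝ)).map f = m) :
    (Q : Measure (ℝ × ℝ × ℝ)).map f = m := by
  have h1 := ProbabilityMeasure.tendsto_map_of_tendsto_of_continuous P Q hPQ hf
  have h2 : (fun i => (P i).map hf.measurable.aemeasurable) =
      fun _ => (⟨m, hm⟩ : ProbabilityMeasure Ω) := by
    funext n; exact Subtype.ext (h n)
  rw [h2] at h1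
  have h3 := tendsto_nhds_unique h1 tendsto_const_nhds
  exact congrArg Subtype.val h3

/-- Truncation at level `R`. -/
noncomputable def trc (R x : ℝ) : ℝ := max (-R) (min x R)

lemma trc_cont (R : ℝ) : Continuous (trc R) := by unfold trc; fun_prop

lemma trc_abs {R : ℝ} (hR : 0 ≤ R) (x : ℝ) : |trc R x| ≤ R := by
  unfold trc
  rw [abs_le]
  exact ⟨le_max_left _ _, max_le (by linarith) (min_le_right _ _)⟩

lemma trc_sub {R : ℝ} (hR : 0 ≤ R) (x : ℝ) : |x - trc R x| ≤ |x| := by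
  unfold trc
  rcases le_total x R with h | h
  · rw [min_eq_left h]
    rcases le_total (-R) x with h' | h'
    · rw [max_eq_right h']; simp
    · rw [max_eq_left h', abs_of_nonpos (by linarith), abs_of_nonpos (by linarith)]; linarith
  · rw [min_eq_right h, max_eq_right (by linarith), abs_of_nonneg (by linarith),
      abs_of_nonneg (by linarith)]; linarith

lemma trc_eq {R x : ℝ} (h : |x| ≤ R) : trc R x = x := by
  unfold trc
  rw [abs_le] at h
  rw [min_eq_left h.2, max_eq_right h.1]

lemma trc_tail {m : Measure ℝ} (hm : Integrable (fun x : ℝ => x) m) :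
    Tendsto (fun R : ℕ => ∫ x, |x - trc R x| ∂m) atTop (𝓝 0) := by
  have : Tendsto (fun R : ℕ => ∫ x, |x - trc R x| ∂m) atTop (𝓝 (∫ x, (0:ℝ) ∂m)) := by
    refine tendsto_integral_of_dominated_convergence (fun x => |x|) ?_ hm.abs ?_ ?_
    · intro R
      exact (continuous_id.sub (trc_cont R)).abs.aestronglyMeasurable
    · intro R
      refine Eventually.of_forall fun x => ?_
      rw [Real.norm_eq_abs, abs_abs]
      exact trc_sub (Nat.cast_nonneg R) x
    · refine Eventually.of_forall fun x => ?_
      obtain ⟨N, hN⟩ := exists_nat_ge |x|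
      refine tendsto_const_nhds.congr' ?_
      filter_upwards [eventually_ge_atTop N] with R hR
      rw [trc_eq (hN.trans (by exact_mod_cast hR))]; simp
  simpa using this

lemma trc_bound (hμ : Integrable (fun x : ℝ => x) μ) (hν : Integrable (fun x : ℝ => x) ν)
    (hlift₂ : μh.map Prod.snd = μ) {π : Measure (ℝ × ℝ × ℝ)} [IsProbabilityMeasure π]
    (h1 : π.map (fun p => (p.1, p.2.1)) = μh)
    (h2 : π.map (fun p => p.2.2) = ν) {G : ℝ × ℝ → ℝ} (hG : Measurable G) {C : ℝ}
    (hC : ∀ q, |G q| ≤ C) (R : ℕ) :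
    |∫ p, (p.2.2 - p.2.1) * G (p.1, p.2.1) ∂π -
      ∫ p, (trc R p.2.2 - trc R p.2.1) * G (p.1, p.2.1) ∂π| ≤
      C * (∫ x, |x - trc R x| ∂μ + ∫ y, |y - trc R y| ∂ν) := by
  have iX := coupling_intX hμ hlift₂ h1
  have iY := coupling_intY hν h2
  have hmc : Measurable fun p : ℝ × ℝ × ℝ => (p.1, p.2.1) := by fun_prop
  have htm : Measurable (trc R) := (trc_cont R).measurable
  have tX : Integrable (fun p : ℝ × ℝ × ℝ => trc R p.2.1) π :=
    Integrable.of_bound (htm.comp (by fun_prop)).aestronglyMeasurable (C := R)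
      (Eventually.of_forall fun p => trc_abs (Nat.cast_nonneg R) _)
  have tY : Integrable (fun p : ℝ × ℝ × ℝ => trc R p.2.2) π :=
    Integrable.of_bound (htm.comp (by fun_prop)).aestronglyMeasurable (C := R)
      (Eventually.of_forall fun p => trc_abs (Nat.cast_nonneg R) _)
  have i1 : Integrable (fun p : ℝ × ℝ × ℝ => (p.2.2 - p.2.1) * G (p.1, p.2.1)) π :=
    (iY.sub iX).mul_bdd (c := C) (hG.comp hmc).aestronglyMeasurable
      (Eventually.of_forall fun p => hC _)
  have i2 : Integrable (fun p : ℝ × ℝ × ℝ => (trc R p.2.2 - trc R p.2.1) * G (p.1, p.2.1)) π :=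
    (tY.sub tX).mul_bdd (c := C) (hG.comp hmc).aestronglyMeasurable
      (Eventually.of_forall fun p => hC _)
  have dX : Integrable (fun p : ℝ × ℝ × ℝ => |p.2.1 - trc R p.2.1|) π := (iX.sub tX).abs
  have dY : Integrable (fun p : ℝ × ℝ × ℝ => |p.2.2 - trc R p.2.2|) π := (iY.sub tY).abs
  have habs : ∫ p : ℝ × ℝ × ℝ, C * (|p.2.1 - trc R p.2.1| + |p.2.2 - trc R p.2.2|) ∂π =
      C * (∫ x, |x - trc R x| ∂μ + ∫ y, |y - trc R y| ∂ν) := by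
    rw [integral_const_mul, integral_add dX dY, ← hlift₂, ← h1, ← h2,
      Measure.map_map (by fun_prop) (by fun_prop), integral_map (by fun_prop) (by fun_prop),
      integral_map (by fun_prop) (by fun_prop)]
    rfl
  rw [← integral_sub i1 i2, ← habs]
  refine (abs_integral_le_integral_abs).trans (integral_mono (i1.sub i2).abs
    ((dX.add dY).const_mul C) ?_)
  intro p
  have hb := hC (p.1, p.2.1)
  have e : (p.2.2 - p.2.1) * G (p.1, p.2.1) - (trc R p.2.2 - trc R p.2.1) * G (p.1, p.2.1) =
      ((p.2.2 - trc R p.2.2) - (p.2.1 - trc R p.2.1)) * G (p.1, p.2.1) := by ring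
  simp only [e, abs_mul]
  calc _ ≤ (|p.2.2 - trc R p.2.2| + |p.2.1 - trc R p.2.1|) * C :=
        mul_le_mul (abs_sub _ _) hb (abs_nonneg _) (by positivity)
    _ = _ := by ring

lemma limit_mart (hμ : Integrable (fun x : ℝ => x) μ) (hν : Integrable (fun x : ℝ => x) ν)
    (hlift₂ : μh.map Prod.snd = μ) {L : Filter ℕ} [L.NeBot]
    {P : ℕ → ProbabilityMeasure (ℝ × ℝ × ℝ)} {Q : ProbabilityMeasure (ℝ × ℝ × ℝ)}
    (hPQ : Tendsto P L (𝓝 Q))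
    (h1 : ∀ n, (P n : Measure (ℝ × ℝ × ℝ)).map (fun p => (p.1, p.2.1)) = μh)
    (h2 : ∀ n, (P n : Measure (ℝ × ℝ × ℝ)).map (fun p => p.2.2) = ν)
    (h1' : (Q : Measure (ℝ × ℝ × ℝ)).map (fun p => (p.1, p.2.1)) = μh)
    (h2' : (Q : Measure (ℝ × ℝ × ℝ)).map (fun p => p.2.2) = ν)
    {G : ℝ × ℝ → ℝ} (hG : Continuous G) {C : ℝ} (hC : ∀ q, |G q| ≤ C)
    (hlim : Tendsto (fun n => ∫ p, (p.2.2 - p.2.1) * G (p.1, p.2.1) ∂(P n : Measure (ℝ × ℝ × ℝ)))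
      L (𝓝 0)) :
    ∫ p, (p.2.2 - p.2.1) * G (p.1, p.2.1) ∂(Q : Measure (ℝ × ℝ × ℝ)) = 0 := by
  have hC0 : 0 ≤ C := (abs_nonneg _).trans (hC 0)
  set δ : ℕ → ℝ := fun R => C * (∫ x, |x - trc R x| ∂μ + ∫ y, |y - trc R y| ∂ν) with hδ
  have hδ0 : Tendsto δ atTop (𝓝 0) := by
    have := ((trc_tail hμ).add (trc_tail hν)).const_mul C
    simpa using this
  have key : ∀ R : ℕ, |∫ p, (p.2.2 - p.2.1) * G (p.1, p.2.1) ∂(Q : Measure (ℝ × ℝ × ℝ))| ≤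
      δ R + δ R := by
    intro R
    have hcont : Continuous fun p : ℝ × ℝ × ℝ => (trc R p.2.2 - trc R p.2.1) * G (p.1, p.2.1) := by
      have := trc_cont R
      fun_prop
    have hbd : ∀ p : ℝ × ℝ × ℝ, ‖(trc R p.2.2 - trc R p.2.1) * G (p.1, p.2.1)‖ ≤ (R + R) * C := by
      intro p
      rw [Real.norm_eq_abs, abs_mul]
      refine mul_le_mul ((abs_sub _ _).trans (add_le_add ?_ ?_)) (hC _) (abs_nonneg _) (by positivity)
      · exact trc_abs (Nat.cast_nonneg R) _
      · exact trc_abs (Nat.cast_nonneg R) _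
    have ht := ProbabilityMeasure.tendsto_iff_forall_integral_tendsto.1 hPQ
      (BoundedContinuousFunction.ofNormedAddCommGroup _ hcont _ hbd)
    simp only [BoundedContinuousFunction.coe_ofNormedAddCommGroup] at ht
    have hb : ∀ n, |∫ p, (trc R p.2.2 - trc R p.2.1) * G (p.1, p.2.1)
        ∂(P n : Measure (ℝ × ℝ × ℝ))| ≤
        δ R + |∫ p, (p.2.2 - p.2.1) * G (p.1, p.2.1) ∂(P n : Measure (ℝ × ℝ × ℝ))| := by
      intro n
      have := trc_bound hμ hν hlift₂ (h1 n) (h2 n) hG.measurable hC R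
      rw [abs_sub_comm] at this
      have t := abs_sub_abs_le_abs_sub
        (∫ p, (trc R p.2.2 - trc R p.2.1) * G (p.1, p.2.1) ∂(P n : Measure (ℝ × ℝ × ℝ)))
        (∫ p, (p.2.2 - p.2.1) * G (p.1, p.2.1) ∂(P n : Measure (ℝ × ℝ × ℝ)))
      linarith
    have hl := le_of_tendsto_of_tendsto' ht.abs (hlim.abs.const_add (δ R)) hb
    rw [abs_zero, add_zero] at hl
    have := trc_bound hμ hν hlift₂ h1' h2' hG.measurable hC R
    have t := abs_sub_abs_le_abs_sub
      (∫ p, (p.2.2 - p.2.1) * G (p.1, p.2.1) ∂(Q : Measure (ℝ × ℝ × ℝ)))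
      (∫ p, (trc R p.2.2 - trc R p.2.1) * G (p.1, p.2.1) ∂(Q : Measure (ℝ × ℝ × ℝ)))
    linarith
  have h0 := ge_of_tendsto' (hδ0.add hδ0) key
  rw [add_zero] at h0
  exact abs_eq_zero.1 (le_antisymm h0 (abs_nonneg _))

end

end Part8

section Part9
open MeasureTheory Set Filter Topology ProbabilityTheory

section
variable {μ ν : Measure ℝ} {μh : Measure (ℝ × ℝ)}

lemma mart_extend {π : Measure (ℝ × ℝ × ℝ)} [IsProbabilityMeasure π]
    (iX : Integrable (fun p : ℝ × ℝ × ℝ => p.2.1) π)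
    (iY : Integrable (fun p : ℝ × ℝ × ℝ => p.2.2) π)
    (hU : ∀ᵐ p ∂π, p.1 ∈ Icc (0:ℝ) 1)
    (h : ∀ F : BoundedContinuousFunction (ℝ × ℝ) ℝ,
      ∫ p, (p.2.2 - p.2.1) * F (cpt (p.1, p.2.1)) ∂π = 0)
    (f : ℝ × ℝ → ℝ) (hf : Measurable f) (hf1 : ∀ q, |f q| ≤ 1) :
    ∫ p, (p.2.2 - p.2.1) * f (p.1, p.2.1) ∂π = 0 := by
  have hmc : Measurable fun p : ℝ × ℝ × ℝ => (p.1, p.2.1) := by fun_prop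
  have hH : Measurable fun p : ℝ × ℝ × ℝ => cpt (p.1, p.2.1) := cpt_cont.measurable.comp hmc
  have iD : Integrable (fun p : ℝ × ℝ × ℝ => p.2.2 - p.2.1) π := iY.sub iX
  have iD' : Integrable (fun p : ℝ × ℝ × ℝ => p.2.1 - p.2.2) π := iX.sub iY
  have m1 : Measurable fun p : ℝ × ℝ × ℝ => ENNReal.ofReal (p.2.2 - p.2.1) := by fun_prop
  have m2 : Measurable fun p : ℝ × ℝ × ℝ => ENNReal.ofReal (p.2.1 - p.2.2) := by fun_prop
  set ρ₁ := (π.withDensity fun p => ENNReal.ofReal (p.2.2 - p.2.1)) with hρ₁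
  set ρ₂ := (π.withDensity fun p => ENNReal.ofReal (p.2.1 - p.2.2)) with hρ₂
  have f1 : IsFiniteMeasure ρ₁ := isFiniteMeasure_withDensity_ofReal iD.2
  have f2 : IsFiniteMeasure ρ₂ := isFiniteMeasure_withDensity_ofReal iD'.2
  have key : ∀ g : ℝ × ℝ → ℝ, Measurable g → ∀ C : ℝ, (∀ q, |g q| ≤ C) →
      ∫ q, g q ∂(ρ₁.map fun p => cpt (p.1, p.2.1)) - ∫ q, g q ∂(ρ₂.map fun p => cpt (p.1, p.2.1)) =
      ∫ p, (p.2.2 - p.2.1) * g (cpt (p.1, p.2.1)) ∂π := by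
    intro g hg C hC
    rw [integral_map hH.aemeasurable hg.aestronglyMeasurable,
      integral_map hH.aemeasurable hg.aestronglyMeasurable, hρ₁, hρ₂,
      integral_withDensity_eq_integral_toReal_smul m1 (Eventually.of_forall fun _ => ENNReal.ofReal_lt_top),
      integral_withDensity_eq_integral_toReal_smul m2 (Eventually.of_forall fun _ => ENNReal.ofReal_lt_top),
      ← integral_sub]
    · refine integral_congr_ae (Eventually.of_forall fun p => ?_)
      simp only [ENNReal.toReal_ofReal', smul_eq_mul]
      rcases le_total p.2.2 p.2.1 with h | h
      · rw [max_eq_right (by linarith), max_eq_left (by linarith)]; ring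
      · rw [max_eq_left (by linarith), max_eq_right (by linarith)]; ring
    · simp only [ENNReal.toReal_ofReal', smul_eq_mul]
      exact iD.pos_part.mul_bdd (c := C) (hg.comp hH).aestronglyMeasurable
        (Eventually.of_forall fun p => hC _)
    · simp only [ENNReal.toReal_ofReal', smul_eq_mul]
      exact iD'.pos_part.mul_bdd (c := C) (hg.comp hH).aestronglyMeasurable
        (Eventually.of_forall fun p => hC _)
  have heq : (ρ₁.map fun p => cpt (p.1, p.2.1)) = ρ₂.map fun p => cpt (p.1, p.2.1) := by
    refine ext_of_forall_integral_eq_of_IsFiniteMeasure fun F => ?_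
    have := key F F.continuous.measurable ‖F‖ (fun q => F.norm_coe_le_norm q)
    rw [h F] at this
    linarith
  have htan : Measurable Real.tan := by
    have : Real.tan = fun x => Real.sin x / Real.cos x := by
      funext x; exact Real.tan_eq_sin_div_cos x
    rw [this]; fun_prop
  have hk := key (fun q => f (q.1, Real.tan q.2)) (by fun_prop) 1 (fun q => hf1 _)
  rw [heq, sub_self] at hk
  rw [hk]
  refine integral_congr_ae ?_
  filter_upwards [hU] with p hp
  simp only [cpt, Real.tan_arctan]
  rw [min_eq_left hp.2, max_eq_right hp.1]

lemma limit_curve [IsProbabilityMeasure μ] [IsProbabilityMeasure ν] [IsProbabilityMeasure μh]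
    (hlift₁ : μh.map Prod.fst = volume.restrict (Set.Icc (0:ℝ) 1))
    {S : Measure ℝ} [IsFiniteMeasure S] {u : ℝ} (hu : u ∈ Icc (0:ℝ) 1)
    (hSu : S univ = ENNReal.ofReal u)
    {L : Filter ℕ} [L.NeBot] (hL : L ≤ atTop)
    {P : ℕ → ProbabilityMeasure (ℝ × ℝ × ℝ)} {Q : ProbabilityMeasure (ℝ × ℝ × ℝ)}
    (hPQ : Tendsto P L (𝓝 Q))
    (h1' : (Q : Measure (ℝ × ℝ × ℝ)).map (fun p => (p.1, p.2.1)) = μh)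
    (hb : ∀ n, ∀ V : Set ℝ, MeasurableSet V →
        (P n : Measure (ℝ × ℝ × ℝ)).real {p | p.1 < u ∧ p.2.2 ∈ V} ≤ S.real V + 1 / ((n:ℝ) + 1)) :
    liftedCouplingCurve Q u = S := by
  have hUQ : (Q : Measure (ℝ × ℝ × ℝ)).map (fun p => p.1) = volume.restrict (Icc (0:ℝ) 1) := by
    rw [← hlift₁, ← h1', Measure.map_map (by fun_prop) (by fun_prop)]; rfl
  have hnull : ∀ᵐ p ∂(Q : Measure (ℝ × ℝ × ℝ)), p.1 ≠ u := by
    have : ∀ᵐ v ∂((Q : Measure (ℝ × ℝ × ℝ)).map (fun p => p.1)), v ≠ u := by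
      rw [hUQ, ae_iff]
      simp
    exact ae_of_ae_map (f := fun p : ℝ × ℝ × ℝ => p.1) (by fun_prop) this
  have hopen : ∀ V : Set ℝ, IsOpen V → liftedCouplingCurve Q u V ≤ S V := by
    intro V hV
    have hVm : MeasurableSet ((fun p : ℝ × ℝ × ℝ => p.2.2) ⁻¹' V) :=
      (by fun_prop : Measurable fun p : ℝ × ℝ × ℝ => p.2.2) hV.measurableSet
    have e : liftedCouplingCurve Q u V =
        (Q : Measure (ℝ × ℝ × ℝ)) {p | p.1 < u ∧ p.2.2 ∈ V} := by
      rw [liftedCouplingCurve, Measure.map_apply (by fun_prop) hV.measurableSet,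
        Measure.restrict_apply hVm]
      refine measure_congr ?_
      filter_upwards [hnull] with p hp
      refine propext ?_
      change (p.2.2 ∈ V ∧ p.1 ≤ u) ↔ (p.1 < u ∧ p.2.2 ∈ V)
      exact ⟨fun h => ⟨lt_of_le_of_ne h.2 hp, h.1⟩, fun h => ⟨h.2, h.1.le⟩⟩
    have hG : IsOpen {p : ℝ × ℝ × ℝ | p.1 < u ∧ p.2.2 ∈ V} :=
      (isOpen_lt continuous_fst continuous_const).inter
        (hV.preimage (by fun_prop : Continuous fun p : ℝ × ℝ × ℝ => p.2.2))
    rw [e]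
    refine (ProbabilityMeasure.le_liminf_measure_open_of_tendsto hPQ hG).trans ?_
    have hle : ∀ n, (P n : Measure (ℝ × ℝ × ℝ)) {p | p.1 < u ∧ p.2.2 ∈ V} ≤
        S V + ENNReal.ofReal (1 / ((n:ℝ) + 1)) := by
      intro n
      have := ENNReal.ofReal_le_ofReal (hb n V hV.measurableSet)
      rw [ENNReal.ofReal_add measureReal_nonneg (by positivity), ofReal_measureReal,
        ofReal_measureReal] at this
      exact this
    have ht : Tendsto (fun n : ℕ => S V + ENNReal.ofReal (1 / ((n:ℝ) + 1))) L (𝓝 (S V)) := by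
      have h0 : Tendsto (fun n : ℕ => ENNReal.ofReal (1 / ((n:ℝ) + 1))) L (𝓝 0) := by
        have := ENNReal.tendsto_ofReal (tendsto_one_div_add_atTop_nhds_zero_nat (𝕜 := ℝ))
        rw [ENNReal.ofReal_zero] at this
        exact this.mono_left hL
      simpa using tendsto_const_nhds.add h0
    calc _ ≤ liminf (fun n : ℕ => S V + ENNReal.ofReal (1 / ((n:ℝ) + 1))) L :=
          liminf_le_liminf (Eventually.of_forall hle)
      _ = S V := ht.liminf_eq
  have hall : liftedCouplingCurve Q u ≤ S := by
    refine Measure.le_intro fun A _ _ => ?_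
    rw [Set.measure_eq_iInf_isOpen A S]
    refine le_iInf fun V => le_iInf fun hAV => le_iInf fun hV => ?_
    exact (measure_mono hAV).trans (hopen V hV)
  have hfin : IsFiniteMeasure (liftedCouplingCurve Q u) := isFiniteMeasure_of_le S hall
  refine Measure.eq_of_le_of_measure_univ_eq hall ?_
  rw [hSu, ← lc_univ hlift₁ hu, liftedCouplingCurve, liftCurve,
    Measure.map_apply (by fun_prop) MeasurableSet.univ,
    Measure.map_apply (by fun_prop) MeasurableSet.univ, preimage_univ, preimage_univ,
    Measure.restrict_apply_univ, Measure.restrict_apply_univ, ← h1',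
    Measure.map_apply (by fun_prop) (measurableSet_le measurable_fst measurable_const)]
  rfl

theorem lifted_exists [IsProbabilityMeasure μ] [IsProbabilityMeasure ν]
    (hμ : Integrable (fun x : ℝ => x) μ) (hν : Integrable (fun x : ℝ => x) ν)
    (hμν : ConvexOrder μ ν)
    (hlift₁ : μh.map Prod.fst = volume.restrict (Set.Icc (0:ℝ) 1))
    (hlift₂ : μh.map Prod.snd = μ) :
    ∃ π : Measure (ℝ × ℝ × ℝ), IsLiftedMartingaleCoupling π μh ν ∧
        ∀ u ∈ Set.Icc (0:ℝ) 1, IsShadow (liftCurve μh u) ν (liftedCouplingCurve π u) := by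
  obtain ⟨Sh, hSh1, hSh2, -⟩ := exists_shadow_map hμ hν hμν
  have hμhp : IsProbabilityMeasure μh := by
    have : IsProbabilityMeasure (μh.map Prod.snd) := by rw [hlift₂]; infer_instance
    exact Measure.isProbabilityMeasure_of_map (f := Prod.snd)
  choose π0 h1 h2 h3 h4 using fun n : ℕ =>
    approx hμ hν hlift₁ hlift₂ hSh1 hSh2 (n + 1) (Nat.succ_pos n)
  have hprob : ∀ n, IsProbabilityMeasure (π0 n) := fun n => by
    have : IsProbabilityMeasure ((π0 n).map fun p => p.2.2) := by rw [h2]; infer_instance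
    exact Measure.isProbabilityMeasure_of_map (f := fun p : ℝ × ℝ × ℝ => p.2.2)
  set P : ℕ → ProbabilityMeasure (ℝ × ℝ × ℝ) := fun n => ⟨π0 n, hprob n⟩ with hP
  obtain ⟨Q, hQ⟩ := tight_limit P h1 h2
  have hL : (hyperfilter ℕ : Filter ℕ) ≤ atTop := by
    rw [← Nat.cofinite_eq_atTop]; exact hyperfilter_le_cofinite
  have h1' : (Q : Measure (ℝ × ℝ × ℝ)).map (fun p => (p.1, p.2.1)) = μh :=
    limit_map hQ (by fun_prop) h1
  have h2' : (Q : Measure (ℝ × ℝ × ℝ)).map (fun p => p.2.2) = ν :=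
    limit_map hQ (by fun_prop) h2
  have iX := coupling_intX hμ hlift₂ h1'
  have iY := coupling_intY hν h2'
  have hUQ : ∀ᵐ p ∂(Q : Measure (ℝ × ℝ × ℝ)), p.1 ∈ Icc (0:ℝ) 1 := by
    have e : (Q : Measure (ℝ × ℝ × ℝ)).map (fun p => p.1) = volume.restrict (Icc (0:ℝ) 1) := by
      rw [← hlift₁, ← h1', Measure.map_map (by fun_prop) (by fun_prop)]; rfl
    have : ∀ᵐ v ∂((Q : Measure (ℝ × ℝ × ℝ)).map (fun p => p.1)), v ∈ Icc (0:ℝ) 1 := by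
      rw [e]; exact ae_restrict_mem measurableSet_Icc
    exact ae_of_ae_map (f := fun p : ℝ × ℝ × ℝ => p.1) (by fun_prop) this
  refine ⟨Q, ⟨h1', h2', ?_⟩, ?_⟩
  · refine mart_extend iX iY hUQ fun F => ?_
    refine limit_mart hμ hν hlift₂ hQ h1 h2 h1' h2' (G := fun q => F (cpt q))
      (F.continuous.comp cpt_cont) (C := ‖F‖) (fun q => F.norm_coe_le_norm _) ?_
    refine Tendsto.mono_left ?_ hL
    set K : Set (ℝ × ℝ) := Icc 0 1 ×ˢ Icc (-2) 2 with hK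
    have hKc : IsCompact K := isCompact_Icc.prod isCompact_Icc
    have hcK : ∀ q, cpt q ∈ K := fun q => by
      have hpi : Real.pi / 2 < 2 := by linarith [Real.pi_lt_d2]
      have e1 := Real.arctan_lt_pi_div_two q.2
      have e2 := Real.neg_pi_div_two_lt_arctan q.2
      exact ⟨⟨le_max_left _ _, max_le zero_le_one (min_le_right _ _)⟩,
        ⟨by change -2 ≤ Real.arctan q.2; linarith, by change Real.arctan q.2 ≤ 2; linarith⟩⟩
    have huc := hKc.uniformContinuousOn_of_continuous F.continuous.continuousOn
    set W := ∫ x, |x| ∂μ + ∫ y, |y| ∂ν with hW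
    have hW0 : 0 ≤ W := add_nonneg (integral_nonneg fun _ => abs_nonneg _)
      (integral_nonneg fun _ => abs_nonneg _)
    rw [Metric.tendsto_atTop]
    intro ε hε
    obtain ⟨δ, hδ, hδF⟩ := Metric.uniformContinuousOn_iff.1 huc (ε / (W + 1)) (by positivity)
    obtain ⟨N, hN⟩ := exists_nat_one_div_lt hδ
    refine ⟨N, fun n hn => ?_⟩
    rw [dist_zero_right, Real.norm_eq_abs]
    have hnδ : 1 / ((n + 1 : ℕ) : ℝ) < δ := by
      refine lt_of_le_of_lt ?_ hN
      push_cast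
      exact one_div_le_one_div_of_le (by positivity) (by exact_mod_cast Nat.succ_le_succ hn)
    have := h3 n F F.continuous ‖F‖ (ε / (W + 1)) (fun q => F.norm_coe_le_norm _) (by
      intro q q' hqq
      have := hδF _ (hcK q) _ (hcK q') (lt_of_le_of_lt hqq hnδ)
      rw [Real.dist_eq] at this
      exact this.le)
    refine lt_of_le_of_lt this ?_
    rw [div_mul_eq_mul_div, div_lt_iff₀ (by positivity)]
    nlinarith
  · intro u hu
    have hA := hSh1 _ (liftCurve_le hlift₂ u)
    have f1 : IsFiniteMeasure (liftCurve μh u) := isFiniteMeasure_of_le μ (liftCurve_le hlift₂ u)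
    have f3 := isFiniteMeasure_of_le ν hA.2.1
    rw [limit_curve (μ := μ) (ν := ν) hlift₁ hu (S := Sh (liftCurve μh u))
      (by rw [← mass_eq_univ hA.1, lc_univ hlift₁ hu]) hL hQ h1' ?_]
    · exact hA
    · intro n V hV
      have := h4 n u hu V hV
      push_cast at this
      exact this
end

end Part9

/-- Existence and uniqueness of the lifted shadow coupling: given a lift
`μ̂ ∈ Π(λ, μ)` of `μ ≤_c ν`, there is a unique lifted martingale coupling `π̂` of `μ̂` and
`ν` such that for every `u ∈ [0,1]` the `y`-marginal of `π̂` restricted to `[0,u] × ℝ × ℝ`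
is the shadow `S^ν(μ_{[0,u]})`. -/
theorem liftedShadowCoupling_exists_unique (μ ν : Measure ℝ)
    [IsProbabilityMeasure μ] [IsProbabilityMeasure ν]
    (hμ : Integrable (fun x : ℝ => x) μ) (hν : Integrable (fun x : ℝ => x) ν)
    (hμν : ConvexOrder μ ν)
    (μh : Measure (ℝ × ℝ))
    (hlift₁ : μh.map Prod.fst = volume.restrict (Set.Icc (0:ℝ) 1))
    (hlift₂ : μh.map Prod.snd = μ) :
    ∃! πh : Measure (ℝ × ℝ × ℝ),
      IsLiftedMartingaleCoupling πh μh ν ∧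
        ∀ u ∈ Set.Icc (0:ℝ) 1, IsShadow (liftCurve μh u) ν (liftedCouplingCurve πh u) := by
  obtain ⟨π, hπ⟩ := lifted_exists hμ hν hμν hlift₁ hlift₂
  refine ⟨π, hπ, fun π' hπ' => ?_⟩
  refine lifted_unique hμ hν hμν hlift₁ hlift₂ ?_
  rintro ρ (rfl | rfl)
  · exact hπ'
  · exact hπ
end

section
/- Suppose μ and ν are finitely supported probability measures on ℝ in convex order with conv(supp(μ)) ∩ supp(ν) = ∅. Then for any martingale coupling π ∈ M(μ,ν), supp(π) ⊆ supp(μ) × supp(ν), and the sunset coupling π_sun satisfies supp(π_sun) = supp(μ) × supp(ν). Consequently, if a cost function c makes π_sun optimal for the martingale transport problem inf_{π ∈ M(μ,ν)} ∫ c dπ, then every element of M(μ,ν) is optimal. -/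
open MeasureTheory

/-- The support of a measure on a topological space. -/
def msupport {α : Type*} [TopologicalSpace α] [MeasurableSpace α] (μ : Measure α) : Set α :=
  {x | ∀ U : Set α, IsOpen U → x ∈ U → 0 < μ U}


def IsMartingaleCoupling (π : Measure (ℝ × ℝ)) (μ ν : Measure ℝ) : Prop :=
  π.map Prod.fst = μ ∧ π.map Prod.snd = ν ∧
    ∀ f : ℝ → ℝ, Measurable f → (∀ x, |f x| ≤ 1) →
      ∫ p, (p.2 - p.1) * f p.1 ∂π = 0


theorem aux_msupport {α : Type*} [TopologicalSpace α] [T1Space α] [MeasurableSpace α]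
    (μ : Measure α) (S : Finset α) (h : μ (↑S : Set α)ᶜ = 0) (x : α) :
    x ∈ msupport μ ↔ 0 < μ {x} := by
  constructor
  · intro hx
    have h1 := hx (((↑S : Set α) \ {x})ᶜ)
      ((S.finite_toSet.subset Set.sdiff_subset).isClosed.isOpen_compl) (by simp)
    by_contra h0
    have h0 : μ {x} = 0 := by simpa using h0
    have h2 : μ (((↑S : Set α) \ {x})ᶜ) ≤ μ ((↑S : Set α)ᶜ ∪ {x}) := by
      apply measure_mono
      intro y hy
      by_cases hyx : y = x
      · right; exact hyx
      · left; intro hyS; exact hy ⟨hyS, hyx⟩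
    have h3 := measure_union_le (μ := μ) ((↑S : Set α)ᶜ) {x}
    rw [h, h0] at h3
    have := h1.trans_le (h2.trans h3)
    simp at this
  · intro hx U _ hxU
    exact hx.trans_le (measure_mono (by simpa using hxU))

theorem aux_supp_finset {α : Type*} [TopologicalSpace α] [T1Space α] [MeasurableSpace α]
    (μ : Measure α) (S : Finset α) (h : μ (↑S : Set α)ᶜ = 0) :
    ∃ T : Finset α, (↑T : Set α) = msupport μ ∧ μ (↑T : Set α)ᶜ = 0 ∧ ∀ x ∈ T, 0 < μ {x} := by
  classical
  refine ⟨S.filter (fun x => 0 < μ {x}), ?_, ?_, ?_⟩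
  · ext x
    rw [aux_msupport μ S h]
    simp only [Finset.coe_filter, Set.mem_ofPred_eq, and_iff_right_iff_imp]
    intro hx
    by_contra hxS
    have : μ {x} ≤ μ (↑S : Set α)ᶜ := measure_mono (by simpa using hxS)
    rw [h] at this
    exact absurd hx (by simpa using this)
  · have : ((↑(S.filter (fun x => 0 < μ {x})) : Set α))ᶜ ⊆
        (↑S : Set α)ᶜ ∪ ⋃ x ∈ S.filter (fun x => ¬ 0 < μ {x}), {x} := by
      intro y hy
      by_cases hyS : y ∈ S
      · right
        simp only [Finset.coe_filter, Set.mem_compl_iff, Set.mem_ofPred_eq, not_and] at hy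
        simp only [Set.mem_iUnion]
        exact ⟨y, Finset.mem_filter.2 ⟨hyS, hy hyS⟩, rfl⟩
      · left; exact hyS
    refine measure_mono_null this (measure_union_null h ?_)
    refine (measure_biUnion_null_iff (I := (↑(S.filter (fun x => ¬ 0 < μ {x})) : Set α)) (Finset.countable_toSet _)).2 ?_
    intro x hx
    have := (Finset.mem_filter.1 hx).2
    simpa using this
  · intro x hx
    exact (Finset.mem_filter.1 hx).2

theorem aux_le {α : Type*} [MeasurableSpace α] [MeasurableSingletonClass α]
    (P Q : Measure α) (T : Finset α) (h : P (↑T : Set α)ᶜ = 0)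
    (hle : ∀ p ∈ T, P {p} ≤ Q {p}) : P ≤ Q := by
  classical
  rw [Measure.le_iff]
  intro A _
  have h1 : P A ≤ P (↑(T.filter (· ∈ A)) : Set α) := by
    have : P A ≤ P ((↑(T.filter (· ∈ A)) : Set α) ∪ (↑T : Set α)ᶜ) := by
      apply measure_mono
      intro x hx
      by_cases hxT : x ∈ T
      · left; simpa using ⟨hxT, hx⟩
      · right; exact hxT
    refine this.trans ((measure_union_le _ _).trans ?_)
    rw [h, add_zero]
  refine h1.trans ?_
  rw [← sum_measure_singleton]
  refine (Finset.sum_le_sum (fun i hi => hle i (Finset.mem_filter.1 hi).1)).trans ?_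
  rw [sum_measure_singleton]
  apply measure_mono
  intro x hx
  simpa using (Finset.mem_filter.1 hx).2

theorem aux_integrable {α : Type*} [MeasurableSpace α] [MeasurableSingletonClass α]
    (P : Measure α) [IsFiniteMeasure P] (T : Finset α) (h : P (↑T : Set α)ᶜ = 0) (f : α → ℝ) :
    Integrable f P := by
  have : P.restrict (↑T : Set α) = P := Measure.restrict_eq_self_of_ae_mem (by
    rw [ae_iff]; exact h)
  rw [← this]
  exact IntegrableOn.finset

theorem aux_integral {α : Type*} [MeasurableSpace α] [MeasurableSingletonClass α]
    (P : Measure α) [IsFiniteMeasure P] (T : Finset α) (h : P (↑T : Set α)ᶜ = 0) (f : α → ℝ) :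
    ∫ x, f x ∂P = ∑ x ∈ T, P.real {x} * f x := by
  have : P.restrict (↑T : Set α) = P := Measure.restrict_eq_self_of_ae_mem (by
    rw [ae_iff]; exact h)
  conv_lhs => rw [← this]
  rw [setIntegral_finset T IntegrableOn.finset]
  rfl

theorem aux_gap (a b : ℝ) (S : Finset ℝ) (hS : ∀ y ∈ S, y < a ∨ b < y) :
    ∃ l r : ℝ, l < a ∧ b < r ∧ ∀ y ∈ S, y ≤ l ∨ r ≤ y := by
  classical
  induction S using Finset.induction_on with
  | empty => exact ⟨a - 1, b + 1, by linarith, by linarith, by simp⟩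
  | insert y S _ ih =>
    obtain ⟨l, r, hl, hr, h⟩ := ih (fun y hy => hS y (Finset.mem_insert_of_mem hy))
    rcases hS y (Finset.mem_insert_self _ _) with hy | hy
    · refine ⟨max l y, r, max_lt hl hy, hr, ?_⟩
      intro w hw
      rcases Finset.mem_insert.1 hw with rfl | hw
      · left; exact le_max_right _ _
      · rcases h w hw with h | h
        · left; exact h.trans (le_max_left _ _)
        · right; exact h
    · refine ⟨l, min r y, hl, lt_min hr hy, ?_⟩
      intro w hw
      rcases Finset.mem_insert.1 hw with rfl | hw
      · right; exact min_le_right _ _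
      · rcases h w hw with h | h
        · left; exact h
        · right; exact (min_le_left _ _).trans h

theorem aux_chord3 (φ : ℝ → ℝ) (hφ : ConvexOn ℝ Set.univ φ) (p q w : ℝ) (h1 : p ≤ q)
    (h2 : q ≤ w) : (w - p) * φ q ≤ (w - q) * φ p + (q - p) * φ w := by
  rcases (h1.trans h2).eq_or_lt with h | h
  · have h3 : q = p := le_antisymm (h2.trans h.symm.le) h1
    subst h3; subst h; simp
  · have hp : 0 < w - p := by linarith
    have := hφ.2 (Set.mem_univ p) (Set.mem_univ w) (show 0 ≤ (w - q) / (w - p) by apply div_nonneg <;> linarith)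
      (show 0 ≤ (q - p) / (w - p) by apply div_nonneg <;> linarith)
      (by field_simp; ring)
    have e : ((w - q) / (w - p)) • p + ((q - p) / (w - p)) • w = q := by
      simp only [smul_eq_mul]; field_simp; ring
    rw [e] at this
    simp only [smul_eq_mul] at this
    calc (w - p) * φ q ≤ (w - p) * ((w - q) / (w - p) * φ p + (q - p) / (w - p) * φ w) :=
          mul_le_mul_of_nonneg_left this hp.le
      _ = _ := by field_simp

theorem aux_chord (φ : ℝ → ℝ) (hφ : ConvexOn ℝ Set.univ φ) (l r : ℝ) (h : l < r) :
    ∃ A B : ℝ, (∀ x, l ≤ x → x ≤ r → φ x ≤ A * x + B) ∧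
      (∀ x, x ≤ l ∨ r ≤ x → A * x + B ≤ φ x) := by
  have hp : 0 < r - l := by linarith
  have e : ∀ x, (φ r - φ l) / (r - l) * x + (r * φ l - l * φ r) / (r - l)
      = ((r - x) * φ l + (x - l) * φ r) / (r - l) := by
    intro x; field_simp; ring
  refine ⟨(φ r - φ l) / (r - l), (r * φ l - l * φ r) / (r - l), ?_, ?_⟩
  · intro x h1 h2
    rw [e, le_div_iff₀ hp]
    linarith [aux_chord3 φ hφ l x r h1 h2]
  · intro x hx
    rw [e, div_le_iff₀ hp]
    rcases hx with hx | hx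
    · linarith [aux_chord3 φ hφ x l r hx h.le]
    · linarith [aux_chord3 φ hφ l r x h.le hx]

theorem aux_affine (α η : Measure ℝ) [IsFiniteMeasure α] [IsFiniteMeasure η] (M S : Finset ℝ)
    (hM : α (↑M : Set ℝ)ᶜ = 0) (hS : η (↑S : Set ℝ)ᶜ = 0) (h : ConvexOrder α η) (A B : ℝ) :
    ∫ x, (A * x + B) ∂α = ∫ x, (A * x + B) ∂η := by
  have c1 : ∀ A B : ℝ, ConvexOn ℝ Set.univ (fun x : ℝ => A * x + B) := by
    intro A B
    refine ⟨convex_univ, ?_⟩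
    intro x _ y _ a b _ _ hab
    simp only [smul_eq_mul]
    apply le_of_eq
    linear_combination - B * hab
  apply le_antisymm
  · exact h _ (c1 A B) (aux_integrable α M hM _) (aux_integrable η S hS _)
  · have := h _ (c1 (-A) (-B)) (aux_integrable α M hM _) (aux_integrable η S hS _)
    have e : ∀ x : ℝ, -A * x + -B = -(A * x + B) := by intro x; ring
    simp only [e, integral_neg] at this
    linarith

theorem aux_order (α η η' : Measure ℝ) [IsFiniteMeasure α] [IsFiniteMeasure η]
    [IsFiniteMeasure η'] (M S : Finset ℝ)
    (hM : α (↑M : Set ℝ)ᶜ = 0) (hS : η (↑S : Set ℝ)ᶜ = 0) (hS' : η' (↑S : Set ℝ)ᶜ = 0)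
    (h : ConvexOrder α η) (a b : ℝ) (hab : a ≤ b) (hMab : ∀ x ∈ M, a ≤ x ∧ x ≤ b)
    (hSab : ∀ y ∈ S, y < a ∨ b < y)
    (haff : ∀ A B : ℝ, ∫ x, (A * x + B) ∂η = ∫ x, (A * x + B) ∂η') :
    ConvexOrder α η' := by
  intro φ hφ i1 i2
  obtain ⟨l, r, hl, hr, hlr⟩ := aux_gap a b S hSab
  obtain ⟨A, B, h1, h2⟩ := aux_chord φ hφ l r (by linarith)
  calc ∫ x, φ x ∂α ≤ ∫ x, (A * x + B) ∂α := by
        rw [aux_integral α M hM, aux_integral α M hM]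
        refine Finset.sum_le_sum fun x hx => mul_le_mul_of_nonneg_left ?_ measureReal_nonneg
        exact h1 x (by linarith [(hMab x hx).1]) (by linarith [(hMab x hx).2])
    _ = ∫ x, (A * x + B) ∂η' := by rw [← haff, aux_affine α η M S hM hS h]
    _ ≤ ∫ x, φ x ∂η' := by
        rw [aux_integral η' S hS', aux_integral η' S hS']
        refine Finset.sum_le_sum fun x hx => mul_le_mul_of_nonneg_left ?_ measureReal_nonneg
        exact h2 x (hlr x hx)

theorem aux_key (α ν η : Measure ℝ) [IsFiniteMeasure α] [IsFiniteMeasure ν] (M S : Finset ℝ)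
    (hM : α (↑M : Set ℝ)ᶜ = 0) (hS : ν (↑S : Set ℝ)ᶜ = 0)
    (h : IsShadow α ν η) (a b : ℝ) (hab : a ≤ b) (hMab : ∀ x ∈ M, a ≤ x ∧ x ≤ b)
    (hSab : ∀ y ∈ S, y < a ∨ b < y) (z y w : ℝ) (hzy : z < y) (hyw : y < w)
    (hz : 0 < η {z}) (hw : 0 < η {w}) : η {y} = ν {y} := by
  obtain ⟨ho, hle, hmin⟩ := h
  have : IsFiniteMeasure η := isFiniteMeasure_of_le ν hle
  have hηS : η (↑S : Set ℝ)ᶜ = 0 := le_antisymm ((hle _).trans hS.le) bot_le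
  refine le_antisymm (hle _) ?_
  by_contra hlt
  push Not at hlt
  have hz' : 0 < η.real {z} := ENNReal.toReal_pos hz.ne' (measure_ne_top _ _)
  have hw' : 0 < η.real {w} := ENNReal.toReal_pos hw.ne' (measure_ne_top _ _)
  have hy' : 0 < ν.real {y} - η.real {y} := by
    have : η.real {y} < ν.real {y} := (ENNReal.toReal_lt_toReal (measure_ne_top _ _) (measure_ne_top _ _)).2 hlt
    linarith
  obtain ⟨c, hc0, hcz, hcw, hcy⟩ : ∃ c : ℝ, 0 < c ∧ c ≤ η.real {z} ∧ c ≤ η.real {w} ∧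
      c ≤ ν.real {y} - η.real {y} :=
    ⟨min (η.real {z}) (min (η.real {w}) (ν.real {y} - η.real {y})),
      lt_min hz' (lt_min hw' hy'), min_le_left _ _,
      (min_le_right _ _).trans (min_le_left _ _), (min_le_right _ _).trans (min_le_right _ _)⟩
  have hd : 0 < w - z := by linarith
  obtain ⟨p, q, hp, hq, hpq, hmean⟩ : ∃ p q : ℝ, 0 < p ∧ 0 < q ∧ p + q = c ∧
      p * z + q * w = c * y := by
    refine ⟨c * ((w - y) / (w - z)), c * ((y - z) / (w - z)), ?_, ?_, ?_, ?_⟩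
    · exact mul_pos hc0 (div_pos (by linarith) hd)
    · exact mul_pos hc0 (div_pos (by linarith) hd)
    · field_simp; ring
    · field_simp; ring
  set R : Measure ℝ := ENNReal.ofReal p • Measure.dirac z + ENNReal.ofReal q • Measure.dirac w with hR
  set Q : Measure ℝ := η + ENNReal.ofReal c • Measure.dirac y with hQ
  have iR : IsFiniteMeasure R := by
    have := Measure.smul_finite (Measure.dirac z) (ENNReal.ofReal_ne_top (r := p))
    have := Measure.smul_finite (Measure.dirac w) (ENNReal.ofReal_ne_top (r := q))
    infer_instance
  have iQ : IsFiniteMeasure Q := by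
    have := Measure.smul_finite (Measure.dirac y) (ENNReal.ofReal_ne_top (r := c))
    infer_instance
  have hRη : R ≤ η := by
    apply aux_le R η {z, w}
    · simp [hR]
    · intro x hx
      simp only [Finset.mem_insert, Finset.mem_singleton] at hx
      rcases hx with rfl | rfl
      · have : w ≠ x := by linarith
        simp only [hR, Measure.add_apply, Measure.smul_apply, smul_eq_mul]
        simp only [MeasurableSet.singleton, Measure.dirac_apply', Set.mem_singleton_iff, Set.indicator, this, if_true, if_false, Pi.one_apply, mul_one, mul_zero, add_zero]
        exact ENNReal.ofReal_le_of_le_toReal (by change p ≤ η.real {x}; linarith)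
      · have : z ≠ x := by linarith
        simp only [hR, Measure.add_apply, Measure.smul_apply, smul_eq_mul]
        simp only [MeasurableSet.singleton, Measure.dirac_apply', Set.mem_singleton_iff, Set.indicator, this, if_true, if_false, Pi.one_apply, mul_one, mul_zero, zero_add]
        exact ENNReal.ofReal_le_of_le_toReal (by change q ≤ η.real {x}; linarith)
  have hηQ : η ≤ Q := Measure.le_add_right le_rfl
  have hyS : y ∈ S := by
    by_contra hyS
    have : ν {y} ≤ ν (↑S : Set ℝ)ᶜ := measure_mono (by simpa using hyS)
    rw [hS] at this
    exact absurd (hlt.trans_le this) (by simp)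
  have hQS : Q (↑S : Set ℝ)ᶜ = 0 := by
    simp [hQ, hηS, hyS]
  have hQν : Q ≤ ν := by
    apply aux_le Q ν S hQS
    intro x hx
    by_cases hxy : y = x
    · subst hxy
      simp only [hQ, Measure.add_apply, Measure.smul_apply, smul_eq_mul]
      simp only [MeasurableSet.singleton, Measure.dirac_apply', Set.mem_singleton_iff, Set.indicator, if_true, Pi.one_apply, mul_one]
      rw [← ENNReal.toReal_le_toReal (by simp [measure_ne_top]) (measure_ne_top _ _),
        ENNReal.toReal_add (measure_ne_top _ _) ENNReal.ofReal_ne_top, ENNReal.toReal_ofReal hc0.le]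
      change η.real {y} + c ≤ ν.real {y}
      linarith
    · simp only [hQ, Measure.add_apply, Measure.smul_apply, smul_eq_mul]
      simp only [MeasurableSet.singleton, Measure.dirac_apply', Set.mem_singleton_iff, Set.indicator, hxy, if_false, mul_zero, add_zero]
      exact hle _
  set η' : Measure ℝ := Q - R with hη'
  have hsum : η' + R = Q := Measure.sub_add_cancel_of_le (hRη.trans hηQ)
  have hη'Q : η' ≤ Q := Measure.sub_le
  have : IsFiniteMeasure η' := isFiniteMeasure_of_le Q hη'Q
  have hη'S : η' (↑S : Set ℝ)ᶜ = 0 := le_antisymm ((hη'Q _).trans hQS.le) bot_le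
  have hint : ∀ f : ℝ → ℝ, ∫ x, f x ∂η' + (p * f z + q * f w) = ∫ x, f x ∂η + c * f y := by
    intro f
    have id : ∀ x, Integrable f (Measure.dirac x) := fun x => aux_integrable _ {x} (by simp) f
    have e1 : ∫ x, f x ∂(η' + R) = ∫ x, f x ∂Q := by rw [hsum]
    rw [hR, hQ, integral_add_measure (aux_integrable η' S hη'S f), integral_add_measure,
      integral_add_measure (aux_integrable η S hηS f)] at e1
    · simpa [integral_smul_measure, integral_dirac, hp.le, hq.le, hc0.le] using e1
    · exact (id _).smul_measure ENNReal.ofReal_ne_top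
    · exact (id _).smul_measure ENNReal.ofReal_ne_top
    · exact (id _).smul_measure ENNReal.ofReal_ne_top
    · exact ((id _).smul_measure ENNReal.ofReal_ne_top).add_measure
        ((id _).smul_measure ENNReal.ofReal_ne_top)
  have hord : ConvexOrder α η' := by
    apply aux_order α η η' M S hM hηS hη'S ho a b hab hMab hSab
    intro A B
    have := hint (fun x => A * x + B)
    have e : p * (A * z + B) + q * (A * w + B) = c * (A * y + B) := by
      linear_combination A * hmean + B * hpq
    linarith
  have h2 := hmin η' hord (hη'Q.trans hQν) (fun x => x ^ 2)
    (even_two.convexOn_pow) (aux_integrable _ S hηS _) (aux_integrable _ S hη'S _)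
  have h3 := hint (fun x => x ^ 2)
  have : c * y ^ 2 < p * z ^ 2 + q * w ^ 2 := by
    have e : p * z ^ 2 + q * w ^ 2 - c * y ^ 2 = p * (z - y) ^ 2 + q * (w - y) ^ 2 := by
      linear_combination 2 * y * hmean - y ^ 2 * hpq
    have : 0 < p * (z - y) ^ 2 := mul_pos hp (by nlinarith)
    have : 0 < q * (w - y) ^ 2 := mul_pos hq (by nlinarith)
    linarith
  linarith

theorem aux_both (α η : Measure ℝ) [IsFiniteMeasure α] [IsFiniteMeasure η] (M S : Finset ℝ)
    (hM : α (↑M : Set ℝ)ᶜ = 0) (hS : η (↑S : Set ℝ)ᶜ = 0)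
    (h : ConvexOrder α η) (a b : ℝ) (hMab : ∀ x ∈ M, a ≤ x ∧ x ≤ b)
    (hSab : ∀ y ∈ S, y < a ∨ b < y) (w : ℝ) (hw : 0 < η {w}) :
    (∃ z, z < a ∧ 0 < η {z}) ∧ ∃ z, b < z ∧ 0 < η {z} := by
  have hwS : w ∈ S := by
    by_contra hwS
    have : η {w} ≤ η (↑S : Set ℝ)ᶜ := measure_mono (by simpa using hwS)
    rw [hS] at this
    exact absurd (hw.trans_le this) (by simp)
  have hw' : 0 < η.real {w} := ENNReal.toReal_pos hw.ne' (measure_ne_top _ _)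
  constructor
  · by_contra hn
    push Not at hn
    have hwb : b < w := (hSab w hwS).resolve_left fun hh => (hn w hh).not_gt hw
    have e := aux_affine α η M S hM hS h 1 (-b)
    rw [aux_integral α M hM, aux_integral η S hS] at e
    have h1 : ∑ x ∈ M, α.real {x} * (1 * x + -b) ≤ 0 := by
      refine Finset.sum_nonpos fun x hx => mul_nonpos_of_nonneg_of_nonpos measureReal_nonneg ?_
      linarith [(hMab x hx).2]
    have h2 : 0 < ∑ x ∈ S, η.real {x} * (1 * x + -b) := by
      refine Finset.sum_pos' (fun x hx => ?_) ⟨w, hwS, mul_pos hw' (by linarith)⟩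
      rcases hSab x hx with hx' | hx'
      · have : η {x} = 0 := le_antisymm (hn x hx') bot_le
        simp [Measure.real, this]
      · exact mul_nonneg measureReal_nonneg (by linarith)
    linarith
  · by_contra hn
    push Not at hn
    have hwb : w < a := (hSab w hwS).resolve_right fun hh => (hn w hh).not_gt hw
    have e := aux_affine α η M S hM hS h (-1) a
    rw [aux_integral α M hM, aux_integral η S hS] at e
    have h1 : ∑ x ∈ M, α.real {x} * (-1 * x + a) ≤ 0 := by
      refine Finset.sum_nonpos fun x hx => mul_nonpos_of_nonneg_of_nonpos measureReal_nonneg ?_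
      linarith [(hMab x hx).1]
    have h2 : 0 < ∑ x ∈ S, η.real {x} * (-1 * x + a) := by
      refine Finset.sum_pos' (fun x hx => ?_) ⟨w, hwS, mul_pos hw' (by linarith)⟩
      rcases hSab x hx with hx' | hx'
      · exact mul_nonneg measureReal_nonneg (by linarith)
      · have : η {x} = 0 := le_antisymm (hn x hx') bot_le
        simp [Measure.real, this]
    linarith

theorem aux_liftCurve (μ : Measure ℝ) [IsProbabilityMeasure μ] (u : ℝ) (hu : u ∈ Set.Icc (0:ℝ) 1) :
    liftCurve ((volume.restrict (Set.Icc (0:ℝ) 1)).prod μ) u = ENNReal.ofReal u • μ := by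
  have e : {a : ℝ × ℝ | a.1 ≤ u} = Set.Iic u ×ˢ Set.univ := by ext; simp
  have e2 : Set.Iic u ∩ Set.Icc (0:ℝ) 1 = Set.Icc 0 u := by
    ext t; simp only [Set.mem_inter_iff, Set.mem_Iic, Set.mem_Icc]
    constructor
    · rintro ⟨h1, h2, _⟩; exact ⟨h2, h1⟩
    · rintro ⟨h1, h2⟩; exact ⟨h2, h1, h2.trans hu.2⟩
  unfold liftCurve
  rw [e, ← Measure.prod_restrict, Measure.restrict_univ, Measure.map_snd_prod,
    Measure.restrict_restrict measurableSet_Iic, e2]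
  simp

theorem aux_full (μ ν : Measure ℝ) [IsProbabilityMeasure μ] [IsProbabilityMeasure ν]
    (M S : Finset ℝ) (hM : μ (↑M : Set ℝ)ᶜ = 0) (hS : ν (↑S : Set ℝ)ᶜ = 0)
    (a b : ℝ) (hab : a ≤ b) (hMab : ∀ x ∈ M, a ≤ x ∧ x ≤ b)
    (hSab : ∀ y ∈ S, y < a ∨ b < y)
    (πh : Measure (ℝ × ℝ × ℝ))
    (hsun : IsLiftedMartingaleCoupling πh ((volume.restrict (Set.Icc (0:ℝ) 1)).prod μ) ν)
    (hshadow : ∀ u ∈ Set.Icc (0:ℝ) 1,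
      IsShadow (liftCurve ((volume.restrict (Set.Icc (0:ℝ) 1)).prod μ) u) ν
        (liftedCouplingCurve πh u))
    (x y : ℝ) (hxM : x ∈ M) (hyS : y ∈ S) (hx : 0 < μ {x}) (hy : 0 < ν {y}) :
    0 < πh (Prod.snd ⁻¹' {(x, y)}) := by
  obtain ⟨h1, h2, h3⟩ := hsun
  have hm1 : Measurable (fun p : ℝ × ℝ × ℝ => (p.1, p.2.1)) := by fun_prop
  have hm2 : Measurable (fun p : ℝ × ℝ × ℝ => p.2.2) := by fun_prop
  have hfin : IsFiniteMeasure πh := by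
    constructor
    have : ν Set.univ = πh Set.univ := by
      rw [← h2, Measure.map_apply hm2 MeasurableSet.univ, Set.preimage_univ]
    rw [← this]; exact measure_lt_top _ _
  set E : ℝ → Measure ℝ := liftedCouplingCurve πh with hE
  have hEv : ∀ u v, E u {v} = πh {p | p.1 ≤ u ∧ p.2.2 = v} := by
    intro u v
    rw [hE]; unfold liftedCouplingCurve
    rw [Measure.map_apply hm2 (measurableSet_singleton v), Measure.restrict_apply
      (hm2 (measurableSet_singleton v))]
    congr 1; ext p; simp [and_comm]
  have hνv : ∀ v, ν {v} = πh {p | p.2.2 = v} := by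
    intro v
    rw [← h2, Measure.map_apply hm2 (measurableSet_singleton v)]
    rfl
  have hstrip : ∀ (A B : Set ℝ), MeasurableSet A → MeasurableSet B →
      πh {p | p.1 ∈ A ∧ p.2.1 ∈ B} = volume (A ∩ Set.Icc 0 1) * μ B := by
    intro A B hA hB
    have : πh.map (fun p => (p.1, p.2.1)) (A ×ˢ B) = volume (A ∩ Set.Icc 0 1) * μ B := by
      rw [h1, Measure.prod_prod, Measure.restrict_apply hA]
    rw [← this, Measure.map_apply hm1 (hA.prod hB)]
    rfl
  have hstrip1 : ∀ (A : Set ℝ), MeasurableSet A →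
      πh {p | p.1 ∈ A} = volume (A ∩ Set.Icc 0 1) := by
    intro A hA
    have := hstrip A Set.univ hA MeasurableSet.univ
    simpa using this
  have hEle : ∀ u ∈ Set.Icc (0:ℝ) 1, E u ≤ ν := fun u hu => (hshadow u hu).2.1
  have hEfin : ∀ u, IsFiniteMeasure (E u) := by
    intro u; rw [hE]; unfold liftedCouplingCurve; infer_instance
  -- structure of the shadows
  have hfinα : ∀ u : ℝ, IsFiniteMeasure (ENNReal.ofReal u • μ) :=
    fun u => Measure.smul_finite μ ENNReal.ofReal_ne_top
  have hαM : ∀ u : ℝ, (ENNReal.ofReal u • μ) (↑M : Set ℝ)ᶜ = 0 := by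
    intro u; simp [hM]
  have hES : ∀ u ∈ Set.Icc (0:ℝ) 1, E u (↑S : Set ℝ)ᶜ = 0 := fun u hu =>
    le_antisymm ((hEle u hu _).trans hS.le) bot_le
  have hkey : ∀ u ∈ Set.Icc (0:ℝ) 1, ∀ z v w, z < v → v < w → 0 < E u {z} → 0 < E u {w} →
      E u {v} = ν {v} := by
    intro u hu z v w hzv hvw hz hw
    have := hshadow u hu
    rw [aux_liftCurve μ u hu] at this
    exact aux_key _ ν (E u) M S (hαM u) hS this a b hab hMab hSab z v w hzv hvw hz hw
  have hboth : ∀ u ∈ Set.Icc (0:ℝ) 1, ∀ w, 0 < E u {w} →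
      (∃ z, z < a ∧ 0 < E u {z}) ∧ ∃ z, b < z ∧ 0 < E u {z} := by
    intro u hu w hw
    have := hshadow u hu
    rw [aux_liftCurve μ u hu] at this
    exact aux_both _ (E u) M S (hαM u) (hES u hu) this.1 a b hMab hSab w hw
  -- continuity of the mass at `y`
  set g : ℝ → ℝ := fun u => (E u).real {y} with hg
  have hEmono : ∀ s t v, s ≤ t → E s {v} ≤ E t {v} := by
    intro s t v hst
    rw [hEv, hEv]
    apply measure_mono
    rintro p ⟨hp1, hp2⟩
    exact ⟨hp1.trans hst, hp2⟩
  have hElip : ∀ s t, s ≤ t → E t {y} ≤ E s {y} + ENNReal.ofReal (t - s) := by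
    intro s t hst
    rw [hEv, hEv]
    have : {p : ℝ × ℝ × ℝ | p.1 ≤ t ∧ p.2.2 = y} ⊆
        {p | p.1 ≤ s ∧ p.2.2 = y} ∪ {p | p.1 ∈ Set.Ioc s t} := by
      rintro p ⟨hp1, hp2⟩
      by_cases hps : p.1 ≤ s
      · left; exact ⟨hps, hp2⟩
      · right; exact ⟨not_le.1 hps, hp1⟩
    refine (measure_mono this).trans ((measure_union_le _ _).trans ?_)
    gcongr
    rw [hstrip1 _ measurableSet_Ioc]
    refine (measure_mono Set.inter_subset_left).trans ?_
    rw [Real.volume_Ioc]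
  have hgmono : ∀ s t, s ≤ t → g s ≤ g t := by
    intro s t hst
    exact ENNReal.toReal_mono (measure_ne_top _ _) (hEmono s t y hst)
  have hgcont : Continuous g := by
    have : LipschitzWith 1 g := by
      apply LipschitzWith.of_le_add
      intro t s
      rcases le_total t s with h | h
      · linarith [hgmono t s h, dist_nonneg (x := t) (y := s)]
      · have h' := ENNReal.toReal_mono (by simp [measure_ne_top]) (hElip s t h)
        rw [ENNReal.toReal_add (measure_ne_top _ _) ENNReal.ofReal_ne_top,
          ENNReal.toReal_ofReal (by linarith)] at h'
        rw [Real.dist_eq, abs_of_nonneg (by linarith)]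
        exact h'
    exact this.continuous
  have hg0 : g 0 = 0 := by
    have : E 0 {y} = 0 := by
      rw [hEv]
      have h0 : πh {p | p.1 ∈ Set.Iic (0:ℝ)} = 0 := by
        rw [hstrip1 _ measurableSet_Iic]
        refine measure_mono_null (t := {(0:ℝ)}) ?_ (by simp)
        rintro t ⟨ht1, ht2⟩
        exact le_antisymm ht1 ht2.1
      exact measure_mono_null (fun p hp => hp.1) h0
    simp [hg, Measure.real, this]
  have hg1 : g 1 = ν.real {y} := by
    have : ν {y} ≤ E 1 {y} := by
      rw [hEv, hνv]
      have h0 : πh {p | p.1 ∈ Set.Ioi (1:ℝ)} = 0 := by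
        rw [hstrip1 _ measurableSet_Ioi]
        refine measure_mono_null (t := ∅) ?_ (by simp)
        rintro t ⟨ht1, ht2⟩
        exact absurd ht2.2 (not_le.2 ht1)
      have hsub : {p : ℝ × ℝ × ℝ | p.2.2 = y} ⊆
          {p | p.1 ≤ 1 ∧ p.2.2 = y} ∪ {p | p.1 ∈ Set.Ioi (1:ℝ)} := by
        intro p hp
        by_cases hps : p.1 ≤ 1
        · left; exact ⟨hps, hp⟩
        · right; exact not_le.1 hps
      refine (measure_mono hsub).trans ((measure_union_le _ _).trans ?_)
      rw [h0, add_zero]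
    have h' := le_antisymm (hEle 1 (by simp) {y}) this
    simp [hg, Measure.real, h']
  have hνy : 0 < ν.real {y} := ENNReal.toReal_pos hy.ne' (measure_ne_top _ _)
  obtain ⟨s, hs, hgs⟩ : ∃ s ∈ Set.Icc (0:ℝ) 1, g s = ν.real {y} / 3 :=
    intermediate_value_Icc zero_le_one hgcont.continuousOn
      ⟨by rw [hg0]; linarith, by rw [hg1]; linarith⟩
  obtain ⟨t, ht, hgt⟩ : ∃ t ∈ Set.Icc (0:ℝ) 1, g t = 2 * ν.real {y} / 3 :=
    intermediate_value_Icc zero_le_one hgcont.continuousOn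
      ⟨by rw [hg0]; linarith, by rw [hg1]; linarith⟩
  have hst : s < t := by
    by_contra hn
    have := hgmono t s (not_lt.1 hn)
    linarith
  have hsy : 0 < E s {y} := by
    by_contra hn
    have hn : E s {y} = 0 := by simpa using hn
    have : g s = 0 := by simp [hg, Measure.real, hn]
    linarith
  have hty : E t {y} ≠ ν {y} := by
    intro hn
    have : g t = ν.real {y} := by simp [hg, Measure.real, hn]
    linarith
  -- no other atom on the same side is charged during `(s,t]`
  have hsame : ∀ v, ((v < a ∧ y < a) ∨ (b < v ∧ b < y)) → v ≠ y → E t {v} ≤ E s {v} := by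
    intro v hv hvy
    obtain ⟨⟨z, hz, hz0⟩, ⟨w, hw, hw0⟩⟩ := hboth s hs y hsy
    have hz1 := hz0.trans_le (hEmono s t z hst.le)
    have hw1 := hw0.trans_le (hEmono s t w hst.le)
    rcases hv with ⟨hv, hya⟩ | ⟨hv, hyb⟩
    · rcases lt_or_gt_of_ne hvy with h | h
      · have : ¬ 0 < E t {v} := fun h0 => hty (hkey t ht v y w h (by linarith) h0 hw1)
        have : E t {v} = 0 := by simpa using this
        rw [this]; exact bot_le
      · rw [hkey s hs y v w h (by linarith) hsy hw0]
        exact hEle t ht _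
    · rcases lt_or_gt_of_ne hvy with h | h
      · rw [hkey s hs z v y (by linarith) h hz0 hsy]
        exact hEle t ht _
      · have : ¬ 0 < E t {v} := fun h0 => hty (hkey t ht z y v (by linarith) h hz1 h0)
        have : E t {v} = 0 := by simpa using this
        rw [this]; exact bot_le
  have hzero : ∀ v, ((v < a ∧ y < a) ∨ (b < v ∧ b < y)) → v ≠ y →
      πh {p | p.1 ∈ Set.Ioc s t ∧ p.2.2 = v} = 0 := by
    intro v hv hvy
    have h0 := hsame v hv hvy
    rw [hEv, hEv] at h0
    have hms : MeasurableSet {p : ℝ × ℝ × ℝ | p.1 ≤ s ∧ p.2.2 = v} :=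
      (measurableSet_le measurable_fst measurable_const).inter (hm2 (measurableSet_singleton v))
    have hsub : {p : ℝ × ℝ × ℝ | p.1 ∈ Set.Ioc s t ∧ p.2.2 = v} ⊆
        {p | p.1 ≤ t ∧ p.2.2 = v} \ {p | p.1 ≤ s ∧ p.2.2 = v} := by
      rintro p ⟨hp1, hp2⟩
      exact ⟨⟨hp1.2, hp2⟩, fun hh => absurd hp1.1 (not_lt.2 hh.1)⟩
    refine measure_mono_null hsub ?_
    rw [measure_sdiff _ hms.nullMeasurableSet (measure_ne_top _ _)]
    · exact tsub_eq_zero_of_le h0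
    · rintro p ⟨hp1, hp2⟩
      exact ⟨hp1.trans hst.le, hp2⟩
  -- the part of the coupling on the strip starting from `x`
  set B : Set (ℝ × ℝ × ℝ) := {p | p.1 ∈ Set.Ioc s t ∧ p.2.1 ∈ ({x} : Set ℝ)} with hB
  have hBm : MeasurableSet B :=
    (measurable_fst measurableSet_Ioc).inter
      ((measurable_fst.comp measurable_snd) (measurableSet_singleton x))
  set ρ : Measure ℝ := (πh.restrict B).map (fun p => p.2.2) with hρ
  have hρfin : IsFiniteMeasure ρ := by rw [hρ]; infer_instance
  have hρv : ∀ v, ρ {v} = πh {p | p ∈ B ∧ p.2.2 = v} := by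
    intro v
    rw [hρ, Measure.map_apply hm2 (measurableSet_singleton v), Measure.restrict_apply
      (hm2 (measurableSet_singleton v))]
    congr 1; ext p; simp [and_comm]
  have hρν : ρ ≤ ν := by
    rw [← h2, hρ]
    exact Measure.map_mono Measure.restrict_le_self hm2
  have hρS : ρ (↑S : Set ℝ)ᶜ = 0 := le_antisymm ((hρν _).trans hS.le) bot_le
  have hρpos : 0 < ρ Set.univ := by
    rw [hρ, Measure.map_apply hm2 MeasurableSet.univ, Set.preimage_univ, Measure.restrict_apply_univ,
      hB, hstrip _ _ measurableSet_Ioc (measurableSet_singleton x)]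
    have : Set.Ioc s t ∩ Set.Icc (0:ℝ) 1 = Set.Ioc s t := by
      apply Set.inter_eq_left.2
      intro r hr
      exact ⟨hs.1.trans hr.1.le, hr.2.trans ht.2⟩
    rw [this, Real.volume_Ioc]
    exact ENNReal.mul_pos (by simpa using hst) hx.ne'
  have hρint : ∫ v, (v - x) ∂ρ = 0 := by
    have hmf : Measurable (Set.indicator (Set.Ioc s t ×ˢ ({x} : Set ℝ)) (fun _ => (1:ℝ))) :=
      measurable_const.indicator (measurableSet_Ioc.prod (measurableSet_singleton x))
    have h0 := h3 _ hmf (by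
      intro q
      by_cases hq : q ∈ Set.Ioc s t ×ˢ ({x} : Set ℝ)
      · simp [Set.indicator_of_mem hq]
      · simp [Set.indicator_of_notMem hq])
    rw [hρ, integral_map hm2.aemeasurable (by fun_prop), ← integral_indicator hBm, ← h0]
    apply integral_congr_ae
    refine Filter.Eventually.of_forall fun p => ?_
    by_cases hp : p ∈ B
    · have hq : (p.1, p.2.1) ∈ Set.Ioc s t ×ˢ ({x} : Set ℝ) := hp
      have hpx : p.2.1 = x := hp.2
      simp only [Set.indicator_of_mem hp, Set.indicator_of_mem hq]
      rw [hpx]; ring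
    · have hq : (p.1, p.2.1) ∉ Set.Ioc s t ×ˢ ({x} : Set ℝ) := hp
      simp only [Set.indicator_of_notMem hp, Set.indicator_of_notMem hq, mul_zero]
  by_contra hcon
  have hcon : πh (Prod.snd ⁻¹' {(x, y)}) = 0 := by simpa using hcon
  have hρ0 : ∀ v, ((v < a ∧ y < a) ∨ (b < v ∧ b < y)) → ρ {v} = 0 := by
    intro v hv
    rw [hρv]
    by_cases hvy : v = y
    · subst hvy
      refine measure_mono_null ?_ hcon
      rintro p ⟨hp1, hp2⟩
      exact Prod.ext hp1.2 hp2
    · refine measure_mono_null ?_ (hzero v hv hvy)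
      rintro p ⟨hp1, hp2⟩
      exact ⟨hp1.1, hp2⟩
  obtain ⟨w, hwS, hw⟩ : ∃ w ∈ S, 0 < ρ {w} := by
    by_contra hn
    push Not at hn
    have : ρ ≤ 0 := aux_le ρ 0 S hρS (fun p hp => by simpa using hn p hp)
    have := this Set.univ
    exact absurd (hρpos.trans_le this) (by simp)
  have hw' : 0 < ρ.real {w} := ENNReal.toReal_pos hw.ne' (measure_ne_top _ _)
  rw [aux_integral ρ S hρS] at hρint
  obtain ⟨hxa, hxb⟩ := hMab x hxM
  rcases hSab y hyS with hya | hyb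
  · have : 0 < ∑ v ∈ S, ρ.real {v} * (v - x) := by
      refine Finset.sum_pos' (fun v hv => ?_) ⟨w, hwS, mul_pos hw' ?_⟩
      · rcases hSab v hv with h | h
        · simp [Measure.real, hρ0 v (Or.inl ⟨h, hya⟩)]
        · exact mul_nonneg measureReal_nonneg (by linarith)
      · rcases hSab w hwS with h | h
        · exact absurd (hρ0 w (Or.inl ⟨h, hya⟩)) hw.ne'
        · linarith
    linarith
  · have : 0 < ∑ v ∈ S, ρ.real {v} * (x - v) := by
      refine Finset.sum_pos' (fun v hv => ?_) ⟨w, hwS, mul_pos hw' ?_⟩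
      · rcases hSab v hv with h | h
        · exact mul_nonneg measureReal_nonneg (by linarith)
        · simp [Measure.real, hρ0 v (Or.inr ⟨h, hyb⟩)]
      · rcases hSab w hwS with h | h
        · linarith
        · exact absurd (hρ0 w (Or.inr ⟨h, hyb⟩)) hw.ne'
    have e : ∑ v ∈ S, ρ.real {v} * (x - v) = - ∑ v ∈ S, ρ.real {v} * (v - x) := by
      rw [← Finset.sum_neg_distrib]
      exact Finset.sum_congr rfl fun v _ => by ring
    linarith

theorem aux_coupling_supp (π : Measure (ℝ × ℝ)) (μ ν : Measure ℝ)
    (h : IsMartingaleCoupling π μ ν) : msupport π ⊆ (msupport μ) ×ˢ (msupport ν) := by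
  obtain ⟨h1, h2, _⟩ := h
  rintro ⟨x, y⟩ hp
  constructor
  · intro U hU hxU
    rw [← h1, Measure.map_apply measurable_fst hU.measurableSet]
    exact hp _ (hU.preimage continuous_fst) hxU
  · intro U hU hxU
    rw [← h2, Measure.map_apply measurable_snd hU.measurableSet]
    exact hp _ (hU.preimage continuous_snd) hxU

theorem aux_coupling_null (π : Measure (ℝ × ℝ)) (μ ν : Measure ℝ) (M S : Finset ℝ)
    (hM : μ (↑M : Set ℝ)ᶜ = 0) (hS : ν (↑S : Set ℝ)ᶜ = 0)
    (h : IsMartingaleCoupling π μ ν) : π (↑(M ×ˢ S) : Set (ℝ × ℝ))ᶜ = 0 := by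
  obtain ⟨h1, h2, _⟩ := h
  rw [← h1, Measure.map_apply measurable_fst M.measurableSet.compl] at hM
  rw [← h2, Measure.map_apply measurable_snd S.measurableSet.compl] at hS
  refine measure_mono_null ?_ (measure_union_null hM hS)
  rintro ⟨x, y⟩ hp
  by_cases hx : x ∈ M
  · right
    intro hy
    exact hp (by simpa using ⟨hx, hy⟩)
  · left; exact hx

theorem aux_coupling_prob (π : Measure (ℝ × ℝ)) (μ ν : Measure ℝ) [IsProbabilityMeasure μ]
    (h : IsMartingaleCoupling π μ ν) : IsProbabilityMeasure π := by
  constructor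
  have : μ Set.univ = π Set.univ := by
    rw [← h.1, Measure.map_apply measurable_fst MeasurableSet.univ, Set.preimage_univ]
  rw [← this, measure_univ]

theorem aux_cancel (μ κ : Measure ℝ) [IsFiniteMeasure μ] (e : ENNReal) (he : e ≠ ⊤)
    (h : κ + e • μ = (1 + e) • μ) : κ = μ := by
  ext A _
  have h1 : (κ + e • μ) A = ((1 + e) • μ) A := by rw [h]
  simp only [Measure.add_apply, Measure.smul_apply, smul_eq_mul, add_mul, one_mul] at h1
  exact (ENNReal.add_left_inj (ENNReal.mul_ne_top he (measure_ne_top _ _))).1 h1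

theorem aux_opt (π0 π : Measure (ℝ × ℝ)) (μ ν : Measure ℝ) [IsProbabilityMeasure μ]
    [IsProbabilityMeasure ν] (M S : Finset ℝ)
    (hM : μ (↑M : Set ℝ)ᶜ = 0) (hS : ν (↑S : Set ℝ)ᶜ = 0)
    (h0 : IsMartingaleCoupling π0 μ ν) (h : IsMartingaleCoupling π μ ν)
    (hpos : ∀ p ∈ M ×ˢ S, 0 < π0 {p}) (c : ℝ × ℝ → ℝ)
    (hopt : ∀ π : Measure (ℝ × ℝ), IsMartingaleCoupling π μ ν → ∫ p, c p ∂π0 ≤ ∫ p, c p ∂π) :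
    ∫ p, c p ∂π = ∫ p, c p ∂π0 := by
  have ip0 := aux_coupling_prob π0 μ ν h0
  have ip := aux_coupling_prob π μ ν h
  have n0 := aux_coupling_null π0 μ ν M S hM hS h0
  have n1 := aux_coupling_null π μ ν M S hM hS h
  refine le_antisymm ?_ (hopt π h)
  obtain ⟨r, hr0, hr⟩ : ∃ r : ℝ, 0 < r ∧ ∀ p ∈ M ×ˢ S, r ≤ π0.real {p} := by
    rcases (M ×ˢ S).eq_empty_or_nonempty with he | hne
    · exact ⟨1, one_pos, by simp [he]⟩
    · obtain ⟨q, hq, hq'⟩ := Finset.exists_min_image (M ×ˢ S) (fun p => π0.real {p}) hne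
      exact ⟨π0.real {q}, ENNReal.toReal_pos (hpos q hq).ne' (measure_ne_top _ _), hq'⟩
  set e : ENNReal := ENNReal.ofReal r with he
  have het : e ≠ ⊤ := ENNReal.ofReal_ne_top
  have hf1 : IsFiniteMeasure (e • π) := Measure.smul_finite π het
  have hf0 : IsFiniteMeasure ((1 + e) • π0) := Measure.smul_finite π0 (by simp [het])
  have hle : e • π ≤ (1 + e) • π0 := by
    apply aux_le _ _ (M ×ˢ S) (by simp only [Measure.smul_apply, n1, smul_zero])
    intro p hp
    simp only [Measure.smul_apply, smul_eq_mul, add_mul, one_mul]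
    calc e * π {p} ≤ e * 1 := by gcongr; exact prob_le_one
      _ = e := mul_one e
      _ ≤ π0 {p} := ENNReal.ofReal_le_of_le_toReal (hr p hp)
      _ ≤ _ := le_self_add
  set κ : Measure (ℝ × ℝ) := (1 + e) • π0 - e • π with hκ
  have hsum : κ + e • π = (1 + e) • π0 := Measure.sub_add_cancel_of_le hle
  have hκle : κ ≤ (1 + e) • π0 := Measure.sub_le
  have iκ : IsFiniteMeasure κ := isFiniteMeasure_of_le _ hκle
  have nκ : κ (↑(M ×ˢ S) : Set (ℝ × ℝ))ᶜ = 0 :=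
    le_antisymm ((hκle _).trans (by simp only [Measure.smul_apply, n0, smul_zero]; exact le_rfl)) bot_le
  have hint : ∀ f : ℝ × ℝ → ℝ,
      ∫ p, f p ∂κ + r * ∫ p, f p ∂π = (1 + r) * ∫ p, f p ∂π0 := by
    intro f
    have e1 : ∫ p, f p ∂(κ + e • π) = ∫ p, f p ∂((1 + e) • π0) := by rw [hsum]
    rw [integral_add_measure (aux_integrable κ _ nκ f)
      ((aux_integrable π _ n1 f).smul_measure het), integral_smul_measure,
      integral_smul_measure, ENNReal.toReal_add ENNReal.one_ne_top het, he,
      ENNReal.toReal_ofReal hr0.le] at e1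
    simpa using e1
  have hκc : IsMartingaleCoupling κ μ ν := by
    refine ⟨?_, ?_, ?_⟩
    · apply aux_cancel μ _ e het
      rw [← h.1]
      nth_rw 2 [h.1]
      rw [← h0.1, ← Measure.map_smul, ← Measure.map_smul, ← Measure.map_add _ _ measurable_fst, hsum]
    · apply aux_cancel ν _ e het
      rw [← h.2.1]
      nth_rw 2 [h.2.1]
      rw [← h0.2.1, ← Measure.map_smul, ← Measure.map_smul, ← Measure.map_add _ _ measurable_snd, hsum]
    · intro f hf hf1
      have := hint (fun p => (p.2 - p.1) * f p.1)
      rw [h.2.2 f hf hf1, h0.2.2 f hf hf1] at this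
      linarith
  have h4 := hopt κ hκc
  have h5 := hint c
  have : r * ∫ p, c p ∂π ≤ r * ∫ p, c p ∂π0 := by linarith
  exact le_of_mul_le_mul_left this hr0

theorem aux_sun_coupling (μ ν : Measure ℝ) [IsProbabilityMeasure μ]
    (πh : Measure (ℝ × ℝ × ℝ))
    (hsun : IsLiftedMartingaleCoupling πh ((volume.restrict (Set.Icc (0:ℝ) 1)).prod μ) ν) :
    IsMartingaleCoupling (πh.map Prod.snd) μ ν := by
  obtain ⟨h1, h2, h3⟩ := hsun
  refine ⟨?_, ?_, ?_⟩
  · rw [Measure.map_map measurable_fst measurable_snd]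
    have : (Prod.fst ∘ Prod.snd : ℝ × ℝ × ℝ → ℝ) = Prod.snd ∘ (fun p => (p.1, p.2.1)) := rfl
    rw [this, ← Measure.map_map measurable_snd (by fun_prop), h1, Measure.map_snd_prod]
    simp
  · rw [Measure.map_map measurable_snd measurable_snd]
    exact h2
  · intro f hf hf1
    rw [integral_map measurable_snd.aemeasurable]
    · exact h3 (fun q => f q.2) (by fun_prop) (fun q => hf1 _)
    · exact Measurable.aestronglyMeasurable (by fun_prop)

/-- For finitely supported marginals in convex order with
`conv(supp μ) ∩ supp ν = ∅`, every martingale coupling is supported in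
`supp μ × supp ν`, the sunset coupling has full support there, and if some cost makes
the sunset coupling optimal then every martingale coupling is optimal. -/
theorem sunset_nonoptimizer (μ ν : Measure ℝ)
    [IsProbabilityMeasure μ] [IsProbabilityMeasure ν]
    (hμfin : ∃ S : Finset ℝ, μ (↑S : Set ℝ)ᶜ = 0)
    (hνfin : ∃ S : Finset ℝ, ν (↑S : Set ℝ)ᶜ = 0)
    (hμν : ConvexOrder μ ν)
    (hdisj : convexHull ℝ (msupport μ) ∩ msupport ν = ∅)
    (πsunh : Measure (ℝ × ℝ × ℝ))
    (hsun : IsLiftedMartingaleCoupling πsunh ((volume.restrict (Set.Icc (0:ℝ) 1)).prod μ) ν)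
    (hsunshadow : ∀ u ∈ Set.Icc (0:ℝ) 1,
      IsShadow (liftCurve ((volume.restrict (Set.Icc (0:ℝ) 1)).prod μ) u) ν
        (liftedCouplingCurve πsunh u))
    (πsun : Measure (ℝ × ℝ)) (hproj : πsun = πsunh.map Prod.snd) :
    (∀ π : Measure (ℝ × ℝ), IsMartingaleCoupling π μ ν →
        msupport π ⊆ (msupport μ) ×ˢ (msupport ν)) ∧
      msupport πsun = (msupport μ) ×ˢ (msupport ν) ∧
      ∀ c : ℝ × ℝ → ℝ, Measurable c →
        (∀ π : Measure (ℝ × ℝ), IsMartingaleCoupling π μ ν →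
          ∫ p, c p ∂πsun ≤ ∫ p, c p ∂π) →
        ∀ π : Measure (ℝ × ℝ), IsMartingaleCoupling π μ ν →
          ∫ p, c p ∂π = ∫ p, c p ∂πsun := by
  obtain ⟨M0, hM0⟩ := hμfin
  obtain ⟨S0, hS0⟩ := hνfin
  obtain ⟨M, hMs, hM, hMpos⟩ := aux_supp_finset μ M0 hM0
  obtain ⟨S, hSs, hS, hSpos⟩ := aux_supp_finset ν S0 hS0
  have hMne : M.Nonempty := by
    by_contra hn
    rw [Finset.not_nonempty_iff_eq_empty] at hn
    rw [hn] at hM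
    simp at hM
  have hsc := aux_sun_coupling μ ν πsunh hsun
  rw [← hproj] at hsc
  have hMab : ∀ x ∈ M, M.min' hMne ≤ x ∧ x ≤ M.max' hMne :=
    fun x hx => ⟨M.min'_le x hx, M.le_max' x hx⟩
  have hSab : ∀ y ∈ S, y < M.min' hMne ∨ M.max' hMne < y := by
    intro y hy
    by_contra hn
    push Not at hn
    have hy' : y ∈ msupport ν := by rw [← hSs]; exact hy
    have ha : M.min' hMne ∈ msupport μ := by rw [← hMs]; exact M.min'_mem hMne
    have hb : M.max' hMne ∈ msupport μ := by rw [← hMs]; exact M.max'_mem hMne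
    have : y ∈ convexHull ℝ (msupport μ) ∩ msupport ν := by
      refine ⟨?_, hy'⟩
      apply segment_subset_convexHull ha hb
      rw [segment_eq_Icc (hn.1.trans hn.2)]
      exact hn
    rw [hdisj] at this
    exact this
  have hpos : ∀ p ∈ M ×ˢ S, 0 < πsun {p} := by
    rintro ⟨x, y⟩ hp
    obtain ⟨hx, hy⟩ := Finset.mem_product.1 hp
    rw [hproj, Measure.map_apply measurable_snd (measurableSet_singleton _)]
    exact aux_full μ ν M S hM hS _ _ (M.min'_le_max' hMne) hMab hSab πsunh hsun hsunshadow
      x y hx hy (hMpos x hx) (hSpos y hy)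
  refine ⟨fun π hπ => aux_coupling_supp π μ ν hπ, ?_, ?_⟩
  · refine Set.Subset.antisymm (aux_coupling_supp πsun μ ν hsc) ?_
    rw [← hMs, ← hSs]
    rintro ⟨x, y⟩ hp U hU hxU
    have hp' : (x, y) ∈ M ×ˢ S := Finset.mem_product.2 hp
    exact (hpos _ hp').trans_le (measure_mono (by simpa using hxU))
  · intro c _ hopt π hπ
    exact aux_opt πsun π μ ν M S hM hS hsc hπ hpos c hopt
end
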